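/- Let X be an irreducible smooth projective variety of dimension at least 2 in P^n over an algebraically closed field of characteristic 0, and let P0 be a closed point on X. Then a general hyperplane of P^n passing through P0 intersects X in an irreducible smooth subvariety of codimension 1 on X. -/

import Mathlib

open MvPolynomial

/-- Points of projective `n`-space over `k`. -/
abbrev ProjPt (k : Type) [Field k] (n : ℕ) : Type := Projectivization k (Fin (n+1) → k)

variable {k : Type} [Field k] {n : ℕ}

/-- A polynomial vanishes at a projective point if it vanishes on every
representative vector of the point. -/
def VanishesAt (h : MvPolynomial (Fin (n+1)) k) (x : ProjPt k n) : Prop :=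
  ∀ (v : Fin (n+1) → k) (hv : v ≠ 0), Projectivization.mk k v hv = x → eval v h = 0

/-- Common projective zero locus of a family of polynomials. -/
def projZeroLocus (I : Set (MvPolynomial (Fin (n+1)) k)) : Set (ProjPt k n) :=
  {x | ∀ h ∈ I, VanishesAt h x}

/-- Zariski-closed subsets of projective space: common zero loci of families of
homogeneous polynomials. -/
def IsClosedSub (S : Set (ProjPt k n)) : Prop :=
  ∃ I : Set (MvPolynomial (Fin (n+1)) k),
    (∀ h ∈ I, ∃ m : ℕ, h.IsHomogeneous m) ∧ S = projZeroLocus I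

/-- A subset is irreducible if it is nonempty and is not covered by two closed sets
unless it is contained in one of them. -/
def IsIrredSub (S : Set (ProjPt k n)) : Prop :=
  S.Nonempty ∧ ∀ C₁ C₂ : Set (ProjPt k n),
    IsClosedSub C₁ → IsClosedSub C₂ → S ⊆ C₁ ∪ C₂ → S ⊆ C₁ ∨ S ⊆ C₂

/-- `T` is an irreducible closed subset of `S` (in the subspace Zariski topology). -/
def IsClosedIrredIn (S T : Set (ProjPt k n)) : Prop :=
  T ⊆ S ∧ (∃ C, IsClosedSub C ∧ T = C ∩ S) ∧ IsIrredSub T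

/-- `S` has dimension at least `m` : there is a strictly increasing chain of `m+1`
irreducible closed subsets of `S`. -/
def DimGE (S : Set (ProjPt k n)) (m : ℕ) : Prop :=
  ∃ c : Fin (m+1) → Set (ProjPt k n), StrictMono c ∧ ∀ i, IsClosedIrredIn S (c i)

/-- `S` has (Krull) dimension exactly `d`. -/
def HasDim (S : Set (ProjPt k n)) (d : ℕ) : Prop :=
  DimGE S d ∧ ¬ DimGE S (d+1)

/-- The gradient vector of a polynomial at a vector. -/
noncomputable def gradientAt (h : MvPolynomial (Fin (n+1)) k) (v : Fin (n+1) → k) :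
    Fin (n+1) → k :=
  fun j => eval v (pderiv j h)

/-- The homogeneous polynomials vanishing identically on `S`. -/
def homVanishingPolys (S : Set (ProjPt k n)) : Set (MvPolynomial (Fin (n+1)) k) :=
  {h | (∃ m : ℕ, h.IsHomogeneous m) ∧ ∀ x ∈ S, VanishesAt h x}

/-- Jacobian criterion: `S` (of dimension `d`) is smooth at `x` if the span of the
gradients at `x` of the homogeneous polynomials vanishing on `S` has rank `n - d`. -/
def SmoothPtAt (S : Set (ProjPt k n)) (d : ℕ) (x : ProjPt k n) : Prop :=
  ∀ (v : Fin (n+1) → k) (hv : v ≠ 0), Projectivization.mk k v hv = x →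
    Module.finrank k
      ↥(Submodule.span k {w | ∃ h ∈ homVanishingPolys S, w = gradientAt h v}) = n - d

/-- `S` is an irreducible smooth projective variety of dimension `d`. -/
def IsSmoothVariety (S : Set (ProjPt k n)) (d : ℕ) : Prop :=
  IsClosedSub S ∧ IsIrredSub S ∧ HasDim S d ∧ ∀ x ∈ S, SmoothPtAt S d x

/-- Polynomial function on a `k`-vector space `W`. -/
def IsPolyFun (k : Type) [Field k] {W : Type} [AddCommGroup W] [Module k W] (F : W → k) : Prop :=
  ∃ (r : ℕ) (lam : Fin r → (W →ₗ[k] k)) (p : MvPolynomial (Fin r) k),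
    F = fun w => eval (fun i => lam i w) p

/-- Zariski-closed subsets of a `k`-vector space `W` : common zero loci of families
of polynomial functions. -/
def IsZClosed (k : Type) [Field k] {W : Type} [AddCommGroup W] [Module k W] (Z : Set W) : Prop :=
  ∃ ℱ : Set (W → k), (∀ F ∈ ℱ, IsPolyFun k F) ∧ Z = {w | ∀ F ∈ ℱ, F w = 0}

/-- `Z` is a cone: stable under scalar multiplication. -/
def IsCone (k : Type) [Field k] {W : Type} [AddCommGroup W] [Module k W] (Z : Set W) : Prop :=
  ∀ (c : k) (w : W), w ∈ Z → c • w ∈ Z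

/-- `q` points of projective space are in general position: if `q < n+1` their
representative vectors are linearly independent; if `q = n+1` any `n` of them are
linearly independent. -/
def InGeneralPosition {q : ℕ} (P : Fin q → ProjPt k n) : Prop :=
  if q < n + 1 then LinearIndependent k (fun s => (P s).rep)
  else ∀ s : Fin q, LinearIndependent k (fun t : {t : Fin q // t ≠ s} => (P t.1).rep)

/-!
Write `X` as an affine cone. Smoothness of the section splits in two: differentiating the relation
that `H` is tangent to `X` at `x` with respect to the coefficients of `H` shows, in characteristic
zero, that a general `H` through `P0` is tangent only at base points of the linear system, so only
possibly at `P0`; and at `P0` it is transversal once its equation avoids the conormal space, which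
does not contain all the forms vanishing at `P0`.

For irreducibility, a linear Noether normalization turns the components of `X ∩ H` into the
irreducible factors of a hypersurface equation. That equation is obtained by specializing the
coefficients of `H` in an irreducible polynomial that vanishes at the rational point under `P0`;
for general coefficients each factor then still vanishes there, so that every component passes
through `P0`. As `X ∩ H` is smooth at `P0`, its local ring there is regular, hence a domain, and
there is only one component.
-/

namespace Bertini

section Specialization

universe u

theorem exists_derivation_extending {R A E : Type*} [CommRing R] [CommRing A] [CommRing E]
    [Algebra R A] [Algebra R E] [Algebra A E] [IsScalarTower R A E] [Algebra.FormallyEtale A E]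
    (d : Derivation R A E) :
    ∃ D : Derivation R E E, ∀ a : A, D (algebraMap A E a) = d a := by
  let e := KaehlerDifferential.tensorKaehlerEquivOfFormallyEtale R A E
  let L : KaehlerDifferential R E →ₗ[E] E :=
    (d.liftKaehlerDifferential.liftBaseChange E).comp e.symm.toLinearMap
  refine ⟨L.compDer (KaehlerDifferential.D R E), fun a => ?_⟩
  have hD : KaehlerDifferential.D R E (algebraMap A E a) =
      e (1 ⊗ₜ KaehlerDifferential.D R A a) := by simp [e]
  change (d.liftKaehlerDifferential.liftBaseChange E)
    (e.symm (KaehlerDifferential.D R E (algebraMap A E a))) = _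
  rw [hD, LinearEquiv.symm_apply_apply]
  simp

section LiftAlgebra

attribute [local instance] FractionRing.liftAlgebra

theorem isAlgebraic_fractionRing_liftAlgebra (R E : Type*) [CommRing R] [IsDomain R] [Field E]
    [Algebra R E] [FaithfulSMul R E] [Algebra.IsAlgebraic R E] :
    Algebra.IsAlgebraic (FractionRing R) E :=
  ⟨fun x => (IsFractionRing.isAlgebraic_iff R (FractionRing R) E).1
    (Algebra.IsAlgebraic.isAlgebraic x)⟩

theorem exists_derivation_extending_pderiv {K ι E : Type*} [Field K] [CharZero K] [Field E]
    [Algebra (MvPolynomial ι K) E] [FaithfulSMul (MvPolynomial ι K) E]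
    [Algebra.IsAlgebraic (MvPolynomial ι K) E] [Algebra K E] [IsScalarTower K (MvPolynomial ι K) E]
    (i : ι) :
    ∃ D : Derivation K E E, ∀ r : MvPolynomial ι K,
      D (algebraMap _ E r) = algebraMap _ E (pderiv i r) := by
  let F := FractionRing (MvPolynomial ι K)
  have : CharZero F :=
    charZero_of_injective_algebraMap (IsFractionRing.injective (MvPolynomial ι K) F)
  have : Algebra.IsAlgebraic F E := isAlgebraic_fractionRing_liftAlgebra _ _
  have : Algebra.FormallyEtale (MvPolynomial ι K) F :=
    Algebra.FormallyEtale.of_isLocalization (nonZeroDivisors (MvPolynomial ι K))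
  have : Algebra.FormallyEtale F E := Algebra.FormallyEtale.of_isSeparable F E
  have : Algebra.FormallyEtale (MvPolynomial ι K) E := Algebra.FormallyEtale.comp _ F E
  exact exists_derivation_extending ((Algebra.linearMap (MvPolynomial ι K) E).compDer (pderiv i))

end LiftAlgebra

theorem exists_C_mem_of_map_eq_top {R F τ : Type*} [CommRing R] [IsDomain R] [Field F]
    [Algebra R F] [IsFractionRing R F] {J : Ideal (MvPolynomial τ R)}
    (hJ : J.map (MvPolynomial.map (σ := τ) (algebraMap R F)) = ⊤) :
    ∃ g : R, g ≠ 0 ∧ C g ∈ J := by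
  let _ : Algebra (MvPolynomial τ R) (MvPolynomial τ F) :=
    (MvPolynomial.map (algebraMap R F)).toAlgebra
  have : IsLocalization ((nonZeroDivisors R).map (C : R →+* MvPolynomial τ R))
      (MvPolynomial τ F) := MvPolynomial.isLocalization _ _
  by_contra! hC
  refine (IsLocalization.map_algebraMap_ne_top_iff_disjoint
    ((nonZeroDivisors R).map (C : R →+* MvPolynomial τ R)) (MvPolynomial τ F) J).2 ?_ hJ
  rw [Set.disjoint_left]
  rintro _ ⟨g, hg, rfl⟩ hgJ
  exact hC g (nonZeroDivisors.ne_zero hg) hgJ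

theorem exists_finite_extension_zero {F τ : Type u} [Field F] [Finite τ]
    {J : Ideal (MvPolynomial τ F)} (hJ : J ≠ ⊤) :
    ∃ (E : Type u) (_ : Field E) (_ : Algebra F E) (_ : FiniteDimensional F E) (z : τ → E),
      ∀ p ∈ J, aeval z p = 0 := by
  obtain ⟨M, hM, hJM⟩ := Ideal.exists_le_maximal J hJ
  let _ : Field (MvPolynomial τ F ⧸ M) := Ideal.Quotient.field M
  refine ⟨MvPolynomial τ F ⧸ M, inferInstance, inferInstance,
    finite_of_finite_type_of_isJacobsonRing F (MvPolynomial τ F ⧸ M),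
    fun t => Ideal.Quotient.mk M (X t), fun p hp => ?_⟩
  have hmk : aeval (fun t => Ideal.Quotient.mk M (X t)) = Ideal.Quotient.mkₐ F M :=
    algHom_ext fun t => by simp
  rw [hmk]
  exact Ideal.Quotient.eq_zero_iff_mem.2 (hJM hp)

theorem exists_ne_zero_forall_specialization {K ι τ : Type u} [Field K] [Finite τ]
    (P : Set (MvPolynomial τ (MvPolynomial ι K)))
    (h : ∀ (E : Type u) [Field E] [Algebra (MvPolynomial ι K) E] [FaithfulSMul (MvPolynomial ι K) E]
      [Algebra.IsAlgebraic (MvPolynomial ι K) E] (z : τ → E),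
      ∃ p ∈ P, eval₂ (algebraMap (MvPolynomial ι K) E) z p ≠ 0) :
    ∃ g : MvPolynomial ι K, g ≠ 0 ∧ ∀ a : ι → K, eval a g ≠ 0 →
      ∀ z : τ → K, ∃ p ∈ P, eval₂ (eval a) z p ≠ 0 := by
  let F := FractionRing (MvPolynomial ι K)
  obtain ⟨g, hg, hgP⟩ : ∃ g : MvPolynomial ι K, g ≠ 0 ∧ C g ∈ Ideal.span P := by
    apply exists_C_mem_of_map_eq_top (F := F)
    by_contra htop
    obtain ⟨E, _, _, _, z, hz⟩ := exists_finite_extension_zero htop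
    let _ : Algebra (MvPolynomial ι K) E := Algebra.compHom E (algebraMap (MvPolynomial ι K) F)
    have : IsScalarTower (MvPolynomial ι K) F E := IsScalarTower.of_algebraMap_eq fun _ => rfl
    have : FaithfulSMul (MvPolynomial ι K) E := FaithfulSMul.trans (MvPolynomial ι K) F E
    have : Algebra.IsAlgebraic (MvPolynomial ι K) E :=
      (IsFractionRing.comap_isAlgebraic_iff (K := F)).2 inferInstance
    obtain ⟨p, hp, hpz⟩ := h E z
    have := hz _ (Ideal.mem_map_of_mem _ (Ideal.subset_span hp))
    rw [aeval_def, eval₂_map] at this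
    exact hpz this
  refine ⟨g, hg, fun a ha z => ?_⟩
  by_contra! hz
  have hle : Ideal.span P ≤ RingHom.ker (eval₂Hom (eval a) z) := Ideal.span_le.2 hz
  have := hle hgP
  rw [RingHom.mem_ker, coe_eval₂Hom, eval₂_C] at this
  exact ha this

end Specialization

section Homogeneous

attribute [local instance] MvPolynomial.gradedAlgebra

variable {K σ τ : Type*} [Field K]

theorem eval_smul_of_isHomogeneous {f : MvPolynomial σ K} {N : ℕ} (hf : f.IsHomogeneous N) (c : K)
    (v : σ → K) : eval (c • v) f = c ^ N * eval v f := by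
  rw [eval_eq, eval_eq, Finset.mul_sum]
  refine Finset.sum_congr rfl fun m hm => ?_
  have hm : m.degree = N := by rw [Finsupp.degree_eq_weight_one, ← hf (mem_support_iff.1 hm)]; rfl
  simp only [Pi.smul_apply, smul_eq_mul, mul_pow, Finset.prod_mul_distrib]
  rw [Finset.prod_pow_eq_pow_sum, ← hm, Finsupp.degree_apply]
  ring

theorem eval_homogeneousComponent_eq_zero [Infinite K] {f : MvPolynomial σ K} {v : σ → K}
    (h : ∀ c : K, c ≠ 0 → eval (c • v) f = 0) (N : ℕ) : eval v (homogeneousComponent N f) = 0 := by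
  let p : Polynomial K := ∑ i ∈ Finset.range (f.totalDegree + 1),
    Polynomial.C (eval v (homogeneousComponent i f)) * Polynomial.X ^ i
  have hp (c : K) : p.eval c = eval (c • v) f := by
    conv_rhs => rw [← sum_homogeneousComponent f]
    rw [map_sum, Polynomial.eval_finsetSum]
    refine Finset.sum_congr rfl fun i _ => ?_
    rw [eval_smul_of_isHomogeneous (homogeneousComponent_isHomogeneous i f), Polynomial.eval_mul,
      Polynomial.eval_C, Polynomial.eval_pow, Polynomial.eval_X, mul_comm]
  have hpX : p * Polynomial.X = 0 := by
    refine Polynomial.funext fun c => ?_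
    by_cases hc : c = 0
    · simp [hc]
    · simp [hp, h c hc]
  have hp0 : p = 0 := by simpa using hpX
  by_cases hN : N < f.totalDegree + 1
  · have hcoeff : p.coeff N = eval v (homogeneousComponent N f) := by
      simp only [p, Polynomial.finsetSum_coeff, Polynomial.coeff_C_mul_X_pow]
      rw [Finset.sum_ite_eq, if_pos (Finset.mem_range.2 hN)]
    rw [← hcoeff, hp0, Polynomial.coeff_zero]
  · rw [homogeneousComponent_eq_zero _ _ (by lia), map_zero]

theorem homogeneousComponent_aeval (y : τ → MvPolynomial σ K) (hy : ∀ i, (y i).IsHomogeneous 1)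
    (f : MvPolynomial τ K) (N : ℕ) :
    homogeneousComponent N (aeval y f) = aeval y (homogeneousComponent N f) := by
  have hcomp (i : ℕ) : homogeneousComponent N (aeval y (homogeneousComponent i f)) =
      if i = N then aeval y (homogeneousComponent N f) else 0 := by
    have hi : (aeval y (homogeneousComponent i f)).IsHomogeneous i := by
      simpa using (homogeneousComponent_isHomogeneous i f).aeval y hy
    rw [homogeneousComponent_of_mem hi]
    by_cases hiN : i = N
    · subst hiN; simp
    · rw [if_neg hiN, if_neg (Ne.symm hiN)]
  conv_lhs => rw [← sum_homogeneousComponent f, map_sum, map_sum]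
  rw [Finset.sum_congr rfl fun i _ => hcomp i, Finset.sum_ite_eq']
  split_ifs with hN
  · rfl
  · rw [homogeneousComponent_eq_zero _ _ (by simpa using hN), map_zero]

/-- An ideal of a polynomial ring that is homogeneous for the grading by total degree. -/
abbrev IsHomogeneousIdeal (I : Ideal (MvPolynomial σ K)) : Prop :=
  I.IsHomogeneous (homogeneousSubmodule σ K)

theorem isHomogeneousIdeal_of_homogeneousComponent_mem {I : Ideal (MvPolynomial σ K)}
    (h : ∀ f ∈ I, ∀ N, homogeneousComponent N f ∈ I) : IsHomogeneousIdeal I := by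
  intro N f hf
  have := h f hf N
  rwa [← decomposition.decompose'_apply] at this

theorem eq_zero_of_forall_homogeneous {R : Type*} [CommRing R] {I : Ideal (MvPolynomial σ K)}
    (hI : IsHomogeneousIdeal I) {φ : MvPolynomial σ K →+* R}
    (h : ∀ f ∈ I, (∃ N, f.IsHomogeneous N) → φ f = 0) : ∀ f ∈ I, φ f = 0 := by
  intro f hf
  rw [← sum_homogeneousComponent f, map_sum]
  exact Finset.sum_eq_zero fun i _ =>
    h _ (homogeneousComponent_mem_of_mem hI hf i) ⟨i, homogeneousComponent_isHomogeneous i f⟩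

theorem isPrime_of_homogeneous_mem_or_mem {I : Ideal (MvPolynomial σ K)}
    (hI : IsHomogeneousIdeal I) (hne : I ≠ ⊤)
    (h : ∀ (f g : MvPolynomial σ K) (M N : ℕ), f.IsHomogeneous M → g.IsHomogeneous N →
      f * g ∈ I → f ∈ I ∨ g ∈ I) : I.IsPrime := by
  refine hI.isPrime_of_homogeneous_mem_or_mem hne ?_
  rintro f g ⟨M, hM⟩ ⟨N, hN⟩ hfg
  exact h f g M N hM hN hfg

theorem exists_homogeneous_prime_le (P : Ideal (MvPolynomial σ K)) [hP : P.IsPrime] :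
    ∃ Q : Ideal (MvPolynomial σ K), Q.IsPrime ∧ IsHomogeneousIdeal Q ∧ Q ≤ P ∧
      (∀ J : Ideal (MvPolynomial σ K), IsHomogeneousIdeal J → J ≤ P → J ≤ Q) ∧
      ∀ f N, f.IsHomogeneous N → f ∈ P → f ∈ Q := by
  let 𝒜 := homogeneousSubmodule σ K
  refine ⟨(P.homogeneousCore 𝒜).toIdeal, hP.homogeneousCore,
    (P.homogeneousCore 𝒜).isHomogeneous, Ideal.toIdeal_homogeneousCore_le _ _, ?_,
    fun f N hf hfP => Ideal.mem_homogeneousCore_of_homogeneous_of_mem ⟨N, hf⟩ hfP⟩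
  intro J hJ hJP
  rw [← hJ.toIdeal_homogeneousCore_eq_self]
  exact Ideal.homogeneousCore_mono 𝒜 hJP

theorem le_ker_constantCoeff {I : Ideal (MvPolynomial σ K)} (hne : I ≠ ⊤)
    (hI : IsHomogeneousIdeal I) : I ≤ RingHom.ker (constantCoeff (R := K) (σ := σ)) := by
  intro f hf
  have h0 := homogeneousComponent_mem_of_mem hI hf 0
  rw [homogeneousComponent_zero] at h0
  by_contra hc
  have hc : coeff 0 f ≠ 0 := hc
  exact hne (Ideal.eq_top_of_isUnit_mem _ h0 (IsUnit.map C (isUnit_iff_ne_zero.2 hc)))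

theorem mem_ker_constantCoeff_of_isHomogeneous {f : MvPolynomial σ K} {N : ℕ}
    (hf : f.IsHomogeneous N) (hN : N ≠ 0) :
    f ∈ RingHom.ker (constantCoeff (R := K) (σ := σ)) := by
  rw [RingHom.mem_ker, constantCoeff_eq]
  exact hf.coeff_eq_zero (by simpa using hN.symm)

theorem ker_constantCoeff_le_of_forall_X_mem {I : Ideal (MvPolynomial σ K)}
    (hI : ∀ i, X i ∈ I) : RingHom.ker (constantCoeff (R := K) (σ := σ)) ≤ I := by
  intro f hf
  have hspan : f ∈ idealOfVars σ K := by
    rw [← pow_one (idealOfVars σ K), mem_pow_idealOfVars_iff]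
    intro m hm
    have hm0 : m ≠ 0 := by
      rintro rfl
      exact mem_support_iff.1 hm hf
    exact Nat.one_le_iff_ne_zero.2 fun h => hm0 ((Finsupp.degree_eq_zero_iff m).1 h)
  refine Ideal.span_le.2 ?_ hspan
  rintro _ ⟨i, rfl⟩
  exact hI i

theorem le_ker_eval_smul {I : Ideal (MvPolynomial σ K)} (hI : IsHomogeneousIdeal I)
    {v : σ → K} (hv : I ≤ RingHom.ker (eval v)) (c : K) : I ≤ RingHom.ker (eval (c • v)) := by
  refine fun f hf => eq_zero_of_forall_homogeneous hI ?_ f hf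
  rintro g hg ⟨N, hN⟩
  rw [eval_smul_of_isHomogeneous hN, show eval v g = 0 from hv hg, mul_zero]

end Homogeneous

section NoetherNormalization

variable {K σ τ : Type*} [Field K]

/-- The substitution `X i ↦ C (u i) + C (b i) * T`, restricting a polynomial to the line through
`u` with direction `b`, parametrized by `T`. -/
noncomputable def restrictToLine {B : Type*} [CommRing B] [Algebra K B] (u : σ → B) (b : σ → K) :
    MvPolynomial σ K →ₐ[K] Polynomial B :=
  aeval fun i => Polynomial.C (u i) + Polynomial.C (algebraMap K B (b i)) * Polynomial.X

theorem restrictToLine_monomial {B : Type*} [CommRing B] [Algebra K B] (u : σ → B) (b : σ → K)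
    (m : σ →₀ ℕ) :
    (restrictToLine u b (monomial m 1)).natDegree ≤ m.degree ∧
      (restrictToLine u b (monomial m 1)).coeff m.degree =
        algebraMap K B (eval b (monomial m 1)) := by
  induction m using Finsupp.induction_linear with
  | zero => simp
  | add f g hf hg =>
    have hfg : monomial (f + g) (1 : K) = monomial f 1 * monomial g 1 := by
      rw [monomial_mul, one_mul]
    rw [hfg, map_mul, map_mul, map_mul, map_add]
    refine ⟨Polynomial.natDegree_mul_le_of_le hf.1 hg.1, ?_⟩
    rw [Polynomial.coeff_mul_add_eq_of_natDegree_le hf.1 hg.1, hf.2, hg.2]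
  | single i e =>
    have hdeg : (Polynomial.C (u i) + Polynomial.C (algebraMap K B (b i)) * Polynomial.X).natDegree
        ≤ 1 := by
      rw [add_comm]
      exact Polynomial.natDegree_linear_le
    rw [← X_pow_eq_monomial, map_pow, map_pow, restrictToLine, aeval_X, Finsupp.degree_single,
      eval_X]
    refine ⟨by simpa using Polynomial.natDegree_pow_le_of_le e hdeg, ?_⟩
    have hcoeff := Polynomial.coeff_pow_of_natDegree_le (m := e) hdeg
    rw [mul_one] at hcoeff
    rw [hcoeff]
    simp [Polynomial.coeff_C]

theorem restrictToLine_of_isHomogeneous {B : Type*} [CommRing B] [Algebra K B] (u : σ → B)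
    (b : σ → K) {f : MvPolynomial σ K} {N : ℕ} (hf : f.IsHomogeneous N) :
    (restrictToLine u b f).natDegree ≤ N ∧
      (restrictToLine u b f).coeff N = algebraMap K B (eval b f) := by
  have key (m) (hm : m ∈ f.support) :
      (restrictToLine u b (monomial m (f.coeff m))).natDegree ≤ N ∧
        (restrictToLine u b (monomial m (f.coeff m))).coeff N =
          algebraMap K B (eval b (monomial m (f.coeff m))) := by
    have hN : m.degree = N := by rw [Finsupp.degree_eq_weight_one, ← hf (mem_support_iff.1 hm)]; rfl
    have hsmul : monomial m (f.coeff m) = f.coeff m • monomial m (1 : K) := by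
      rw [smul_monomial, smul_eq_mul, mul_one]
    obtain ⟨hdeg, hcoeff⟩ := restrictToLine_monomial u b m
    rw [hN] at hdeg hcoeff
    rw [hsmul, map_smul]
    refine ⟨(Polynomial.natDegree_smul_le _ _).trans hdeg, ?_⟩
    rw [Polynomial.coeff_smul, hcoeff, smul_eval, Algebra.smul_def, map_mul]
  rw [← f.support_sum_monomial_coeff, map_sum, map_sum]
  refine ⟨Polynomial.natDegree_sum_le_of_forall_le _ _ fun m hm => (key m hm).1, ?_⟩
  rw [Polynomial.finsetSum_coeff, map_sum]
  exact Finset.sum_congr rfl fun m hm => (key m hm).2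

theorem isIntegral_of_aeval_line_eq_zero {A B : Type*} [CommRing A] [CommRing B] [Algebra K A]
    [Algebra K B] [Algebra B A] [IsScalarTower K B A] (u : σ → B) (b : σ → K)
    {f : MvPolynomial σ K} {N : ℕ} (hf : f.IsHomogeneous N) (hb : eval b f ≠ 0) {t : A}
    (ht : aeval (fun i => algebraMap B A (u i) + algebraMap K A (b i) * t) f = 0) :
    IsIntegral B t := by
  obtain ⟨hdeg, hcoeff⟩ := restrictToLine_of_isHomogeneous u b hf
  refine ⟨Polynomial.C (algebraMap K B (eval b f)⁻¹) * restrictToLine u b f, ?_, ?_⟩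
  · refine Polynomial.monic_of_natDegree_le_of_coeff_eq_one N ?_ ?_
    · exact (Polynomial.natDegree_C_mul_le _ _).trans hdeg
    · rw [Polynomial.coeff_C_mul, hcoeff, ← map_mul, inv_mul_cancel₀ hb, map_one]
  · have hcomp : ((Polynomial.aeval t).restrictScalars K).comp (restrictToLine u b) =
        aeval fun i => algebraMap B A (u i) + algebraMap K A (b i) * t :=
      algHom_ext fun i => by simp [restrictToLine, IsScalarTower.algebraMap_apply K B A]
    have hroot : Polynomial.eval₂ (algebraMap B A) t (restrictToLine u b f) = 0 := by
      rw [← ht, ← hcomp]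
      rfl
    rw [Polynomial.eval₂_mul, hroot, mul_zero]

theorem isIntegral_algebraMap_of_isIntegral_X {A B : Type*} [CommRing A] [CommRing B] [Algebra K A]
    [Algebra K B] [Algebra B A] [IsScalarTower K B A] {φ : MvPolynomial τ K →ₐ[K] A}
    (hφ : φ.toRingHom.IsIntegral) (hX : ∀ i, IsIntegral B (φ (X i))) :
    (algebraMap B A).IsIntegral := by
  have hmem (p : MvPolynomial τ K) : φ p ∈ integralClosure B A := by
    induction p using MvPolynomial.induction_on with
    | C a =>
      rw [← algebraMap_eq, AlgHom.commutes, IsScalarTower.algebraMap_apply K B A]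
      exact isIntegral_algebraMap
    | add p q hp hq => rw [map_add]; exact add_mem hp hq
    | mul_X p i hp => rw [map_mul]; exact mul_mem hp (hX i)
  let g : MvPolynomial τ K →+* integralClosure B A := φ.toRingHom.codRestrict _ hmem
  exact fun a => isIntegral_trans (A := integralClosure B A) a
    (RingHom.IsIntegralElem.of_comp (f := g) (hφ a))

/-- The `K`-algebra map `K[τ] → K[σ] / I` sending the variable `X i` to the class of `y i`. -/
noncomputable def normalizationMap (I : Ideal (MvPolynomial σ K)) (y : τ → MvPolynomial σ K) :
    MvPolynomial τ K →ₐ[K] MvPolynomial σ K ⧸ I :=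
  (Ideal.Quotient.mkₐ K I).comp (aeval y)

theorem normalizationMap_X (I : Ideal (MvPolynomial σ K)) (y : τ → MvPolynomial σ K) (i : τ) :
    normalizationMap I y (X i) = Ideal.Quotient.mk I (y i) := by
  simp [normalizationMap]

theorem normalizationMap_eq_zero_iff {I : Ideal (MvPolynomial σ K)} {y : τ → MvPolynomial σ K}
    {f : MvPolynomial τ K} : normalizationMap I y f = 0 ↔ aeval y f ∈ I :=
  Ideal.Quotient.eq_zero_iff_mem

/-- A linear Noether normalization of `K[σ] / I`: linear forms `y` whose classes are algebraically
independent and over which the quotient is integral. -/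
structure IsLinearNormalization (I : Ideal (MvPolynomial σ K)) (y : τ → MvPolynomial σ K) :
    Prop where
  isHomogeneous (i : τ) : (y i).IsHomogeneous 1
  injective : Function.Injective (normalizationMap I y)
  isIntegral : (normalizationMap I y).toRingHom.IsIntegral

theorem exists_homogeneous_relation {I : Ideal (MvPolynomial σ K)} (hI : IsHomogeneousIdeal I)
    {y : τ → MvPolynomial σ K} (hy : ∀ i, (y i).IsHomogeneous 1)
    (hinj : ¬ Function.Injective (normalizationMap I y)) :
    ∃ (f : MvPolynomial τ K) (N : ℕ), f.IsHomogeneous N ∧ f ≠ 0 ∧ normalizationMap I y f = 0 := by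
  rw [injective_iff_map_eq_zero] at hinj
  push Not at hinj
  obtain ⟨p, hp, hp0⟩ := hinj
  obtain ⟨N, hN⟩ : ∃ N, homogeneousComponent N p ≠ 0 := by
    by_contra! h
    apply hp0
    rw [← sum_homogeneousComponent p]
    exact Finset.sum_eq_zero fun i _ => h i
  refine ⟨_, N, homogeneousComponent_isHomogeneous N p, hN, ?_⟩
  rw [normalizationMap_eq_zero_iff] at hp ⊢
  rw [← homogeneousComponent_aeval y hy]
  exact homogeneousComponent_mem_of_mem hI hp N

theorem isIntegral_normalizationMap_eliminate {I : Ideal (MvPolynomial σ K)} {D : ℕ}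
    {y : Fin (D + 1) → MvPolynomial σ K} (hintegral : (normalizationMap I y).toRingHom.IsIntegral)
    {f : MvPolynomial (Fin (D + 1)) K} {N : ℕ} (hf : f.IsHomogeneous N)
    (hfI : normalizationMap I y f = 0) {b : Fin (D + 1) → K} (hb : eval b f ≠ 0)
    {i₀ : Fin (D + 1)} (hi₀ : b i₀ = 1) :
    (normalizationMap I fun j => y (i₀.succAbove j) - C (b (i₀.succAbove j)) * y i₀
      ).toRingHom.IsIntegral := by
  set z : Fin D → MvPolynomial σ K := fun j => y (i₀.succAbove j) - C (b (i₀.succAbove j)) * y i₀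
  let _ : Algebra (MvPolynomial (Fin D) K) (MvPolynomial σ K ⧸ I) :=
    (normalizationMap I z).toRingHom.toAlgebra
  have hscalar : IsScalarTower K (MvPolynomial (Fin D) K) (MvPolynomial σ K ⧸ I) :=
    IsScalarTower.of_algebraMap_eq' (normalizationMap I z).comp_algebraMap.symm
  have hX (j : Fin D) : algebraMap (MvPolynomial (Fin D) K) (MvPolynomial σ K ⧸ I) (X j) =
      Ideal.Quotient.mk I (z j) := normalizationMap_X I z j
  let u : Fin (D + 1) → MvPolynomial (Fin D) K := i₀.insertNth 0 X
  -- On the quotient, `y` lies on the line through `u` with direction `b` at the parameter `y i₀`.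
  have hline (i : Fin (D + 1)) : Ideal.Quotient.mk I (y i) =
      algebraMap _ _ (u i) + algebraMap K _ (b i) * Ideal.Quotient.mk I (y i₀) := by
    refine i₀.succAboveCases ?_ (fun j => ?_) i
    · simp [u, hi₀]
    · have hC : algebraMap K (MvPolynomial σ K ⧸ I) (b (i₀.succAbove j)) =
        Ideal.Quotient.mk I (C (b (i₀.succAbove j))) := rfl
      simp only [u, Fin.insertNth_apply_succAbove, hX, hC, z, map_sub, map_mul]
      ring
  have hy₀ : IsIntegral (MvPolynomial (Fin D) K) (Ideal.Quotient.mk I (y i₀)) := by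
    refine isIntegral_of_aeval_line_eq_zero u b hf hb ?_
    simp only [← hline]
    rw [← hfI]
    exact DFunLike.congr_fun (algHom_ext fun i => by simp [normalizationMap_X]) f
  refine isIntegral_algebraMap_of_isIntegral_X hintegral fun i => ?_
  rw [normalizationMap_X, hline, IsScalarTower.algebraMap_apply K (MvPolynomial (Fin D) K)]
  exact isIntegral_algebraMap.add (isIntegral_algebraMap.mul hy₀)

theorem exists_eval_ne_zero_and_eq_one [Infinite K] {I : Ideal (MvPolynomial σ K)} (hne : I ≠ ⊤)
    {y : τ → MvPolynomial σ K} {f : MvPolynomial τ K} {N : ℕ} (hf : f.IsHomogeneous N)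
    (hf0 : f ≠ 0) (hfI : normalizationMap I y f = 0) :
    ∃ (b : τ → K) (i₀ : τ), eval b f ≠ 0 ∧ b i₀ = 1 := by
  obtain ⟨b, hb⟩ : ∃ b, eval b f ≠ 0 := by
    by_contra! h
    exact hf0 (MvPolynomial.funext fun x => by simpa using h x)
  have hN : N ≠ 0 := by
    rintro rfl
    have hC := totalDegree_eq_zero_iff_eq_C.1 ((totalDegree_zero_iff_isHomogeneous _).2 hf)
    rw [normalizationMap_eq_zero_iff, hC, aeval_C] at hfI
    refine hne (Ideal.eq_top_of_isUnit_mem _ hfI (IsUnit.map _ (isUnit_iff_ne_zero.2 ?_)))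
    intro h0
    exact hf0 (by rw [hC, h0, C_0])
  obtain ⟨i₀, hi₀⟩ : ∃ i, b i ≠ 0 := by
    by_contra! h
    have hb0 : b = 0 := funext h
    rw [hb0, eval_zero] at hb
    exact hb (mem_ker_constantCoeff_of_isHomogeneous hf hN)
  refine ⟨(b i₀)⁻¹ • b, i₀, ?_, inv_mul_cancel₀ hi₀⟩
  rw [eval_smul_of_isHomogeneous hf]
  exact mul_ne_zero (pow_ne_zero _ (inv_ne_zero hi₀)) hb

theorem exists_isLinearNormalization [Infinite K] {m : ℕ} {I : Ideal (MvPolynomial (Fin m) K)}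
    (hI : IsHomogeneousIdeal I) (hne : I ≠ ⊤) :
    ∃ (D : ℕ) (y : Fin D → MvPolynomial (Fin m) K), IsLinearNormalization I y := by
  classical
  have hex : ∃ (D : ℕ) (y : Fin D → MvPolynomial (Fin m) K),
      (∀ i, (y i).IsHomogeneous 1) ∧ (normalizationMap I y).toRingHom.IsIntegral := by
    refine ⟨m, X, isHomogeneous_X _, RingHom.isIntegral_of_surjective _ fun x => ?_⟩
    obtain ⟨f, rfl⟩ := Ideal.Quotient.mk_surjective x
    exact ⟨f, by simp [normalizationMap]⟩
  have hmin {D : ℕ} := Nat.find_min hex (m := D)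
  obtain ⟨y, hy, hintegral⟩ := Nat.find_spec hex
  refine ⟨_, y, hy, ?_, hintegral⟩
  generalize Nat.find hex = D at hmin y
  by_contra hinj
  obtain ⟨f, N, hf, hf0, hfI⟩ := exists_homogeneous_relation hI hy hinj
  obtain ⟨b, i₀, hb, hi₀⟩ := exists_eval_ne_zero_and_eq_one hne hf hf0 hfI
  obtain ⟨D, rfl⟩ : ∃ D', D = D' + 1 := ⟨D - 1, by have := i₀.2; lia⟩
  refine hmin (Nat.lt_succ_self D)
    ⟨_, fun j => ?_, isIntegral_normalizationMap_eliminate hintegral hf hfI hb hi₀⟩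
  exact (hy _).sub ((hy i₀).C_mul _)

end NoetherNormalization

section ProjectiveDictionary

attribute [local instance] MvPolynomial.gradedAlgebra

/-- The ideal of all polynomials vanishing on the affine cone over `S`. -/
def coneIdeal (S : Set (ProjPt k n)) : Ideal (MvPolynomial (Fin (n + 1)) k) where
  carrier := {h | ∀ x ∈ S, VanishesAt h x}
  add_mem' ha hb x hx v hv hvx := by rw [map_add, ha x hx v hv hvx, hb x hx v hv hvx, add_zero]
  zero_mem' _ _ v _ _ := map_zero (eval v)
  smul_mem' c a ha x hx v hv hvx := by rw [smul_eq_mul, map_mul, ha x hx v hv hvx, mul_zero]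

theorem vanishesAt_mk_iff {h : MvPolynomial (Fin (n + 1)) k} {N : ℕ} (hh : h.IsHomogeneous N)
    (v : Fin (n + 1) → k) (hv : v ≠ 0) :
    VanishesAt h (Projectivization.mk k v hv) ↔ eval v h = 0 := by
  refine ⟨fun H => H v hv rfl, fun H w hw hwv => ?_⟩
  rw [Projectivization.mk_eq_mk_iff'] at hwv
  obtain ⟨c, rfl⟩ := hwv
  rw [eval_smul_of_isHomogeneous hh, H, mul_zero]

theorem isHomogeneousIdeal_coneIdeal [Infinite k] (S : Set (ProjPt k n)) :
    IsHomogeneousIdeal (coneIdeal S) := by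
  refine isHomogeneousIdeal_of_homogeneousComponent_mem fun f hf N x hx v hv hvx => ?_
  refine eval_homogeneousComponent_eq_zero (fun c hc => ?_) N
  refine hf x hx (c • v) (smul_ne_zero hc hv) ?_
  rw [← hvx, Projectivization.mk_eq_mk_iff']
  exact ⟨c, rfl⟩

theorem mk_mem_projZeroLocus_iff {Q : Ideal (MvPolynomial (Fin (n + 1)) k)}
    (hQ : IsHomogeneousIdeal Q) (v : Fin (n + 1) → k) (hv : v ≠ 0) :
    Projectivization.mk k v hv ∈ projZeroLocus (Q : Set (MvPolynomial (Fin (n + 1)) k)) ↔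
      Q ≤ RingHom.ker (eval v) := by
  refine ⟨fun H h hh => H h hh v hv rfl, fun H h hh w hw hwv => ?_⟩
  rw [Projectivization.mk_eq_mk_iff'] at hwv
  obtain ⟨c, rfl⟩ := hwv
  exact le_ker_eval_smul hQ H c hh

theorem projZeroLocus_coneIdeal {S : Set (ProjPt k n)} (hS : IsClosedSub S) :
    projZeroLocus (coneIdeal S : Set (MvPolynomial (Fin (n + 1)) k)) = S := by
  obtain ⟨I, -, rfl⟩ := hS
  exact Set.Subset.antisymm (fun x hx h hh => hx h fun y hy => hy h hh) fun x hx h hh => hh x hx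

theorem isClosedSub_projZeroLocus {Q : Ideal (MvPolynomial (Fin (n + 1)) k)}
    (hQ : IsHomogeneousIdeal Q) :
    IsClosedSub (projZeroLocus (Q : Set (MvPolynomial (Fin (n + 1)) k))) := by
  refine ⟨{h | h ∈ Q ∧ ∃ m, h.IsHomogeneous m}, fun h hh => hh.2, Set.Subset.antisymm ?_ ?_⟩
  · exact fun x hx h hh => hx h hh.1
  · intro x hx
    induction x using Projectivization.ind with | h v hv
    rw [mk_mem_projZeroLocus_iff hQ]
    refine fun f hf => eq_zero_of_forall_homogeneous hQ ?_ f hf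
    rintro g hg ⟨N, hN⟩
    exact (vanishesAt_mk_iff hN v hv).1 (hx g ⟨hg, N, hN⟩)

theorem isClosedSub_inter {S T : Set (ProjPt k n)} (hS : IsClosedSub S) (hT : IsClosedSub T) :
    IsClosedSub (S ∩ T) := by
  obtain ⟨I, hI, rfl⟩ := hS
  obtain ⟨J, hJ, rfl⟩ := hT
  refine ⟨I ∪ J, fun h hh => hh.elim (hI h) (hJ h), Set.Subset.antisymm ?_ ?_⟩
  · rintro x ⟨hxI, hxJ⟩ h (hh | hh)
    exacts [hxI h hh, hxJ h hh]
  · exact fun x hx => ⟨fun h hh => hx h (Or.inl hh), fun h hh => hx h (Or.inr hh)⟩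

theorem isClosedSub_projZeroLocus_singleton {h : MvPolynomial (Fin (n + 1)) k} {m : ℕ}
    (hh : h.IsHomogeneous m) : IsClosedSub (projZeroLocus {h}) :=
  ⟨{h}, fun _ hg => ⟨m, Set.mem_singleton_iff.1 hg ▸ hh⟩, rfl⟩

theorem exists_X_notMem_coneIdeal {S : Set (ProjPt k n)} (hS : S.Nonempty) :
    ∃ i, X i ∉ coneIdeal S := by
  obtain ⟨x, hx⟩ := hS
  induction x using Projectivization.ind with | h v hv
  obtain ⟨i, hi⟩ := Function.ne_iff.1 hv
  exact ⟨i, fun H => hi (by simpa using H _ hx v hv rfl)⟩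

theorem isPrime_coneIdeal [Infinite k] {S : Set (ProjPt k n)} (hS : IsIrredSub S) :
    (coneIdeal S).IsPrime := by
  refine isPrime_of_homogeneous_mem_or_mem (isHomogeneousIdeal_coneIdeal S) ?_ ?_
  · obtain ⟨i, hi⟩ := exists_X_notMem_coneIdeal hS.1
    exact fun h => hi (h ▸ Submodule.mem_top)
  · intro f g M N hf hg hfg
    have hcover : S ⊆ projZeroLocus {f} ∪ projZeroLocus {g} := by
      intro x hx
      have hx := hfg x hx
      induction x using Projectivization.ind with | h v hv
      rw [vanishesAt_mk_iff (hf.mul hg), map_mul, mul_eq_zero] at hx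
      refine hx.imp ?_ ?_ <;> rintro H _ rfl
      exacts [(vanishesAt_mk_iff hf v hv).2 H, (vanishesAt_mk_iff hg v hv).2 H]
    exact (hS.2 _ _ (isClosedSub_projZeroLocus_singleton hf)
      (isClosedSub_projZeroLocus_singleton hg) hcover).imp (fun H x hx => H hx f rfl)
      fun H x hx => H hx g rfl

theorem coneIdeal_projZeroLocus [IsAlgClosed k] {Q : Ideal (MvPolynomial (Fin (n + 1)) k)}
    [hp : Q.IsPrime] (hQ : IsHomogeneousIdeal Q) (hX : ∃ i, X i ∉ Q) :
    coneIdeal (projZeroLocus (Q : Set (MvPolynomial (Fin (n + 1)) k))) = Q := by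
  refine le_antisymm (fun f hf => ?_) fun f hf x hx => hx f hf
  obtain ⟨i, hi⟩ := hX
  -- `X i * f` vanishes at the origin too, so the affine Nullstellensatz applies to it.
  have hXf : X i * f ∈ vanishingIdeal k (zeroLocus k Q) := by
    rw [mem_vanishingIdeal_iff]
    intro v hv
    by_cases hv0 : v = 0
    · simp [hv0]
    · have hfv : eval v f = 0 := by
        refine hf (Projectivization.mk k v hv0) ?_ v hv0 rfl
        rw [mk_mem_projZeroLocus_iff hQ]
        exact fun h hh => by simpa [aeval_eq_eval] using hv h hh
      simp [aeval_eq_eval, hfv]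
  rw [vanishingIdeal_zeroLocus_eq_radical, hp.radical] at hXf
  exact (hp.mem_or_mem hXf).resolve_left hi

theorem isIrredSub_projZeroLocus [IsAlgClosed k] {Q : Ideal (MvPolynomial (Fin (n + 1)) k)}
    [hp : Q.IsPrime] (hQ : IsHomogeneousIdeal Q) (hX : ∃ i, X i ∉ Q) :
    IsIrredSub (projZeroLocus (Q : Set (MvPolynomial (Fin (n + 1)) k))) := by
  have hcone := coneIdeal_projZeroLocus hQ hX
  constructor
  · by_contra h
    rw [Set.not_nonempty_iff_eq_empty] at h
    obtain ⟨i, hi⟩ := hX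
    rw [← hcone, h] at hi
    exact hi fun x hx => hx.elim
  · rintro _ _ ⟨I, -, rfl⟩ ⟨J, -, rfl⟩ hcover
    by_contra! hc
    obtain ⟨x, hx, hxI⟩ := Set.not_subset.1 hc.1
    obtain ⟨y, hy, hyJ⟩ := Set.not_subset.1 hc.2
    simp only [projZeroLocus, Set.mem_ofPred_eq, not_forall] at hxI hyJ
    obtain ⟨f, hf, hfx⟩ := hxI
    obtain ⟨g, hg, hgy⟩ := hyJ
    have hfg : f * g ∈ Q := by
      rw [← hcone]
      intro z hz w hw hwz
      rw [map_mul, mul_eq_zero]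
      exact (hcover hz).imp (fun H => H f hf w hw hwz) fun H => H g hg w hw hwz
    rw [← hcone] at hp hfg
    exact (hp.mem_or_mem hfg).elim (fun H => hfx (H x hx)) fun H => hgy (H y hy)

end ProjectiveDictionary

section Dimension

theorem ringKrullDim_le_of_isIntegral {R S : Type*} [CommRing R] [CommRing S] {f : R →+* S}
    (hf : f.IsIntegral) : ringKrullDim S ≤ ringKrullDim R := by
  let _ := f.toAlgebra
  have : Algebra.IsIntegral R S := ⟨hf⟩
  exact Order.krullDim_le_of_strictMono (PrimeSpectrum.comap f) fun p q hpq =>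
    Ideal.IsIntegral.comap_lt_comap (R := R) hpq

variable {K σ τ : Type*} [Field K]

theorem IsLinearNormalization.ringKrullDim_quotient_le {I : Ideal (MvPolynomial σ K)} {D : ℕ}
    {y : Fin D → MvPolynomial σ K} (h : IsLinearNormalization I y) :
    ringKrullDim (MvPolynomial σ K ⧸ I) ≤ D := by
  refine (ringKrullDim_le_of_isIntegral h.isIntegral).trans_eq ?_
  rw [MvPolynomial.ringKrullDim_of_isNoetherianRing, ringKrullDim_eq_zero_of_field, zero_add,
    Nat.card_fin]

theorem IsLinearNormalization.comap_aeval_eq_bot {I : Ideal (MvPolynomial σ K)}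
    {y : τ → MvPolynomial σ K} (h : IsLinearNormalization I y) :
    I.comap (aeval y : _ →ₐ[K] _).toRingHom = ⊥ := by
  refine eq_bot_iff.2 fun g hg => h.injective ?_
  rw [map_zero]
  exact normalizationMap_eq_zero_iff.2 hg

theorem IsLinearNormalization.exists_prime_over {I : Ideal (MvPolynomial σ K)}
    {y : τ → MvPolynomial σ K} (h : IsLinearNormalization I y) {p : Ideal (MvPolynomial σ K)}
    (hI : I ≤ p) (q : Ideal (MvPolynomial τ K)) [q.IsPrime]
    (hpq : p.comap (aeval y : _ →ₐ[K] _).toRingHom ≤ q) :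
    ∃ P : Ideal (MvPolynomial σ K), P.IsPrime ∧ p ≤ P ∧
      P.comap (aeval y : _ →ₐ[K] _).toRingHom = q := by
  let _ := (normalizationMap I y).toRingHom.toAlgebra
  have : Algebra.IsIntegral (MvPolynomial τ K) (MvPolynomial σ K ⧸ I) := ⟨h.isIntegral⟩
  have hp : (p.map (Ideal.Quotient.mk I)).comap (Ideal.Quotient.mk I) = p :=
    Ideal.comap_map_mk hI
  have hmk : algebraMap (MvPolynomial τ K) (MvPolynomial σ K ⧸ I) =
    (Ideal.Quotient.mk I).comp (aeval y : _ →ₐ[K] _).toRingHom := rfl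
  obtain ⟨P, hP, hPprime, rfl⟩ := Ideal.exists_ideal_over_prime_of_isIntegral q
    (p.map (Ideal.Quotient.mk I)) (by rwa [hmk, ← Ideal.comap_comap, hp])
  refine ⟨P.comap (Ideal.Quotient.mk I), Ideal.IsPrime.comap _, ?_, Ideal.comap_comap _ _⟩
  rw [← hp]
  exact Ideal.comap_mono hP

/-- Evaluation of the first `j` variables at the coordinates of `w`, keeping the others. -/
noncomputable def partialEval {D : ℕ} (w : Fin D → K) (j : ℕ) :
    MvPolynomial (Fin D) K →ₐ[K] MvPolynomial (Fin D) K :=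
  aeval fun i => if i.val < j then C (w i) else X i

theorem monotone_ker_partialEval {D : ℕ} (w : Fin D → K) :
    Monotone fun j => RingHom.ker (partialEval w j) := by
  intro j j' hj f hf
  have hcomp : (partialEval w j').comp (partialEval w j) = partialEval w j' := by
    refine MvPolynomial.algHom_ext fun i => ?_
    simp only [partialEval, AlgHom.comp_apply, aeval_X]
    split_ifs with h₁ h₂
    · exact aeval_C _ _
    · lia
    all_goals simp_all
  rw [RingHom.mem_ker] at hf ⊢
  rw [← hcomp, AlgHom.comp_apply, hf, map_zero]

theorem X_sub_C_mem_ker_partialEval_iff {D : ℕ} {w : Fin D → K} {j : ℕ} {i : Fin D} :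
    X i - C (w i) ∈ RingHom.ker (partialEval w j) ↔ i.val < j := by
  rw [RingHom.mem_ker, map_sub, partialEval, aeval_X, aeval_C, algebraMap_eq]
  split_ifs with h
  · simp [h]
  · refine iff_of_false (fun h0 => ?_) h
    simpa using congrArg (eval fun _ => w i + 1) h0

theorem ker_partialEval_le_ker_eval {D : ℕ} (w : Fin D → K) (j : ℕ) :
    RingHom.ker (partialEval w j) ≤ RingHom.ker (eval w) := by
  intro f hf
  have hcomp : (aeval w).comp (partialEval w j) = aeval w := by
    refine MvPolynomial.algHom_ext fun i => ?_
    simp only [partialEval, AlgHom.comp_apply, aeval_X]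
    split_ifs <;> simp
  have h : aeval w f = 0 := by
    rw [← hcomp, AlgHom.comp_apply, RingHom.mem_ker.1 hf, map_zero]
  rwa [aeval_eq_eval] at h

theorem exists_homogeneous_prime_chain {Q : Ideal (MvPolynomial σ K)} (hQ : IsHomogeneousIdeal Q)
    {D : ℕ} {y : Fin D → MvPolynomial σ K} (h : IsLinearNormalization Q y) :
    ∃ c : ℕ → Ideal (MvPolynomial σ K), Monotone c ∧
      ∀ j, (c j).IsPrime ∧ IsHomogeneousIdeal (c j) ∧ Q ≤ c j ∧ ∀ i, y i ∈ c j ↔ i.val < j := by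
  let f := (aeval y : MvPolynomial (Fin D) K →ₐ[K] MvPolynomial σ K).toRingHom
  let q (j : ℕ) := RingHom.ker (partialEval (0 : Fin D → K) j)
  have hq (j : ℕ) : (q j).IsPrime := RingHom.ker_isPrime _
  let Over (j : ℕ) := {P : Ideal (MvPolynomial σ K) // P.IsPrime ∧ Q ≤ P ∧ P.comap f = q j}
  obtain ⟨P₀, hP₀⟩ : Nonempty (Over 0) := by
    obtain ⟨P, hP⟩ := h.exists_prime_over le_rfl (q 0) (by rw [h.comap_aeval_eq_bot]; exact bot_le)
    exact ⟨P, hP⟩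
  have hstep (j : ℕ) (P : Over j) : ∃ P' : Over (j + 1), P.1 ≤ P'.1 := by
    obtain ⟨P, -, hQP, hPq⟩ := P
    obtain ⟨P', hP', hle, hP'q⟩ := h.exists_prime_over hQP (q (j + 1))
      (hPq.le.trans (monotone_ker_partialEval 0 j.le_succ))
    exact ⟨⟨P', hP', hQP.trans hle, hP'q⟩, hle⟩
  choose next hnext using hstep
  let P (j : ℕ) : Over j := Nat.rec ⟨P₀, hP₀⟩ next j
  have hP : Monotone fun j => (P j).1 := monotone_nat_of_le_succ fun j => hnext j (P j)
  have hprime (j : ℕ) : (P j).1.IsPrime := (P j).2.1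
  choose c hcprime hchom hcP hcmax hcmem using fun j =>
    exists_homogeneous_prime_le (hP := hprime j) (P j).1
  refine ⟨c, fun i j hij => hcmax j _ (hchom i) ((hcP i).trans (hP hij)), fun j =>
    ⟨hcprime j, hchom j, hcmax j _ hQ (P j).2.2.1, fun i => ?_⟩⟩
  calc y i ∈ c j ↔ y i ∈ (P j).1 := ⟨fun hy => hcP j hy, hcmem j _ 1 (h.isHomogeneous i)⟩
    _ ↔ X i ∈ (P j).1.comap f := by rw [Ideal.mem_comap]; simp [f]
    _ ↔ i.val < j := by
      rw [(P j).2.2.2, ← X_sub_C_mem_ker_partialEval_iff (w := (0 : Fin D → K))]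
      simp [q]

theorem exists_X_notMem_of_isHomogeneous_notMem {I : Ideal (MvPolynomial σ K)}
    {f : MvPolynomial σ K} {N : ℕ} (hf : f.IsHomogeneous N) (hN : N ≠ 0) (hfI : f ∉ I) :
    ∃ i, X i ∉ I := by
  by_contra! hX
  exact hfI (ker_constantCoeff_le_of_forall_X_mem hX (mem_ker_constantCoeff_of_isHomogeneous hf hN))

theorem strictAntiOn_coneIdeal :
    StrictAntiOn (coneIdeal (k := k) (n := n)) {S | IsClosedSub S} := by
  intro S hS T hT hST
  refine lt_of_le_of_ne (fun f hf x hx => hf x (hST.le hx)) fun h => hST.ne ?_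
  rw [← projZeroLocus_coneIdeal hS, ← projZeroLocus_coneIdeal hT, h]

theorem dimGE_mono {S : Set (ProjPt k n)} {m m' : ℕ} (h : m ≤ m') (hS : DimGE S m') :
    DimGE S m := by
  obtain ⟨c, hc, hcS⟩ := hS
  exact ⟨fun i => c (Fin.castLE (by lia) i), fun i j hij => hc (by simpa using hij),
    fun i => hcS _⟩

variable [IsAlgClosed k] {Q : Ideal (MvPolynomial (Fin (n + 1)) k)}

theorem IsLinearNormalization.add_one_le_of_dimGE (hQ : IsHomogeneousIdeal Q) {D : ℕ}
    {y : Fin D → MvPolynomial (Fin (n + 1)) k} (h : IsLinearNormalization Q y) {m : ℕ}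
    (hm : DimGE (projZeroLocus (Q : Set (MvPolynomial (Fin (n + 1)) k))) m) : m + 1 ≤ D := by
  have : Infinite k := IsAlgClosed.instInfinite
  obtain ⟨c, hc, hcS⟩ := hm
  have hclosed (i) : IsClosedSub (c i) := by
    obtain ⟨-, ⟨C, hC, h⟩, -⟩ := hcS i
    exact h ▸ isClosedSub_inter hC (isClosedSub_projZeroLocus hQ)
  have hprime (i) : (coneIdeal (c i)).IsPrime := isPrime_coneIdeal (hcS i).2.2
  have hQle (i) : Q ≤ coneIdeal (c i) := fun f hf x hx => (hcS i).1 hx f hf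
  have hlt (i) : coneIdeal (c i) < RingHom.ker (constantCoeff (R := k) (σ := Fin (n + 1))) := by
    refine lt_of_le_of_ne (le_ker_constantCoeff (hprime i).ne_top
      (isHomogeneousIdeal_coneIdeal _)) fun heq => ?_
    obtain ⟨j, hj⟩ := exists_X_notMem_coneIdeal (hcS i).2.2.1
    exact hj (heq ▸ mem_ker_constantCoeff_of_isHomogeneous (isHomogeneous_X k j) one_ne_zero)
  let s : LTSeries (PrimeSpectrum.zeroLocus (Q : Set (MvPolynomial (Fin (n + 1)) k))) :=
    { length := m
      toFun i := ⟨⟨coneIdeal (c (Fin.rev i)), hprime _⟩, hQle _⟩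
      step i := strictAntiOn_coneIdeal (hclosed _) (hclosed _)
        (hc (Fin.rev_lt_rev.2 Fin.castSucc_lt_succ)) }
  have hlen := Order.LTSeries.length_le_krullDim
    (s.snoc ⟨⟨_, RingHom.ker_isPrime _⟩, (hQle 0).trans (hlt 0).le⟩ (hlt _))
  rw [← ringKrullDim_quotient] at hlen
  exact_mod_cast hlen.trans h.ringKrullDim_quotient_le

theorem IsLinearNormalization.dimGE (hQ : IsHomogeneousIdeal Q) {e : ℕ}
    {y : Fin (e + 1) → MvPolynomial (Fin (n + 1)) k} (h : IsLinearNormalization Q y) :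
    DimGE (projZeroLocus (Q : Set (MvPolynomial (Fin (n + 1)) k))) e := by
  obtain ⟨c, hmono, hc⟩ := exists_homogeneous_prime_chain hQ h
  have hprime (j) : (c j).IsPrime := (hc j).1
  have hX (j) (hj : j < e + 1) : ∃ i, X i ∉ c j :=
    exists_X_notMem_of_isHomogeneous_notMem (h.isHomogeneous ⟨j, hj⟩) one_ne_zero
      fun hmem => lt_irrefl j (((hc j).2.2.2 _).1 hmem)
  let Z (i : Fin (e + 1)) : Set (ProjPt k n) :=
    projZeroLocus (c (Fin.rev i) : Set (MvPolynomial (Fin (n + 1)) k))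
  have hZ (i) : coneIdeal (Z i) = c (Fin.rev i) :=
    coneIdeal_projZeroLocus (hc _).2.1 (hX _ (Fin.rev i).2)
  refine ⟨Z, fun i j hij => ?_, fun i => ?_⟩
  · have hrev : (Fin.rev j).val < (Fin.rev i).val := Fin.rev_lt_rev.2 hij
    refine lt_of_le_of_ne (fun x hx g hg => hx g (hmono hrev.le hg)) fun heq => ?_
    have hc_eq : c (Fin.rev i) = c (Fin.rev j) := by rw [← hZ, heq, hZ]
    have hy := ((hc (Fin.rev i)).2.2.2 (Fin.rev j)).2 hrev
    rw [hc_eq, (hc _).2.2.2] at hy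
    exact lt_irrefl _ hy
  · have hsub : Z i ⊆ projZeroLocus (Q : Set (MvPolynomial (Fin (n + 1)) k)) :=
      fun x hx g hg => hx g ((hc _).2.2.1 hg)
    exact ⟨hsub, ⟨_, isClosedSub_projZeroLocus (hc _).2.1, (Set.inter_eq_left.2 hsub).symm⟩,
      isIrredSub_projZeroLocus (hc _).2.1 (hX _ (Fin.rev i).2)⟩

theorem IsLinearNormalization.hasDim (hQ : IsHomogeneousIdeal Q) {e : ℕ}
    {y : Fin (e + 1) → MvPolynomial (Fin (n + 1)) k} (h : IsLinearNormalization Q y) :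
    HasDim (projZeroLocus (Q : Set (MvPolynomial (Fin (n + 1)) k))) e :=
  ⟨h.dimGE hQ, fun hdim => by have := h.add_one_le_of_dimGE hQ hdim; lia⟩

theorem IsLinearNormalization.eq_add_one_of_hasDim (hQ : IsHomogeneousIdeal Q) {D : ℕ}
    {y : Fin D → MvPolynomial (Fin (n + 1)) k} (h : IsLinearNormalization Q y) {d : ℕ}
    (hd : HasDim (projZeroLocus (Q : Set (MvPolynomial (Fin (n + 1)) k))) d) : D = d + 1 := by
  have hle := h.add_one_le_of_dimGE hQ hd.1
  obtain ⟨e, rfl⟩ : ∃ e, D = e + 1 := ⟨D - 1, by lia⟩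
  by_contra hne
  exact hd.2 (dimGE_mono (by lia) (h.dimGE hQ))

end Dimension

section Gradients

attribute [local instance] MvPolynomial.gradedAlgebra

variable {K σ τ : Type*} [Field K]

/-- The gradient at the vector `v`, as a linear map on polynomials. -/
noncomputable def gradient (v : σ → K) : MvPolynomial σ K →ₗ[K] σ → K :=
  LinearMap.pi fun j => (aeval v).toLinearMap ∘ₗ (pderiv j).toLinearMap

theorem gradient_apply (v : σ → K) (f : MvPolynomial σ K) (j : σ) :
    gradient v f j = eval v (pderiv j f) := rfl

theorem gradient_mul (v : σ → K) (f g : MvPolynomial σ K) :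
    gradient v (f * g) = eval v f • gradient v g + eval v g • gradient v f := by
  ext l
  simp [gradient_apply, Derivation.leibniz]

/-- The space of gradients at `v` of the members of `Q`: the conormal space at `v` of the zero locus
of `Q`. -/
noncomputable def gradSpan (Q : Ideal (MvPolynomial σ K)) (v : σ → K) : Submodule K (σ → K) :=
  (Q.restrictScalars K).map (gradient v)

theorem gradient_mem_gradSpan {Q : Ideal (MvPolynomial σ K)} {f : MvPolynomial σ K} (hf : f ∈ Q)
    (v : σ → K) : gradient v f ∈ gradSpan Q v :=
  Submodule.mem_map_of_mem hf

theorem gradSpan_mono {P Q : Ideal (MvPolynomial σ K)} (h : P ≤ Q) (v : σ → K) :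
    gradSpan P v ≤ gradSpan Q v :=
  Submodule.map_mono h

theorem exists_eq_sum_smul_gradient {ι : Type*} [Fintype ι] {f : ι → MvPolynomial σ K} {v w : σ → K}
    (hv : ∀ j, eval v (f j) = 0) (hw : w ∈ gradSpan (Ideal.span (Set.range f)) v) :
    ∃ c : ι → K, w = ∑ j, c j • gradient v (f j) := by
  obtain ⟨p, hp, rfl⟩ := hw
  obtain ⟨c, rfl⟩ := Ideal.mem_span_range_iff_exists_fun.1 hp
  exact ⟨fun j => eval v (c j), by simp [gradient_mul, hv]⟩

theorem gradient_smul {f : MvPolynomial σ K} {N : ℕ} (hf : f.IsHomogeneous N) (c : K) (v : σ → K) :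
    gradient (c • v) f = c ^ (N - 1) • gradient v f :=
  funext fun _ => eval_smul_of_isHomogeneous hf.pderiv c v

theorem gradSpan_eq_span_homogeneous {Q : Ideal (MvPolynomial σ K)} (hQ : IsHomogeneousIdeal Q)
    (v : σ → K) :
    gradSpan Q v = Submodule.span K {w | ∃ f ∈ Q, (∃ N, f.IsHomogeneous N) ∧ w = gradient v f} := by
  apply le_antisymm
  · rintro _ ⟨f, hf, rfl⟩
    rw [← sum_homogeneousComponent f, map_sum]
    refine Submodule.sum_mem _ fun N _ => Submodule.subset_span ⟨_,
      homogeneousComponent_mem_of_mem hQ hf N, ⟨N, homogeneousComponent_isHomogeneous N f⟩, rfl⟩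
  · rw [Submodule.span_le]
    rintro _ ⟨f, hf, -, rfl⟩
    exact gradient_mem_gradSpan hf v

theorem gradSpan_smul_le {Q : Ideal (MvPolynomial σ K)} (hQ : IsHomogeneousIdeal Q) (c : K)
    (v : σ → K) : gradSpan Q (c • v) ≤ gradSpan Q v := by
  rw [gradSpan_eq_span_homogeneous hQ (c • v), Submodule.span_le]
  rintro _ ⟨f, hf, ⟨N, hN⟩, rfl⟩
  rw [gradient_smul hN]
  exact Submodule.smul_mem _ _ (gradient_mem_gradSpan hf v)

theorem span_gradientAt_homVanishingPolys [Infinite k] (S : Set (ProjPt k n))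
    (v : Fin (n + 1) → k) :
    Submodule.span k {w | ∃ h ∈ homVanishingPolys S, w = gradientAt h v} =
      gradSpan (coneIdeal S) v := by
  rw [gradSpan_eq_span_homogeneous (isHomogeneousIdeal_coneIdeal S)]
  congr 1
  ext w
  constructor
  · rintro ⟨h, ⟨hN, hh⟩, rfl⟩
    exact ⟨h, hh, hN, rfl⟩
  · rintro ⟨h, hh, hN, rfl⟩
    exact ⟨h, ⟨hN, hh⟩, rfl⟩

section LinearForms

variable [Fintype σ]

/-- The linear form with coefficient vector `w`. -/
noncomputable def linearForm : (σ → K) →ₗ[K] MvPolynomial σ K := Fintype.linearCombination K X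

theorem linearForm_apply (w : σ → K) : linearForm w = ∑ j, w j • X j := rfl

theorem isHomogeneous_linearForm (w : σ → K) : (linearForm w).IsHomogeneous 1 :=
  IsHomogeneous.sum _ _ _ fun j _ => by
    rw [smul_eq_C_mul]
    simpa using (isHomogeneous_C σ (w j)).mul (isHomogeneous_X K j)

theorem eval_linearForm (w v : σ → K) : eval v (linearForm w) = w ⬝ᵥ v := by
  simp [linearForm_apply, dotProduct, smul_eval]

theorem gradient_linearForm (v w : σ → K) : gradient v (linearForm w) = w := by
  classical
  ext l
  simp [gradient_apply, linearForm_apply, Pi.single_apply, apply_ite]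

theorem linearForm_injective :
    Function.Injective (linearForm : (σ → K) →ₗ[K] MvPolynomial σ K) :=
  Function.LeftInverse.injective (g := gradient 0) (gradient_linearForm 0)

theorem linearForm_gradient_of_isHomogeneous {f : MvPolynomial σ K} (hf : f.IsHomogeneous 1)
    (v : σ → K) : linearForm (gradient v f) = f := by
  conv_rhs => rw [← one_smul ℕ f, ← hf.sum_X_mul_pderiv]
  rw [linearForm_apply]
  refine Finset.sum_congr rfl fun j _ => ?_
  have hc := totalDegree_eq_zero_iff_eq_C.1
    ((totalDegree_zero_iff_isHomogeneous _).2 (hf.pderiv (i := j)))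
  rw [gradient_apply, hc, eval_C, smul_eq_C_mul, mul_comm]

end LinearForms

theorem exists_ne_zero_forall_sum_smul_notMem {ι : Type*} [Fintype ι] {W : Submodule K (σ → K)}
    {ξ : ι → σ → K} {a₀ : ι → K} (h₀ : ∑ j, a₀ j • ξ j ∉ W) :
    ∃ g : MvPolynomial ι K, g ≠ 0 ∧ ∀ a, eval a g ≠ 0 → ∑ j, a j • ξ j ∉ W := by
  obtain ⟨φ, hφ, hW⟩ := Submodule.exists_le_ker_of_notMem h₀
  have heval (a : ι → K) : eval a (linearForm fun j => φ (ξ j)) = φ (∑ j, a j • ξ j) := by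
    simp [eval_linearForm, dotProduct, mul_comm]
  refine ⟨linearForm fun j => φ (ξ j), fun h => hφ ?_, fun a ha hc => ha ?_⟩
  · rw [← heval, h, map_zero]
  · rw [heval]
    exact hW hc

end Gradients

section JacobianBound

variable {K σ τ : Type*} [Field K]

theorem derivation_algHom_apply [Fintype σ] {E : Type*} [CommRing E] [Algebra K E]
    (D : Derivation K E E) (ψ : MvPolynomial σ K →ₐ[K] E) (f : MvPolynomial σ K) :
    D (ψ f) = ∑ j, ψ (pderiv j f) * D (ψ (X j)) := by
  classical
  induction f using MvPolynomial.induction_on with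
  | C a =>
    rw [← algebraMap_eq, AlgHom.commutes]
    simp
  | add p q hp hq => simp only [map_add, hp, hq, add_mul, Finset.sum_add_distrib]
  | mul_X p i hp =>
    have hX : D (ψ (X i)) = ∑ j, ψ (pderiv j (X i)) * D (ψ (X j)) := by
      simp [pderiv_X, Pi.single_apply, apply_ite]
    rw [map_mul, D.leibniz, hX, hp]
    simp only [map_mul, Derivation.leibniz, smul_eq_mul, map_add, add_mul, Finset.sum_add_distrib,
      Finset.mul_sum, mul_assoc]

theorem exists_derivation_fractionRing_extending_pderiv {A : Type*} [CharZero K] [CommRing A]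
    [IsDomain A] [Algebra (MvPolynomial τ K) A] [FaithfulSMul (MvPolynomial τ K) A]
    [Algebra.IsAlgebraic (MvPolynomial τ K) A] [Algebra K A] [IsScalarTower K (MvPolynomial τ K) A]
    (i : τ) :
    ∃ D : Derivation K (FractionRing A) (FractionRing A), ∀ r : MvPolynomial τ K,
      D (algebraMap A _ (algebraMap _ A r)) = algebraMap A _ (algebraMap _ A (pderiv i r)) := by
  have : IsScalarTower K (MvPolynomial τ K) (FractionRing A) :=
    IsScalarTower.of_algebraMap_eq fun c => by
      rw [IsScalarTower.algebraMap_apply K A, IsScalarTower.algebraMap_apply K (MvPolynomial τ K) A,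
        ← IsScalarTower.algebraMap_apply _ A]
  have : Algebra.IsAlgebraic (MvPolynomial τ K) (FractionRing A) :=
    (IsFractionRing.isAlgebraic_iff' (MvPolynomial τ K) A (FractionRing A)).1 inferInstance
  obtain ⟨D, hD⟩ := exists_derivation_extending_pderiv (K := K) (E := FractionRing A) i
  refine ⟨D, fun r => ?_⟩
  rw [← IsScalarTower.algebraMap_apply, ← IsScalarTower.algebraMap_apply, hD]

theorem IsLinearNormalization.exists_derivations [CharZero K] [DecidableEq τ]
    {Q : Ideal (MvPolynomial σ K)} [Q.IsPrime] {y : τ → MvPolynomial σ K}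
    (h : IsLinearNormalization Q y) :
    ∃ δ : τ → Derivation K (FractionRing (MvPolynomial σ K ⧸ Q))
        (FractionRing (MvPolynomial σ K ⧸ Q)),
      ∀ i j, δ j (algebraMap (MvPolynomial σ K ⧸ Q) _ (Ideal.Quotient.mk Q (y i))) =
        if i = j then 1 else 0 := by
  let _ : Algebra (MvPolynomial τ K) (MvPolynomial σ K ⧸ Q) :=
    (normalizationMap Q y).toRingHom.toAlgebra
  have : Algebra.IsIntegral (MvPolynomial τ K) (MvPolynomial σ K ⧸ Q) := ⟨h.isIntegral⟩
  have : FaithfulSMul (MvPolynomial τ K) (MvPolynomial σ K ⧸ Q) :=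
    (faithfulSMul_iff_algebraMap_injective _ _).2 h.injective
  have : IsScalarTower K (MvPolynomial τ K) (MvPolynomial σ K ⧸ Q) :=
    IsScalarTower.of_algebraMap_eq fun c => ((normalizationMap Q y).commutes c).symm
  choose δ hδ using exists_derivation_fractionRing_extending_pderiv (K := K) (τ := τ)
    (A := MvPolynomial σ K ⧸ Q)
  refine ⟨δ, fun i j => ?_⟩
  have := hδ j (X i)
  rw [pderiv_X, Pi.single_apply] at this
  rw [← normalizationMap_X]
  refine this.trans ?_
  split_ifs <;> simp

theorem card_add_card_le_of_det_ne_zero {ι : Type*} [Fintype ι] [DecidableEq ι] [Fintype σ]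
    [Fintype τ] [DecidableEq τ] {G : Matrix ι σ K} {M : Matrix σ ι K} {W : Matrix σ τ K}
    {Y : Matrix τ σ K} (hGM : (G * M : Matrix ι ι K).det ≠ 0) (hGW : G * W = 0) (hYW : Y * W = 1) :
    Fintype.card ι + Fintype.card τ ≤ Fintype.card σ := by
  have hinj : Function.Injective (M.mulVecLin.coprod W.mulVecLin) := by
    rw [injective_iff_map_eq_zero]
    rintro ⟨a, b⟩ hab
    rw [LinearMap.coprod_apply, Matrix.mulVecLin_apply, Matrix.mulVecLin_apply] at hab
    have hG := congrArg G.mulVec hab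
    rw [Matrix.mulVec_add, Matrix.mulVec_mulVec, Matrix.mulVec_mulVec, hGW, Matrix.zero_mulVec,
      add_zero, Matrix.mulVec_zero] at hG
    obtain rfl : a = 0 := Matrix.eq_zero_of_mulVec_eq_zero hGM hG
    rw [Matrix.mulVec_zero, zero_add] at hab
    have hY := congrArg Y.mulVec hab
    rw [Matrix.mulVec_mulVec, hYW, Matrix.one_mulVec, Matrix.mulVec_zero] at hY
    exact Prod.ext rfl hY
  simpa using LinearMap.finrank_le_finrank_of_injective hinj

/-- The Jacobian matrix of a family of polynomials. -/
noncomputable def jacobian {ι : Type*} (f : ι → MvPolynomial σ K) :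
    Matrix ι σ (MvPolynomial σ K) := fun i j => pderiv j (f i)

theorem jacobian_map_mul_derivation [Fintype σ] {E ι : Type*} [CommRing E] [Algebra K E]
    (δ : τ → Derivation K E E) (ψ : MvPolynomial σ K →ₐ[K] E) (f : ι → MvPolynomial σ K) :
    (jacobian f).map ψ * Matrix.of (fun j i => δ i (ψ (X j))) =
      Matrix.of fun i j => δ j (ψ (f i)) := by
  ext i j
  rw [Matrix.of_apply, derivation_algHom_apply]
  rfl

theorem exists_det_jacobian_mul_notMem [Fintype σ] {ι : Type*} [Fintype ι] [DecidableEq ι]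
    {Q : Ideal (MvPolynomial σ K)} {v : σ → K} (hv : Q ≤ RingHom.ker (eval v))
    {f : ι → MvPolynomial σ K} (hf : LinearIndependent K fun i => gradient v (f i)) :
    ∃ M : Matrix σ ι K, (jacobian f * M.map (C (σ := σ))).det ∉ Q := by
  classical
  obtain ⟨M, hM⟩ : ∃ M : Matrix σ ι K, (jacobian f).map (eval v) * M = 1 := by
    rw [← Matrix.mulVec_surjective_iff_exists_right_inverse, ← Matrix.coe_mulVecLin,
      ← LinearMap.range_eq_top]
    apply Submodule.eq_top_of_finrank_eq
    rw [← Matrix.rank, LinearIndependent.rank_matrix (M := (jacobian f).map (eval v)) hf,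
      Module.finrank_fintype_fun_eq_card]
  refine ⟨M, fun hQ => one_ne_zero (α := K) ?_⟩
  have hmap : (jacobian f * M.map (C (σ := σ))).map (eval v) = 1 := by
    rw [← hM, Matrix.map_mul]
    congr 1
    ext
    simp
  have := hv hQ
  rwa [RingHom.mem_ker, RingHom.map_det, RingHom.mapMatrix_apply, hmap, Matrix.det_one] at this

theorem IsLinearNormalization.finrank_gradSpan_add_card_le [CharZero K] [Fintype σ] [Fintype τ]
    {Q : Ideal (MvPolynomial σ K)} [Q.IsPrime] {y : τ → MvPolynomial σ K}
    (h : IsLinearNormalization Q y) {v : σ → K} (hv : Q ≤ RingHom.ker (eval v)) :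
    Module.finrank K (gradSpan Q v) + Fintype.card τ ≤ Fintype.card σ := by
  classical
  let E := FractionRing (MvPolynomial σ K ⧸ Q)
  let ψ : MvPolynomial σ K →ₐ[K] E := (Algebra.algHom K _ E).comp (Ideal.Quotient.mkₐ K Q)
  have hψ (f) : ψ f = 0 ↔ f ∈ Q := by
    rw [← Ideal.Quotient.eq_zero_iff_mem]
    exact (injective_iff_map_eq_zero' _).1 (IsFractionRing.injective (MvPolynomial σ K ⧸ Q) E) _
  obtain ⟨δ, hδ⟩ := h.exists_derivations
  let b := Module.finBasis K (gradSpan Q v)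
  choose f hfQ hf using fun i => (b i).2
  obtain ⟨M, hM⟩ := exists_det_jacobian_mul_notMem hv (f := f) (by
    simp_rw [hf]
    exact b.linearIndependent.map' (gradSpan Q v).subtype (Submodule.ker_subtype _))
  let W : Matrix σ τ E := .of fun j i => δ i (ψ (X j))
  have hGM : ((jacobian f).map ψ * M.map (algebraMap K E) : Matrix _ _ E).det ≠ 0 := by
    have hC : (M.map (C (σ := σ))).map ψ = M.map (algebraMap K E) := by
      ext
      exact ψ.commutes _
    rwa [← hψ, AlgHom.map_det, AlgHom.mapMatrix_apply, Matrix.map_mul, hC] at hM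
  have hGW : (jacobian f).map ψ * W = 0 := by
    rw [jacobian_map_mul_derivation]
    exact Matrix.ext fun i j => by simp [(hψ _).2 (hfQ i)]
  have hYW : (jacobian y).map ψ * W = 1 := by
    rw [jacobian_map_mul_derivation]
    exact Matrix.ext hδ
  simpa only [Fintype.card_fin] using card_add_card_le_of_det_ne_zero hGM hGW hYW

end JacobianBound

section GenericSmoothness

universe u

attribute [local instance] MvPolynomial.gradedAlgebra

theorem exists_finset_homogeneous_span_eq {K σ : Type*} [Field K] [Finite σ]
    {I : Ideal (MvPolynomial σ K)} (hI : IsHomogeneousIdeal I) :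
    ∃ s : Finset (MvPolynomial σ K), (∀ f ∈ s, ∃ N, f.IsHomogeneous N) ∧
      Ideal.span (s : Set (MvPolynomial σ K)) = I := by
  obtain ⟨S, rfl⟩ := (Ideal.IsHomogeneous.iff_exists _ _).1 hI
  obtain ⟨s, hs, hspan⟩ := Submodule.fg_span_iff_fg_span_finset_subset _ |>.1
    (IsNoetherian.noetherian (Ideal.span ((↑) '' S : Set (MvPolynomial σ K))))
  refine ⟨s, fun f hf => ?_, hspan.symm⟩
  obtain ⟨⟨f, N, hN⟩, -, rfl⟩ := hs hf
  exact ⟨N, hN⟩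

theorem sum_derivation_mul_eq_zero_of_tangent {K σ ρ E : Type*} [Field K] [Fintype σ] [Fintype ρ]
    [CommRing E] [Algebra K E] (D : Derivation K E E) {f : ρ → MvPolynomial σ K}
    (hf : ∀ j, ∃ N, (f j).IsHomogeneous N) {x w : σ → E} {c : ρ → E}
    (hx : ∀ j, aeval x (f j) = 0) (hw : ∀ l, w l = ∑ j, c j * aeval x (pderiv l (f j))) :
    ∑ l, D (w l) * x l = 0 := by
  have hsum (u : σ → E) (hu : ∀ j, ∑ l, aeval x (pderiv l (f j)) * u l = 0) :
      ∑ l, w l * u l = 0 := by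
    simp only [hw, Finset.sum_mul]
    rw [Finset.sum_comm]
    refine Finset.sum_eq_zero fun j _ => ?_
    simp only [mul_assoc]
    rw [← Finset.mul_sum, hu, mul_zero]
  have heuler : ∑ l, w l * x l = 0 := hsum x fun j => by
    obtain ⟨N, hN⟩ := hf j
    have h := congrArg (aeval x) hN.sum_X_mul_pderiv
    rw [map_nsmul, hx, smul_zero, map_sum] at h
    rw [← h]
    simp [mul_comm]
  have hchain : ∑ l, w l * D (x l) = 0 := hsum (fun l => D (x l)) fun j => by
    have h := derivation_algHom_apply D (aeval x) (f j)
    rw [hx, map_zero] at h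
    simpa only [aeval_X] using h.symm
  have hD := congrArg D heuler
  simp only [map_sum, Derivation.leibniz, smul_eq_mul, map_zero, Finset.sum_add_distrib,
    hchain, zero_add] at hD
  simpa only [mul_comm] using hD

section TangencySystem

variable {K ι σ ρ : Type*} [Field K] [Fintype ι] [Fintype σ] [Fintype ρ]

/-- The equations, over the polynomial ring in the parameters `a`, expressing that the
hyperplane `∑ j, a j • ξ j` is tangent to the zero locus of `f` at a point off the hyperplane `ξ i`.
The unknowns are the point, the multipliers in the tangency relation, and an inverse of the value of
`ξ i` at the point. -/
noncomputable def tangencySystem (ξ : ι → σ → K) (f : ρ → MvPolynomial σ K) (i : ι) :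
    Set (MvPolynomial (σ ⊕ ρ ⊕ PUnit) (MvPolynomial ι K)) :=
  Set.range (fun j => rename Sum.inl (map C (f j))) ∪
  Set.range (fun l => ∑ j, C (X j * C (ξ j l)) -
    ∑ j, X (Sum.inr (Sum.inl j)) * rename Sum.inl (map C (pderiv l (f j)))) ∪
  {X (Sum.inr (Sum.inr PUnit.unit)) * ∑ l, C (C (ξ i l)) * X (Sum.inl l) - 1}

theorem forall_mem_tangencySystem_eval₂_eq_zero_iff {E : Type*} [CommRing E] (ξ : ι → σ → K)
    (f : ρ → MvPolynomial σ K) (i : ι) (φ : MvPolynomial ι K →+* E) (z : σ ⊕ ρ ⊕ PUnit → E) :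
    (∀ p ∈ tangencySystem ξ f i, eval₂ φ z p = 0) ↔
      (∀ j, eval₂ (φ.comp C) (z ∘ Sum.inl) (f j) = 0) ∧
      (∀ l, ∑ j, φ (X j) * φ (C (ξ j l)) =
        ∑ j, z (Sum.inr (Sum.inl j)) * eval₂ (φ.comp C) (z ∘ Sum.inl) (pderiv l (f j))) ∧
      z (Sum.inr (Sum.inr PUnit.unit)) * ∑ l, φ (C (ξ i l)) * z (Sum.inl l) = 1 := by
  simp only [tangencySystem, Set.mem_union, or_imp, forall_and, Set.forall_mem_range,
    Set.mem_singleton_iff, forall_eq, eval₂_rename, eval₂_map, eval₂_sub, eval₂_sum, eval₂_mul,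
    eval₂_C, eval₂_X, eval₂_one, map_mul, sub_eq_zero, and_assoc]

end TangencySystem

variable {K ι σ : Type u} [Field K] [Fintype ι] [Fintype σ]

theorem exists_ne_zero_forall_tangent_mem_baseLocus [CharZero K] {I : Ideal (MvPolynomial σ K)}
    (hI : IsHomogeneousIdeal I) (ξ : ι → σ → K) (i : ι) :
    ∃ g : MvPolynomial ι K, g ≠ 0 ∧ ∀ a, eval a g ≠ 0 → ∀ x, I ≤ RingHom.ker (eval x) →
      ∑ j, a j • ξ j ∈ gradSpan I x → ξ i ⬝ᵥ x = 0 := by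
  classical
  obtain ⟨s, hs, rfl⟩ := exists_finset_homogeneous_span_eq hI
  let f : s → MvPolynomial σ K := (↑)
  obtain ⟨g, hg, hga⟩ := exists_ne_zero_forall_specialization (tangencySystem ξ f i) (by
    intro E _ _ _ _ z
    let _ : Algebra K E := Algebra.compHom E (algebraMap K (MvPolynomial ι K))
    have : IsScalarTower K (MvPolynomial ι K) E := .of_algebraMap_eq fun _ => rfl
    obtain ⟨D, hD⟩ := exists_derivation_extending_pderiv (K := K) (E := E) i
    by_contra! hz
    obtain ⟨hx, hw, ht⟩ := (forall_mem_tangencySystem_eval₂_eq_zero_iff ξ f i _ z).1 hz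
    have hDw (l : σ) : D (∑ j : ι, algebraMap (MvPolynomial ι K) E (X j) *
        algebraMap (MvPolynomial ι K) E (C (ξ j l))) =
        algebraMap (MvPolynomial ι K) E (C (ξ i l)) := by
      simp [← map_mul, hD, pderiv_X, Pi.single_apply, apply_ite]
    have := sum_derivation_mul_eq_zero_of_tangent D (f := f) (fun j => hs j j.2) hx
      fun l => hw l
    simp only [hDw, Function.comp_apply] at this
    rw [this, mul_zero] at ht
    exact zero_ne_one ht)
  refine ⟨g, hg, fun a ha x hx hax => ?_⟩
  have hfx (j) : eval x (f j) = 0 := hx (Ideal.subset_span j.2)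
  obtain ⟨c, hc⟩ := exists_eq_sum_smul_gradient hfx (by simpa [f] using hax)
  have hC : (eval a).comp C = RingHom.id K := RingHom.ext fun c => eval_C c
  by_contra hne
  obtain ⟨p, hp, hp0⟩ := hga a ha (Sum.elim x (Sum.elim c fun _ => (ξ i ⬝ᵥ x)⁻¹))
  refine hp0 ((forall_mem_tangencySystem_eval₂_eq_zero_iff ξ f i (eval a) _).2 ⟨?_, ?_, ?_⟩ p hp)
  · simpa only [hC, Sum.elim_comp_inl, eval₂_id] using hfx
  · intro l
    simpa [hC, gradient_apply] using congrFun hc l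
  · simpa [dotProduct] using inv_mul_cancel₀ hne

end GenericSmoothness

section RegularLocalRing

open IsLocalRing

theorem spanFinrank_maximalIdeal_quotient_add_one_le {R : Type*} [CommRing R] [IsLocalRing R]
    {s : Set R} (hs : Ideal.span s = maximalIdeal R) (hfin : s.Finite) {x : R} (hx : x ∈ s)
    [IsLocalRing (R ⧸ Ideal.span {x})] :
    (maximalIdeal (R ⧸ Ideal.span {x})).spanFinrank + 1 ≤ s.ncard := by
  have hspan : Ideal.span (Ideal.Quotient.mk (Ideal.span {x}) '' (s \ {x})) =
      maximalIdeal (R ⧸ Ideal.span {x}) := by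
    rw [← map_maximalIdeal_of_surjective _ Ideal.Quotient.mk_surjective, ← hs, Ideal.map_span,
      ← Set.insert_sdiff_self_of_mem hx, Set.image_insert_eq,
      Ideal.Quotient.eq_zero_iff_mem.2 (Ideal.mem_span_singleton_self x), Ideal.span_insert_zero]
    simp
  rw [← hspan, ← Set.ncard_sdiff_singleton_add_one hx hfin]
  gcongr
  exact (Submodule.spanFinrank_span_le_ncard_of_finite (hfin.sdiff.image _)).trans
    (Set.ncard_image_le hfin.sdiff)

theorem ringKrullDim_quotient_quotient_span_singleton {R : Type*} [CommRing R] (I : Ideal R)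
    (x : R) : ringKrullDim ((R ⧸ I) ⧸ Ideal.span {Ideal.Quotient.mk I x}) =
      ringKrullDim (R ⧸ I ⊔ Ideal.span {x}) := by
  rw [← Set.image_singleton, ← Ideal.map_span]
  exact ringKrullDim_eq_of_ringEquiv (DoubleQuot.quotQuotEquivQuotSup I (Ideal.span {x}))

theorem le_span_singleton_of_ringKrullDim_quotient_le {R : Type*} [CommRing R] [IsNoetherianRing R]
    [IsLocalRing R] {x : R} (hx : x ∈ maximalIdeal R) [IsDomain (R ⧸ Ideal.span {x})]
    {p : Ideal R} [p.IsPrime] {d : ℕ} (hp : ((d + 1 : ℕ) : WithBot ℕ∞) ≤ ringKrullDim (R ⧸ p))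
    (hd : ringKrullDim (R ⧸ Ideal.span {x}) ≤ d) : p ≤ Ideal.span {x} := by
  intro u hu
  by_contra hux
  have : IsLocalRing (R ⧸ p) := .of_surjective' _ Ideal.Quotient.mk_surjective
  have hxp : Ideal.Quotient.mk p x ∈ maximalIdeal (R ⧸ p) := by
    rw [← map_maximalIdeal_of_surjective _ Ideal.Quotient.mk_surjective]
    exact Ideal.mem_map_of_mem _ hx
  have hcut : ringKrullDim (R ⧸ p) ≤ ringKrullDim (R ⧸ p ⊔ Ideal.span {x}) + 1 := by
    rw [← ringKrullDim_quotient_quotient_span_singleton]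
    simpa using ringKrullDim_le_ringKrullDim_quotient_add_encard {Ideal.Quotient.mk p x} (by
      rwa [ringJacobson_eq_maximalIdeal, Set.singleton_subset_iff])
  have hle : Ideal.span {x} ⊔ Ideal.span {u} ≤ p ⊔ Ideal.span {x} := by
    rw [sup_comm]
    exact sup_le_sup_right ((Ideal.span_singleton_le_iff_mem _).2 hu) _
  have hcut' : ringKrullDim (R ⧸ Ideal.span {x} ⊔ Ideal.span {u}) + 1 ≤
      ringKrullDim (R ⧸ Ideal.span {x}) := by
    rw [← ringKrullDim_quotient_quotient_span_singleton]
    refine ringKrullDim_quotient_succ_le_of_nonZeroDivisor (mem_nonZeroDivisors_of_ne_zero ?_)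
    rwa [Ne, Ideal.Quotient.eq_zero_iff_mem]
  have hdd : ((d + 1 : ℕ) : WithBot ℕ∞) ≤ d := calc
    _ ≤ ringKrullDim (R ⧸ p ⊔ Ideal.span {x}) + 1 := hp.trans hcut
    _ ≤ ringKrullDim (R ⧸ Ideal.span {x} ⊔ Ideal.span {u}) + 1 := by
      gcongr
      exact ringKrullDim_le_of_surjective _ (Ideal.Quotient.factor_surjective hle)
    _ ≤ d := hcut'.trans hd
  exact d.lt_irrefl (by exact_mod_cast hdd)

theorem exists_isPrime_ringKrullDim_le_quotient {R : Type*} [CommRing R] {d : ℕ}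
    (hd : (d : WithBot ℕ∞) ≤ ringKrullDim R) :
    ∃ p : Ideal R, p.IsPrime ∧ (d : WithBot ℕ∞) ≤ ringKrullDim (R ⧸ p) := by
  obtain ⟨l, hl⟩ := Order.le_krullDim_iff.1 hd
  refine ⟨l.head.asIdeal, l.head.isPrime, ?_⟩
  rw [ringKrullDim_quotient, Order.le_krullDim_iff]
  exact ⟨⟨l.length, fun i => ⟨l i, LTSeries.head_le l i⟩, fun i => l.step i⟩, hl⟩

theorem eq_zero_of_maximalIdeal_le_of_le_ringKrullDim {R : Type*} [CommRing R] [IsLocalRing R]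
    {p : Ideal R} [hp : p.IsPrime] (hle : maximalIdeal R ≤ p) {d : ℕ}
    (hd : (d : WithBot ℕ∞) ≤ ringKrullDim (R ⧸ p)) : d = 0 := by
  obtain rfl : p = maximalIdeal R := le_antisymm (le_maximalIdeal hp.ne_top) hle
  let _ := Ideal.Quotient.field (maximalIdeal R)
  rw [ringKrullDim_eq_zero_of_field] at hd
  exact Nat.le_zero.1 (by exact_mod_cast hd)

theorem eq_bot_of_le_span_singleton {R : Type*} [CommRing R] [IsNoetherianRing R] [IsLocalRing R]
    {x : R} (hx : x ∈ maximalIdeal R) {p : Ideal R} [hp : p.IsPrime] (hxp : x ∉ p)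
    (hle : p ≤ Ideal.span {x}) : p = ⊥ := by
  refine Submodule.eq_bot_of_le_smul_of_le_jacobson_bot (maximalIdeal R) p
    (IsNoetherian.noetherian p) (fun u hu => ?_) (jacobson_eq_maximalIdeal _ bot_ne_top).ge
  obtain ⟨w, rfl⟩ := Ideal.mem_span_singleton'.1 (hle hu)
  rw [mul_comm]
  exact Submodule.smul_mem_smul hx ((hp.mem_or_mem hu).resolve_right hxp)

theorem exists_isRegularLocalRing_quotient_span_singleton {R : Type*} [CommRing R]
    [IsRegularLocalRing R] {s : Finset R} (hs : Ideal.span s = maximalIdeal R)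
    (hcard : s.card = (maximalIdeal R).spanFinrank) {x : R} (hx : x ∈ s) :
    ∃ _ : IsRegularLocalRing (R ⧸ Ideal.span {x}),
      (maximalIdeal (R ⧸ Ideal.span {x})).spanFinrank + 1 = (maximalIdeal R).spanFinrank := by
  have hxm : x ∈ maximalIdeal R := hs ▸ Ideal.subset_span hx
  have : Nontrivial (R ⧸ Ideal.span {x}) := Ideal.Quotient.nontrivial_iff.2 fun h =>
    (maximalIdeal.isMaximal R).ne_top
      (top_le_iff.1 (h ▸ (Ideal.span_singleton_le_iff_mem _).2 hxm))
  have : IsLocalRing (R ⧸ Ideal.span {x}) := .of_surjective' _ Ideal.Quotient.mk_surjective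
  have hgen := spanFinrank_maximalIdeal_quotient_add_one_le hs s.finite_toSet hx
  rw [Set.ncard_coe_finset, hcard] at hgen
  have hdim : ((maximalIdeal R).spanFinrank : WithBot ℕ∞) ≤
      ringKrullDim (R ⧸ Ideal.span {x}) + 1 := by
    rw [IsRegularLocalRing.spanFinrank_maximalIdeal]
    simpa using ringKrullDim_le_ringKrullDim_quotient_add_encard {x} (by
      rwa [ringJacobson_eq_maximalIdeal, Set.singleton_subset_iff])
  have hreg : IsRegularLocalRing (R ⧸ Ideal.span {x}) :=
    .of_spanFinrank_maximalIdeal_le _ (ENat.WithBot.add_le_add_one_right_iff.1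
      (le_trans (by exact_mod_cast hgen) hdim))
  refine ⟨hreg, le_antisymm hgen ?_⟩
  rw [← IsRegularLocalRing.spanFinrank_maximalIdeal] at hdim
  exact_mod_cast hdim

theorem isDomain_of_isRegularLocalRing (R : Type*) [CommRing R] [IsRegularLocalRing R] :
    IsDomain R := by
  obtain ⟨d, hd⟩ : ∃ d, (maximalIdeal R).spanFinrank = d := ⟨_, rfl⟩
  induction d generalizing R with
  | zero =>
    have := (Submodule.spanFinrank_eq_zero_iff_eq_bot (IsNoetherian.noetherian _)).1 hd
    exact (isField_iff_maximalIdeal_eq.2 this).isDomain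
  | succ d ih =>
    have hdim : ((d + 1 : ℕ) : WithBot ℕ∞) = ringKrullDim R := by
      rw [← hd, IsRegularLocalRing.spanFinrank_maximalIdeal]
    obtain ⟨s, hcard, hs⟩ :=
      (IsNoetherian.noetherian (maximalIdeal R)).exists_span_finset_card_eq_spanFinrank
    -- For `p` of maximal coheight and a generator `x ∉ p`, the quotient `R ⧸ (x)` is a domain of
    -- dimension one less, which forces `p ≤ (x)`; so `p = x * p`, and Nakayama gives `p = 0`.
    obtain ⟨p, hp, hpd⟩ := exists_isPrime_ringKrullDim_le_quotient hdim.le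
    obtain ⟨x, hxs, hxp⟩ : ∃ x ∈ s, x ∉ p := by
      by_contra! hsp
      exact (Nat.succ_pos d).ne' (eq_zero_of_maximalIdeal_le_of_le_ringKrullDim
        (hs ▸ Ideal.span_le.2 hsp) hpd)
    have hx : x ∈ maximalIdeal R := hs ▸ Ideal.subset_span hxs
    obtain ⟨hreg, hfinrank⟩ := exists_isRegularLocalRing_quotient_span_singleton hs hcard hxs
    have hxd : (maximalIdeal (R ⧸ Ideal.span {x})).spanFinrank = d := by lia
    have hdim' : ringKrullDim (R ⧸ Ideal.span {x}) ≤ d := by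
      rw [← IsRegularLocalRing.spanFinrank_maximalIdeal, hxd]
    have := ih _ hxd
    have hbot := eq_bot_of_le_span_singleton hx hxp
      (le_span_singleton_of_ringKrullDim_quotient_le hx hpd hdim')
    subst hbot
    exact IsDomain.of_bot_isPrime R

end RegularLocalRing

section JacobianCriterion

open IsLocalRing

theorem spanFinrank_maximalIdeal_add_finrank_le {K V R : Type*} [Field K] [AddCommGroup V]
    [Module K V] [FiniteDimensional K V] [CommRing R] [IsLocalRing R] [IsNoetherianRing R]
    [Algebra K R] {φ : V →ₗ[K] R} (hφ : ∀ v, φ v ∈ maximalIdeal R)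
    (hspan : maximalIdeal R ≤ Ideal.span (Set.range φ) ⊔ maximalIdeal R ^ 2) {U : Submodule K V}
    (hU : ∀ u ∈ U, φ u ∈ maximalIdeal R ^ 2) :
    (maximalIdeal R).spanFinrank + Module.finrank K U ≤ Module.finrank K V := by
  obtain ⟨W, hUW⟩ := Submodule.exists_isCompl U
  let b := Module.finBasis K W
  let J := Ideal.span (Set.range fun i => φ (b i))
  have hWJ (w : W) : φ w ∈ J := by
    rw [← b.sum_repr w, Submodule.coe_sum, map_sum]
    refine sum_mem fun i _ => ?_
    rw [Submodule.coe_smul, map_smul]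
    exact J.smul_of_tower_mem _ (Ideal.subset_span ⟨i, rfl⟩)
  have hVJ : Ideal.span (Set.range φ) ≤ J ⊔ maximalIdeal R ^ 2 := by
    rw [Ideal.span_le]
    rintro _ ⟨v, rfl⟩
    obtain ⟨u, hu, w, hw, rfl⟩ :=
      Submodule.mem_sup.1 (hUW.sup_eq_top.ge (Submodule.mem_top : v ∈ _))
    rw [map_add]
    exact add_mem (Ideal.mem_sup_right (hU u hu)) (Ideal.mem_sup_left (hWJ ⟨w, hw⟩))
  have hJ : J = maximalIdeal R := by
    refine le_antisymm (Ideal.span_le.2 ?_) ?_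
    · rintro _ ⟨i, rfl⟩
      exact hφ _
    · refine Submodule.le_of_le_smul_of_le_jacobson_bot (IsNoetherian.noetherian _)
        (jacobson_eq_maximalIdeal ⊥ bot_ne_top).ge ?_
      rw [smul_eq_mul, ← pow_two]
      exact hspan.trans (sup_le hVJ le_sup_right)
  rw [← hJ, ← Submodule.finrank_add_eq_of_isCompl hUW, add_comm]
  gcongr
  calc J.spanFinrank ≤ (Set.range fun i => φ (b i)).ncard :=
        Submodule.spanFinrank_span_le_ncard_of_finite (Set.finite_range _)
    _ ≤ Module.finrank K W := by
      rw [← Nat.card_coe_set_eq]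
      exact (Finite.card_range_le _).trans_eq (Nat.card_fin _)

theorem ker_algebraMap_localization_comp_le {S B : Type*} [CommRing S] [CommRing B] {π : S →+* B}
    (hπ : Function.Surjective π) {M : Ideal B} [M.IsPrime] {q : Ideal S} [hq : q.IsPrime]
    (hπq : RingHom.ker π ≤ q) (hqM : q ≤ M.comap π) :
    RingHom.ker ((algebraMap B (Localization.AtPrime M)).comp π) ≤ q := by
  intro f hf
  obtain ⟨⟨s, hs⟩, hsf⟩ := (IsLocalization.map_eq_zero_iff M.primeCompl _ (π f)).1 hf
  obtain ⟨t, rfl⟩ := hπ s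
  refine (hq.mem_or_mem (hπq (?_ : t * f ∈ RingHom.ker π))).resolve_left fun ht => hs (hqM ht)
  rw [RingHom.mem_ker, map_mul]
  exact hsf

theorem height_le_ringKrullDim_quotient_of_forall_le {S B : Type*} [CommRing S] [CommRing B]
    [IsNoetherianRing B] {π : S →+* B} (hπ : Function.Surjective π) {M : Ideal B} [M.IsPrime]
    {P : Ideal S}
    (hP : ∀ q : Ideal S, q.IsPrime → RingHom.ker π ≤ q → q ≤ M.comap π → P ≤ q) :
    (M.height : WithBot ℕ∞) ≤ ringKrullDim (S ⧸ P) := by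
  obtain ⟨l, hlast, hlen⟩ := M.exists_ltSeries_length_eq_height
  have hmem (i) : PrimeSpectrum.comap π (l i) ∈ PrimeSpectrum.zeroLocus (P : Set S) :=
    hP _ inferInstance (Ideal.ker_le_comap π)
      (Ideal.comap_mono ((l.monotone (Fin.le_last i)).trans hlast.le))
  rw [← hlen, ringKrullDim_quotient]
  let l' : LTSeries (PrimeSpectrum.zeroLocus (P : Set S)) :=
    ⟨l.length, fun i => ⟨PrimeSpectrum.comap π (l i), hmem i⟩, fun i =>
      RingHom.strictMono_comap_of_surjective hπ (l.step i)⟩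
  exact Order.LTSeries.length_le_krullDim l'

variable {K σ : Type*} [Field K]

theorem gradient_mul_X (v : σ → K) (f : MvPolynomial σ K) (i : σ) [DecidableEq σ] :
    gradient v (f * X i) = v i • gradient v f + eval v f • Pi.single i 1 := by
  have hX : gradient v (X i) = Pi.single i 1 := by
    ext j
    rcases eq_or_ne j i with rfl | hji
    · simp [gradient_apply]
    · simp [gradient_apply, pderiv_X_of_ne hji.symm, hji]
  rw [gradient_mul, hX, eval_X, add_comm]

variable [Fintype σ]

/-- The polynomial `x ↦ w ⬝ᵥ (x - v)`, linear in `w`. -/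
noncomputable def centeredForm (v : σ → K) : (σ → K) →ₗ[K] MvPolynomial σ K :=
  Fintype.linearCombination K fun j => X j - C (v j)

theorem centeredForm_apply (v w : σ → K) : centeredForm v w = ∑ j, w j • (X j - C (v j)) := rfl

theorem eval_centeredForm (v w : σ → K) : eval v (centeredForm v w) = 0 := by
  simp [centeredForm_apply, smul_eval]

theorem sub_centeredForm_gradient_mem (v : σ → K) (f : MvPolynomial σ K) :
    f - C (eval v f) - centeredForm v (gradient v f) ∈ RingHom.ker (eval v) ^ 2 := by
  classical
  induction f using MvPolynomial.induction_on with
  | C a =>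
    have : gradient v (C a) = 0 := funext fun j => by simp [gradient_apply]
    simp [this]
  | add p q hp hq =>
    convert add_mem hp hq using 1
    simp only [map_add]
    ring
  | mul_X p i hp =>
    have hsingle : centeredForm v (Pi.single i 1) = X i - C (v i) := by
      simp [centeredForm_apply, Pi.single_apply]
    have hsplit : p * X i - C (eval v (p * X i)) - centeredForm v (gradient v (p * X i)) =
        X i * (p - C (eval v p) - centeredForm v (gradient v p)) +
          (X i - C (v i)) * centeredForm v (gradient v p) := by
      simp only [gradient_mul_X, map_add, map_smul, hsingle, map_mul, eval_X, smul_eq_C_mul]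
      ring
    rw [hsplit, pow_two]
    exact add_mem (Ideal.mul_mem_left _ _ (by rwa [← pow_two]))
      (Ideal.mul_mem_mul (by simp) (eval_centeredForm v _))

theorem spanFinrank_maximalIdeal_localization_add_finrank_gradSpan_le {B : Type*} [CommRing B]
    [IsNoetherianRing B] [Algebra K B] {π : MvPolynomial σ K →ₐ[K] B}
    (hπ : Function.Surjective π) {M : Ideal B} [M.IsPrime] {v : σ → K}
    (hM : M.comap π.toRingHom = RingHom.ker (eval v)) :
    (maximalIdeal (Localization.AtPrime M)).spanFinrank +
      Module.finrank K (gradSpan (RingHom.ker π.toRingHom) v) ≤ Fintype.card σ := by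
  have : IsNoetherianRing (Localization.AtPrime M) :=
    IsLocalization.isNoetherianRing M.primeCompl _ inferInstance
  let ψ := (IsScalarTower.toAlgHom K B (Localization.AtPrime M)).comp π
  have hmax : maximalIdeal (Localization.AtPrime M) = (RingHom.ker (eval v)).map ψ := by
    have hMmap : M = (RingHom.ker (eval v)).map π.toRingHom := by
      rw [← hM, Ideal.map_comap_of_surjective π.toRingHom hπ]
    rw [← Localization.AtPrime.map_eq_maximalIdeal]
    exact (congrArg (Ideal.map _) hMmap).trans (Ideal.map_map _ _)
  have hψ₂ {f} (hf : f ∈ RingHom.ker (eval v) ^ 2) :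
      ψ f ∈ maximalIdeal (Localization.AtPrime M) ^ 2 := by
    rw [hmax, ← Ideal.map_pow]
    exact Ideal.mem_map_of_mem ψ hf
  have hψ_taylor {f} (hf : f ∈ RingHom.ker (eval v)) :
      ψ f - ψ (centeredForm v (gradient v f)) ∈ maximalIdeal (Localization.AtPrime M) ^ 2 := by
    have := hψ₂ (sub_centeredForm_gradient_mem v f)
    rwa [RingHom.mem_ker.1 hf, map_zero, sub_zero, map_sub] at this
  rw [← Module.finrank_fintype_fun_eq_card K]
  refine spanFinrank_maximalIdeal_add_finrank_le (φ := ψ.toLinearMap ∘ₗ centeredForm v)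
    (fun w => ?_) ?_ ?_
  · rw [hmax]
    exact Ideal.mem_map_of_mem ψ (eval_centeredForm v w)
  · conv_lhs => rw [hmax]
    refine Ideal.map_le_iff_le_comap.2 fun f hf => ?_
    rw [Ideal.mem_comap, ← sub_add_cancel (ψ f) (ψ (centeredForm v (gradient v f)))]
    exact add_mem (Ideal.mem_sup_right (hψ_taylor hf))
      (Ideal.mem_sup_left (Ideal.subset_span ⟨_, rfl⟩))
  · rintro _ ⟨f, hf, rfl⟩
    have hπf : π f = 0 := hf
    have := hψ_taylor (f := f) (hM.le (by simp [hπf]))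
    rwa [show ψ f = 0 by simp [ψ, hπf], zero_sub, neg_mem_iff] at this

theorem isRegularLocalRing_localization_of_card_le {B : Type*} [CommRing B]
    [IsNoetherianRing B] [Algebra K B] {π : MvPolynomial σ K →ₐ[K] B}
    (hπ : Function.Surjective π) {M : Ideal B} [M.IsPrime] {v : σ → K}
    (hM : M.comap π.toRingHom = RingHom.ker (eval v)) {e : ℕ} (he : (e : ℕ∞) ≤ M.height)
    (hr : Fintype.card σ ≤ Module.finrank K (gradSpan (RingHom.ker π.toRingHom) v) + e) :
    IsRegularLocalRing (Localization.AtPrime M) := by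
  have : IsNoetherianRing (Localization.AtPrime M) :=
    IsLocalization.isNoetherianRing M.primeCompl _ inferInstance
  have hgen := spanFinrank_maximalIdeal_localization_add_finrank_gradSpan_le hπ hM
  refine .of_spanFinrank_maximalIdeal_le _ ?_
  rw [IsLocalization.AtPrime.ringKrullDim_eq_height M]
  have : (maximalIdeal (Localization.AtPrime M)).spanFinrank ≤ e := by lia
  exact_mod_cast (Nat.cast_le.2 this).trans he

theorem exists_isLeast_prime_of_card_le {B : Type*} [CommRing B]
    [IsNoetherianRing B] [Algebra K B] {π : MvPolynomial σ K →ₐ[K] B}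
    (hπ : Function.Surjective π) {M : Ideal B} [M.IsPrime] {v : σ → K}
    (hM : M.comap π.toRingHom = RingHom.ker (eval v)) {e : ℕ} (he : (e : ℕ∞) ≤ M.height)
    (hr : Fintype.card σ ≤ Module.finrank K (gradSpan (RingHom.ker π.toRingHom) v) + e) :
    ∃ P : Ideal (MvPolynomial σ K), IsLeast {q | q.IsPrime ∧ RingHom.ker π.toRingHom ≤ q ∧
      q ≤ RingHom.ker (eval v)} P ∧
      (e : WithBot ℕ∞) ≤ ringKrullDim (MvPolynomial σ K ⧸ P) := by
  have := isRegularLocalRing_localization_of_card_le hπ hM he hr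
  have := isDomain_of_isRegularLocalRing (Localization.AtPrime M)
  let ψ := (algebraMap B (Localization.AtPrime M)).comp π.toRingHom
  have hmin (q : Ideal (MvPolynomial σ K)) (hq : q.IsPrime) :
      RingHom.ker π.toRingHom ≤ q → q ≤ M.comap π.toRingHom → RingHom.ker ψ ≤ q :=
    ker_algebraMap_localization_comp_le hπ
  have hker : RingHom.ker π.toRingHom ≤ RingHom.ker ψ := fun f hf => by
    rw [RingHom.mem_ker, RingHom.comp_apply, RingHom.mem_ker.1 hf, map_zero]
  rw [← hM]
  exact ⟨RingHom.ker ψ, ⟨⟨RingHom.ker_isPrime _, hker,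
    hmin _ inferInstance (Ideal.ker_le_comap _) le_rfl⟩, fun q hq => hmin q hq.1 hq.2.1 hq.2.2⟩,
    (WithBot.coe_le_coe.2 he).trans (height_le_ringKrullDim_quotient_of_forall_le hπ hmin)⟩

end JacobianCriterion

section Heights

theorem le_height_ker_eval {K : Type*} [Field K] {D : ℕ} (w : Fin D → K) :
    (D : ℕ∞) ≤ (RingHom.ker (eval w)).height := by
  have hprime : (RingHom.ker (eval w)).IsPrime := RingHom.ker_isPrime _
  let q (j : Fin (D + 1)) : PrimeSpectrum (MvPolynomial (Fin D) K) :=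
    ⟨RingHom.ker (partialEval w j), RingHom.ker_isPrime _⟩
  have hq : StrictMono q := Fin.strictMono_iff_lt_succ.2 fun i => by
    refine lt_of_le_of_ne (monotone_ker_partialEval w (Nat.le_succ i)) fun h => ?_
    have hi : X i - C (w i) ∈ RingHom.ker (partialEval w i) :=
      (congrArg PrimeSpectrum.asIdeal h).ge (X_sub_C_mem_ker_partialEval_iff.2 (Nat.lt_succ_self i))
    exact (X_sub_C_mem_ker_partialEval_iff.1 hi).false
  rw [PrimeSpectrum.height_eq_orderHeight ⟨_, hprime⟩]
  exact Order.length_le_height (p := LTSeries.mk D q hq) (ker_partialEval_le_ker_eval w D)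

section IntegralExtension

variable {S B : Type*} [CommRing S] [IsNoetherianRing S] [IsIntegrallyClosed S]
  [CommRing B] [IsDomain B] [IsNoetherianRing B] {φ : S →+* B}

theorem height_comap_le_of_isIntegral (hinj : Function.Injective φ) (hintegral : φ.IsIntegral)
    (q : Ideal B) [q.IsPrime] : (q.comap φ).height ≤ q.height := by
  let _ := φ.toAlgebra
  have : Algebra.IsIntegral S B := ⟨hintegral⟩
  have : FaithfulSMul S B := (faithfulSMul_iff_algebraMap_injective S B).2 hinj
  have : q.LiesOver (q.comap φ) := ⟨rfl⟩
  rw [Ideal.height_eq_height_add_of_liesOver_of_hasGoingDown (q.comap φ) q]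
  exact le_self_add

theorem eq_comap_of_le_comap_of_mem_minimalPrimes_span_singleton [IsDomain S]
    (hinj : Function.Injective φ) (hintegral : φ.IsIntegral) {b : B} {q : Ideal B}
    (hq : q ∈ (Ideal.span {b}).minimalPrimes) {p : Ideal S} [p.IsPrime] (hp : p ≠ ⊥)
    (hle : p ≤ q.comap φ) : p = q.comap φ := by
  have : q.IsPrime := hq.1.1
  by_contra hne
  have hht : (2 : ℕ∞) ≤ 1 := calc
    (2 : ℕ∞) = 0 + 1 + 1 := by norm_num
    _ ≤ (⊥ : Ideal S).height + 1 + 1 := by gcongr; exact zero_le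
    _ ≤ p.height + 1 := by
      gcongr
      exact Ideal.height_add_one_le_of_lt_of_isPrime (bot_lt_iff_ne_bot.2 hp)
    _ ≤ (q.comap φ).height := Ideal.height_add_one_le_of_lt_of_isPrime (hle.lt_of_ne hne)
    _ ≤ q.height := height_comap_le_of_isIntegral hinj hintegral q
    _ ≤ 1 := Ideal.height_le_one_of_isPrincipal_of_mem_minimalPrimes _ _ hq
  exact absurd hht (by decide)

end IntegralExtension

variable {K σ : Type*} [Field K] [Finite σ] {I : Ideal (MvPolynomial σ K)} [I.IsPrime]

theorem IsLinearNormalization.le_height {D : ℕ} {y : Fin D → MvPolynomial σ K}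
    (h : IsLinearNormalization I y) {v : σ → K} {M : Ideal (MvPolynomial σ K ⧸ I)} [M.IsPrime]
    (hM : M.comap (Ideal.Quotient.mk I) = RingHom.ker (eval v)) : (D : ℕ∞) ≤ M.height := by
  refine le_trans ?_ (height_comap_le_of_isIntegral h.injective h.isIntegral M)
  have hcomap : M.comap (normalizationMap I y).toRingHom =
      RingHom.ker (eval fun i => eval v (y i)) := by
    change (M.comap (Ideal.Quotient.mk I)).comap (aeval y : _ →ₐ[K] _).toRingHom = _
    rw [hM, RingHom.comap_ker]
    congr 1
    refine MvPolynomial.ringHom_ext (fun r => ?_) fun i => ?_ <;> simp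
  rw [hcomap]
  exact le_height_ker_eval _

end Heights

section HypersurfaceSection

variable {K σ : Type*} [Field K] [Fintype σ]

theorem exists_isLeast_prime_sup_span_singleton {A : Type*} [CommRing A] [IsNoetherianRing A]
    [Algebra K A] {π : MvPolynomial σ K →ₐ[K] A} (hπ : Function.Surjective π) {M : Ideal A}
    [M.IsPrime] {v : σ → K} (hM : M.comap π.toRingHom = RingHom.ker (eval v)) {e : ℕ}
    (he : ((e + 1 : ℕ) : ℕ∞) ≤ M.height) {h : MvPolynomial σ K} (hv : eval v h = 0)
    (hr : Fintype.card σ ≤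
      Module.finrank K (gradSpan (RingHom.ker π.toRingHom ⊔ Ideal.span {h}) v) + e) :
    ∃ P : Ideal (MvPolynomial σ K), IsLeast {q | q.IsPrime ∧
      RingHom.ker π.toRingHom ⊔ Ideal.span {h} ≤ q ∧ q ≤ RingHom.ker (eval v)} P ∧
      (e : WithBot ℕ∞) ≤ ringKrullDim (MvPolynomial σ K ⧸ P) := by
  have hhM : π h ∈ M := hM.ge hv
  let J := Ideal.span {π h}
  have hJ : J ≤ M := (Ideal.span_singleton_le_iff_mem _).2 hhM
  let ρ := (Ideal.Quotient.mkₐ K J).comp π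
  have hker : RingHom.ker ρ.toRingHom = RingHom.ker π.toRingHom ⊔ Ideal.span {h} := by
    change RingHom.ker ((Ideal.Quotient.mk J).comp π.toRingHom) = _
    have hmap : J = (Ideal.span {h}).map π.toRingHom := by
      rw [Ideal.map_span, Set.image_singleton]; rfl
    rw [← RingHom.comap_ker, Ideal.mk_ker, hmap,
      Ideal.comap_map_of_surjective' π.toRingHom hπ, sup_comm]
  have hprime : (M.map (Ideal.Quotient.mk J)).IsPrime :=
    Ideal.map_isPrime_of_surjective Ideal.Quotient.mk_surjective (by rwa [Ideal.mk_ker])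
  have hcomap : (M.map (Ideal.Quotient.mk J)).comap ρ.toRingHom = RingHom.ker (eval v) := by
    rw [← hM]
    conv_rhs => rw [← Ideal.comap_map_mk hJ]
    exact (Ideal.comap_comap _ _).symm
  have hheight : (e : ℕ∞) ≤ (M.map (Ideal.Quotient.mk J)).height := by
    have := he.trans (Ideal.height_le_height_add_one_of_mem hhM)
    rw [Nat.cast_add, Nat.cast_one] at this
    exact (ENat.add_le_add_iff_right (by simp)).1 this
  rw [← hker] at hr ⊢
  exact exists_isLeast_prime_of_card_le (Ideal.Quotient.mk_surjective.comp hπ) hcomap hheight hr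

theorem IsLinearNormalization.exists_isLeast_prime {I : Ideal (MvPolynomial σ K)} [I.IsPrime]
    {e : ℕ} {y : Fin (e + 1) → MvPolynomial σ K} (hy : IsLinearNormalization I y) {v : σ → K}
    (hI : I ≤ RingHom.ker (eval v)) {h : MvPolynomial σ K} (hv : eval v h = 0)
    (hr : Fintype.card σ ≤ Module.finrank K (gradSpan (I ⊔ Ideal.span {h}) v) + e) :
    ∃ P : Ideal (MvPolynomial σ K), IsLeast {q | q.IsPrime ∧ I ⊔ Ideal.span {h} ≤ q ∧
      q ≤ RingHom.ker (eval v)} P ∧ (e : WithBot ℕ∞) ≤ ringKrullDim (MvPolynomial σ K ⧸ P) := by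
  have hprime : (RingHom.ker (eval v)).IsPrime := RingHom.ker_isPrime _
  have hM : ((RingHom.ker (eval v)).map (Ideal.Quotient.mk I)).IsPrime :=
    Ideal.map_isPrime_of_surjective Ideal.Quotient.mk_surjective (by rwa [Ideal.mk_ker])
  have hker : RingHom.ker (Ideal.Quotient.mkₐ K I).toRingHom = I := Ideal.mk_ker
  have := exists_isLeast_prime_sup_span_singleton (π := Ideal.Quotient.mkₐ K I)
    Ideal.Quotient.mk_surjective (Ideal.comap_map_mk hI) (hy.le_height (Ideal.comap_map_mk hI)) hv
    (by rwa [hker])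
  rwa [hker] at this

end HypersurfaceSection

section Elimination

variable {ι A L : Type*} [Fintype ι] [CommRing A] [Field L] [Algebra A L]

/-- The linear form `∑ i, ξ i * a i` in the indeterminate parameters `a`. -/
noncomputable def parameterForm (ξ : ι → A) : MvPolynomial ι A := ∑ i, C (ξ i) * X i

theorem eval_parameterForm (ξ a : ι → A) : eval a (parameterForm ξ) = ∑ i, a i * ξ i := by
  simp [parameterForm, mul_comm]

theorem parameterForm_ne_zero {ξ : ι → A} (hξ : ξ ≠ 0) : parameterForm ξ ≠ 0 := by
  classical
  obtain ⟨j, hj⟩ := Function.ne_iff.1 hξ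
  intro h
  have := eval_parameterForm ξ (Pi.single j 1)
  simp only [h, map_zero, Pi.single_apply, ite_mul, one_mul, zero_mul, Finset.sum_ite_eq',
    Finset.mem_univ, if_true] at this
  exact hj this.symm

section SolveFor

variable [DecidableEq ι]

variable (L) in
/-- The substitution `a j ↦ -∑ i ≠ j, (ξ i / ξ j) * a i`, which solves `parameterForm ξ = 0` for the
parameter `a j` over the field `L`. -/
noncomputable def solveFor (ξ : ι → A) (j : ι) : MvPolynomial ι A →+* MvPolynomial ι L :=
  eval₂Hom (C.comp (algebraMap A L)) <| Function.update X j <|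
    -∑ i ∈ Finset.univ.erase j, C (algebraMap A L (ξ i) / algebraMap A L (ξ j)) * X i

theorem solveFor_C (ξ : ι → A) (j : ι) (c : A) : solveFor L ξ j (C c) = C (algebraMap A L c) := by
  simp [solveFor]

theorem solveFor_X_of_ne (ξ : ι → A) {i j : ι} (h : i ≠ j) : solveFor L ξ j (X i) = X i := by
  simp [solveFor, h]

theorem C_mul_solveFor_X_self (ξ : ι → A) {j : ι} (hj : algebraMap A L (ξ j) ≠ 0) :
    C (algebraMap A L (ξ j)) * solveFor L ξ j (X j) =
      -∑ i ∈ Finset.univ.erase j, C (algebraMap A L (ξ i)) * X i := by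
  simp only [solveFor, coe_eval₂Hom, eval₂_X, Function.update_self, mul_neg, Finset.mul_sum,
    ← mul_assoc, ← C_mul, mul_div_cancel₀ _ hj]

theorem solveFor_parameterForm (ξ : ι → A) {j : ι} (hj : algebraMap A L (ξ j) ≠ 0) :
    solveFor L ξ j (parameterForm ξ) = 0 := by
  rw [parameterForm, ← Finset.add_sum_erase _ _ (Finset.mem_univ j), map_add, map_mul, solveFor_C,
    C_mul_solveFor_X_self ξ hj, map_sum, neg_add_eq_zero]
  refine Finset.sum_congr rfl fun i hi => ?_
  rw [map_mul, solveFor_C, solveFor_X_of_ne ξ (Finset.ne_of_mem_erase hi)]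

-- Modulo the parameter form, `ξ j * a j` can be replaced by a form free of `a j`.
theorem exists_map_eq_pow_mul_solveFor (ξ : ι → A) {j : ι} (hj : algebraMap A L (ξ j) ≠ 0)
    (u : MvPolynomial ι A) :
    ∃ (N : ℕ) (w : MvPolynomial ι A), C (ξ j) ^ N * u - w ∈ Ideal.span {parameterForm ξ} ∧
      map (algebraMap A L) w = C (algebraMap A L (ξ j)) ^ N * solveFor L ξ j u := by
  set J : Ideal (MvPolynomial ι A) := Ideal.span {parameterForm ξ}
  induction u using MvPolynomial.induction_on with
  | C c => exact ⟨0, C c, by simp, by simp [solveFor_C]⟩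
  | add p q hp hq =>
    obtain ⟨N, w, hw, hmap⟩ := hp
    obtain ⟨N', w', hw', hmap'⟩ := hq
    refine ⟨N + N', C (ξ j) ^ N' * w + C (ξ j) ^ N * w', ?_, ?_⟩
    · have := add_mem (J.mul_mem_left (C (ξ j) ^ N') hw) (J.mul_mem_left (C (ξ j) ^ N) hw')
      convert this using 1
      ring
    · simp only [map_add, map_mul, map_pow, map_C, hmap, hmap']
      ring
  | mul_X p i hp =>
    obtain ⟨N, w, hw, hmap⟩ := hp
    obtain rfl | hij := eq_or_ne i j
    · set rest : MvPolynomial ι A := ∑ l ∈ Finset.univ.erase i, C (ξ l) * X l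
      have hrest : C (ξ i) * X i + rest = parameterForm ξ :=
        Finset.add_sum_erase _ _ (Finset.mem_univ i)
      refine ⟨N + 1, -(w * rest), ?_, ?_⟩
      · have := sub_mem (J.mul_mem_left (C (ξ i) ^ N * p) (Ideal.mem_span_singleton_self _))
          (J.mul_mem_left rest hw)
        convert this using 1
        rw [← hrest]
        ring
      · have hrestL : map (algebraMap A L) rest =
            ∑ l ∈ Finset.univ.erase i, C (algebraMap A L (ξ l)) * X l := by simp [rest]
        rw [map_neg, map_mul, hmap, hrestL, map_mul, ← mul_neg, ← C_mul_solveFor_X_self ξ hj]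
        ring
    · refine ⟨N, w * X i, ?_, by rw [map_mul, map_X, hmap, map_mul, solveFor_X_of_ne ξ hij,
        mul_assoc]⟩
      convert J.mul_mem_left (X i) hw using 1
      ring

theorem exists_pow_mul_mem_of_solveFor_eq_zero [FaithfulSMul A L] (ξ : ι → A) {j : ι}
    (hj : algebraMap A L (ξ j) ≠ 0) {u : MvPolynomial ι A} (hu : solveFor L ξ j u = 0) :
    ∃ N : ℕ, C (ξ j) ^ N * u ∈ Ideal.span {parameterForm ξ} := by
  obtain ⟨N, w, hw, hmap⟩ := exists_map_eq_pow_mul_solveFor (L := L) ξ hj u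
  rw [hu, mul_zero, map_eq_zero_iff _ (map_injective _ (FaithfulSMul.algebraMap_injective A L))]
    at hmap
  exact ⟨N, by rwa [hmap, sub_zero] at hw⟩

theorem solveFor_eq_zero_of_solveFor_eq_zero [FaithfulSMul A L] (ξ : ι → A) {i j : ι}
    (hi : algebraMap A L (ξ i) ≠ 0) (hj : algebraMap A L (ξ j) ≠ 0) {u : MvPolynomial ι A}
    (hu : solveFor L ξ i u = 0) : solveFor L ξ j u = 0 := by
  obtain ⟨N, hN⟩ := exists_pow_mul_mem_of_solveFor_eq_zero ξ hi hu
  obtain ⟨c, hc⟩ := Ideal.mem_span_singleton'.1 hN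
  have := congrArg (solveFor L ξ j) hc
  rw [map_mul, solveFor_parameterForm ξ hj, mul_zero, map_mul, map_pow, solveFor_C] at this
  exact (mul_eq_zero.1 this.symm).resolve_left (pow_ne_zero _ (C_eq_zero.not.2 hi))

end SolveFor

attribute [local instance] MvPolynomial.algebraMvPolynomial in
theorem exists_prime_elimination {S : Type*} [CommRing S] [IsDomain S]
    [UniqueFactorizationMonoid S] [IsDomain A] [Algebra S A] [Algebra.IsIntegral S A]
    {ξ : ι → A} (hξ : ξ ≠ 0) :
    ∃ F : MvPolynomial ι S, Prime F ∧ ∀ (a : ι → S) (j : ι), ∃ N : ℕ,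
      ξ j ^ N * algebraMap S A (eval a F) ∈ Ideal.span {∑ i, algebraMap S A (a i) * ξ i} := by
  classical
  have hne {j : ι} (hj : ξ j ≠ 0) : algebraMap A (FractionRing A) (ξ j) ≠ 0 :=
    (map_ne_zero_iff _ (IsFractionRing.injective A _)).2 hj
  obtain ⟨j₀, hj₀⟩ := Function.ne_iff.1 hξ
  let P := RingHom.ker (solveFor (FractionRing A) ξ j₀)
  have hP : (P.comap (algebraMap (MvPolynomial ι S) (MvPolynomial ι A))).IsPrime :=
    (RingHom.ker_isPrime _).comap _
  obtain ⟨F, hFP, hF⟩ := hP.exists_mem_prime_of_ne_bot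
    (Ideal.comap_ne_bot_of_integral_mem (parameterForm_ne_zero hξ)
      (solveFor_parameterForm ξ (hne hj₀)) (Algebra.IsIntegral.isIntegral _))
  refine ⟨F, hF, fun a j => ?_⟩
  obtain hj | hj := eq_or_ne (ξ j) 0
  · exact ⟨1, by simp [hj]⟩
  obtain ⟨N, hN⟩ := exists_pow_mul_mem_of_solveFor_eq_zero ξ (hne hj)
    (solveFor_eq_zero_of_solveFor_eq_zero ξ (hne hj₀) (hne hj) hFP)
  have := Ideal.mem_map_of_mem (eval (algebraMap S A ∘ a)) hN
  rw [Ideal.map_span, Set.image_singleton, eval_parameterForm, map_mul, map_pow, eval_C,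
    algebraMap_def, eval_map, ← eval₂_comp] at this
  exact ⟨N, this⟩

end Elimination

section FactorsThroughSection

theorem sub_aeval_mem {R σ : Type*} [CommRing R] {s : σ → MvPolynomial σ R}
    {P : Ideal (MvPolynomial σ R)} (h : ∀ i, X i - s i ∈ P) (f : MvPolynomial σ R) :
    f - aeval s f ∈ P := by
  have : Ideal.Quotient.mkₐ R P = (Ideal.Quotient.mkₐ R P).comp (aeval s) := by
    ext i
    simpa using Ideal.Quotient.eq.2 (h i)
  exact Ideal.Quotient.eq.1 (DFunLike.congr_fun this f)

theorem le_ker_eval_of_forall_X_sub_C_mem {K σ : Type*} [Field K] {y : σ → K}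
    {P : Ideal (MvPolynomial σ K)} (hP : P ≠ ⊤) (h : ∀ i, X i - C (y i) ∈ P) :
    P ≤ RingHom.ker (eval y) := fun f hf => by
  by_contra hne
  have hC : C (eval y f) ∈ P := by
    have := sub_mem hf (sub_aeval_mem h f)
    rwa [sub_sub_cancel, aeval_def, algebraMap_eq, ← Function.comp_def, ← eval₂_comp] at this
  exact hP (P.eq_top_of_isUnit_mem hC ((isUnit_iff_ne_zero.2 hne).map C))

theorem prime_map_of_eval_eq_zero {R K σ : Type*} [CommRing R] [IsDomain R] [Field K] [Algebra R K]
    [IsFractionRing R K] {F : MvPolynomial σ R} (hF : Prime F) {y : σ → R} (hy : eval y F = 0) :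
    Prime (map (algebraMap R K) F) := by
  let _ : Algebra (MvPolynomial σ R) (MvPolynomial σ K) := (map (algebraMap R K)).toAlgebra
  have : IsLocalization ((nonZeroDivisors R).map (C (σ := σ))) (MvPolynomial σ K) :=
    MvPolynomial.isLocalization _ _
  have hdisj : Disjoint ((nonZeroDivisors R).map (C (σ := σ)) : Set (MvPolynomial σ R))
      (Ideal.span {F}) := by
    rw [Set.disjoint_left]
    rintro _ ⟨r, hr, rfl⟩ hFr
    obtain ⟨c, hc⟩ := Ideal.mem_span_singleton'.1 hFr
    have := congrArg (eval y) hc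
    rw [map_mul, hy, mul_zero, eval_C] at this
    exact nonZeroDivisors.ne_zero hr this.symm
  have hprime := IsLocalization.isPrime_of_isPrime_disjoint ((nonZeroDivisors R).map (C (σ := σ)))
    (MvPolynomial σ K) (Ideal.span {F}) ((Ideal.span_singleton_prime hF.ne_zero).2 hF) hdisj
  rw [Ideal.map_span, Set.image_singleton] at hprime
  refine (Ideal.span_singleton_prime fun h => hF.ne_zero ?_).1 hprime
  exact map_injective _ (IsFractionRing.injective R K) (h.trans (map_zero _).symm)

attribute [local instance] MvPolynomial.algebraMvPolynomial in
theorem eval_eq_zero_of_prime_of_dvd_map {K E σ : Type*} [Field K] [Field E] [Algebra K E]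
    [Algebra.IsAlgebraic K E] [Finite σ] {P : MvPolynomial σ K} (hP : Prime P) {y : σ → K}
    (hy : eval y P = 0) {g : MvPolynomial σ E} (hg : Prime g) (hgP : g ∣ map (algebraMap K E) P) :
    eval (algebraMap K E ∘ y) g = 0 := by
  have hinj : Function.Injective (algebraMap (MvPolynomial σ K) (MvPolynomial σ E)) :=
    map_injective _ (algebraMap K E).injective
  have : (Ideal.span {P}).IsPrime := (Ideal.span_singleton_prime hP.ne_zero).2 hP
  have : (Ideal.span {g}).IsPrime := (Ideal.span_singleton_prime hg.ne_zero).2 hg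
  have hcomap := eq_comap_of_le_comap_of_mem_minimalPrimes_span_singleton hinj
    (fun f => Algebra.IsIntegral.isIntegral f) (b := g) (q := Ideal.span {g})
    (by rw [Ideal.minimalPrimes_eq_subsingleton_self]; rfl) (p := Ideal.span {P})
    (by rw [Ne, Ideal.span_singleton_eq_bot]; exact hP.ne_zero)
    ((Ideal.span_singleton_le_iff_mem _).2 (Ideal.mem_span_singleton.2 hgP))
  have hker : (RingHom.ker (eval y)).IsPrime := RingHom.ker_isPrime _
  obtain ⟨Q, hgQ, hQ, hQy⟩ := Ideal.exists_ideal_over_prime_of_isIntegral (RingHom.ker (eval y))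
    (Ideal.span {g}) (by rwa [← hcomap, Ideal.span_singleton_le_iff_mem])
  refine le_ker_eval_of_forall_X_sub_C_mem hQ.ne_top (fun i => ?_)
    (hgQ (Ideal.mem_span_singleton_self g))
  have : X i - C (y i) ∈ Q.comap (algebraMap (MvPolynomial σ K) (MvPolynomial σ E)) := by
    rw [hQy, RingHom.mem_ker, map_sub, eval_X, eval_C, sub_self]
  rwa [Ideal.mem_comap, algebraMap_def, map_sub, map_X, map_C] at this

attribute [local instance] FractionRing.liftAlgebra in
theorem eval_eq_zero_of_mul_eq_map {R E σ : Type*} [CommRing R] [IsDomain R] [Field E]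
    [Algebra R E] [FaithfulSMul R E] [Algebra.IsAlgebraic R E] [Finite σ] {F : MvPolynomial σ R}
    (hF : Prime F) {y : σ → R} (hy : eval y F = 0) {G H : MvPolynomial σ E}
    (hGH : G * H = map (algebraMap R E) F) (hG : ¬ IsUnit G) :
    eval (algebraMap R E ∘ y) G = 0 := by
  let K := FractionRing R
  have : Algebra.IsAlgebraic K E := isAlgebraic_fractionRing_liftAlgebra R E
  have hG₀ : G ≠ 0 := by
    rintro rfl
    rw [zero_mul] at hGH
    exact hF.ne_zero (map_injective _ (FaithfulSMul.algebraMap_injective R E)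
      (hGH.symm.trans (map_zero _).symm))
  obtain ⟨g, hg, c, rfl⟩ := WfDvdMonoid.exists_irreducible_factor hG hG₀
  have hgF : g ∣ map (algebraMap K E) (map (algebraMap R K) F) := by
    rw [map_map, ← IsScalarTower.algebraMap_eq, ← hGH, mul_assoc]
    exact dvd_mul_right g _
  have hyK : eval (algebraMap R K ∘ y) (map (algebraMap R K) F) = 0 := by
    rw [eval_map, ← eval₂_comp, hy, map_zero]
  have hgy := eval_eq_zero_of_prime_of_dvd_map (prime_map_of_eval_eq_zero hF hy) hyK hg.prime hgF
  rw [← Function.comp_assoc, ← RingHom.coe_comp, ← IsScalarTower.algebraMap_eq] at hgy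
  rw [map_mul, hgy, zero_mul]

section OfCoeffs

variable {R S σ : Type*} [CommRing R] [CommRing S] {s : Finset (σ →₀ ℕ)}

/-- The polynomial with exponents in `s` and the given coefficients. -/
noncomputable def ofCoeffs (z : s → R) : MvPolynomial σ R := ∑ α, monomial α.1 (z α)

theorem coeff_ofCoeffs (z : s → R) (α : s) : coeff α.1 (ofCoeffs z) = z α := by
  classical
  simp [ofCoeffs, coeff_sum, coeff_monomial]

theorem map_ofCoeffs (f : R →+* S) (z : s → R) : map f (ofCoeffs z) = ofCoeffs (f ∘ z) := by
  simp [ofCoeffs, map_monomial]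

theorem ofCoeffs_coeff {G : MvPolynomial σ R} (hG : G.support ⊆ s) :
    ofCoeffs (fun α : s => coeff α.1 G) = G := by
  rw [ofCoeffs, Finset.sum_coe_sort s fun α => monomial α (coeff α G)]
  conv_rhs => rw [G.as_sum]
  exact (Finset.sum_subset hG fun α _ hα => by
    rw [notMem_support_iff.1 hα, monomial_zero]).symm

end OfCoeffs

/-- Equations in unknowns `z` for a factorization `F = G * H` whose factor `G` takes the value `1`
at `y` and is not constant: `z (0, ·)` and `z (1, ·)` are the coefficients of `G` and `H`, and the
last equation, with multipliers `z (2, ·)`, says that `G` has a nonconstant coefficient. -/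
noncomputable def factorSystem {R σ : Type*} [CommRing R] [DecidableEq σ] (F : MvPolynomial σ R)
    (y : σ → R) (s : Finset (σ →₀ ℕ)) : Set (MvPolynomial (Fin 3 × s) R) :=
  Set.range (fun β => coeff β (ofCoeffs (fun α : s => X (0, α)) * ofCoeffs (fun α => X (1, α)) -
    map C F)) ∪ {eval (C ∘ y) (ofCoeffs fun α : s => X (0, α)) - 1,
    ∑ α : s, (if α.1 = 0 then 0 else X (2, α) * X (0, α)) - 1}

theorem forall_mem_factorSystem_eval₂_eq_zero_iff {R E σ : Type*} [CommRing R] [CommRing E]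
    [DecidableEq σ] {F : MvPolynomial σ R} {y : σ → R} {s : Finset (σ →₀ ℕ)} {ρ : R →+* E}
    {z : Fin 3 × s → E} :
    (∀ p ∈ factorSystem F y s, eval₂ ρ z p = 0) ↔
      ofCoeffs (fun α => z (0, α)) * ofCoeffs (fun α => z (1, α)) = map ρ F ∧
      eval (ρ ∘ y) (ofCoeffs fun α => z (0, α)) = 1 ∧
      ∑ α : s, (if α.1 = 0 then 0 else z (2, α) * z (0, α)) = 1 := by
  have hmap (i : Fin 3) : map (eval₂Hom ρ z) (ofCoeffs fun α : s => X (i, α)) =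
      ofCoeffs fun α => z (i, α) := by
    simp [map_ofCoeffs, Function.comp_def]
  have hC : (eval₂Hom ρ z).comp C = ρ := RingHom.ext fun r => eval₂_C ρ z r
  have hprod : (∀ β, eval₂Hom ρ z (coeff β (ofCoeffs (fun α : s => X (0, α)) *
      ofCoeffs (fun α => X (1, α)) - map C F)) = 0) ↔
      ofCoeffs (fun α => z (0, α)) * ofCoeffs (fun α => z (1, α)) = map ρ F := by
    simp only [← coeff_map, map_sub, map_mul, hmap, map_map, hC]
    rw [← sub_eq_zero, MvPolynomial.ext_iff]
    rfl
  have hval : eval₂Hom ρ z (eval (C ∘ y) (ofCoeffs fun α : s => X (0, α))) =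
      eval (ρ ∘ y) (ofCoeffs fun α => z (0, α)) := by
    rw [eval₂_comp (eval₂Hom ρ z), ← eval_map, hmap, ← Function.comp_assoc, ← RingHom.coe_comp, hC]
  have hsum : eval₂Hom ρ z (∑ α : s, if α.1 = 0 then 0 else X (2, α) * X (0, α)) =
      ∑ α : s, if α.1 = 0 then 0 else z (2, α) * z (0, α) := by
    rw [map_sum]
    refine Finset.sum_congr rfl fun α _ => ?_
    split_ifs <;> simp
  rw [← hprod, ← sub_eq_zero (b := (1 : E)), ← hval, ← sub_eq_zero (b := (1 : E)), ← hsum,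
    ← map_one (eval₂Hom ρ z), ← map_sub, ← map_sub]
  simp only [factorSystem, Set.mem_union, Set.mem_range, Set.mem_insert_iff, Set.mem_singleton_iff,
    or_imp, forall_and, forall_exists_index, forall_apply_eq_imp_iff, forall_eq, coe_eval₂Hom]

theorem isUnit_iff_forall_coeff_eq_zero {K σ : Type*} [Field K] {G : MvPolynomial σ K}
    (hG : G ≠ 0) : IsUnit G ↔ ∀ α ≠ 0, coeff α G = 0 := by
  classical
  rw [isUnit_iff_eq_C_of_isReduced]
  constructor
  · rintro ⟨r, -, rfl⟩ α hα
    rw [coeff_C, if_neg hα.symm]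
  · intro h
    have hGC : G = C (coeff 0 G) := by
      ext α
      rw [coeff_C]
      split_ifs with hα
      · rw [hα]
      · exact h α (Ne.symm hα)
    refine ⟨coeff 0 G, isUnit_iff_ne_zero.2 fun h₀ => hG ?_, hGC⟩
    rw [hGC, h₀, C_0]

section Specialization

universe u

variable {K ι σ : Type u} [Field K] [Finite σ] {F : MvPolynomial σ (MvPolynomial ι K)}

theorem exists_mem_factorSystem_eval₂_ne_zero [DecidableEq σ] (hF : Prime F)
    {y : σ → MvPolynomial ι K} (hy : eval y F = 0) (s : Finset (σ →₀ ℕ)) (E : Type u) [Field E]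
    [Algebra (MvPolynomial ι K) E] [FaithfulSMul (MvPolynomial ι K) E]
    [Algebra.IsAlgebraic (MvPolynomial ι K) E] (z : Fin 3 × s → E) :
    ∃ p ∈ factorSystem F y s, eval₂ (algebraMap (MvPolynomial ι K) E) z p ≠ 0 := by
  by_contra! h
  obtain ⟨hGH, hG, hsum⟩ := forall_mem_factorSystem_eval₂_eq_zero_iff.1 h
  have hG₀ : ofCoeffs (fun α => z (0, α)) ≠ 0 := fun h₀ => by simp [h₀] at hG
  by_cases hunit : IsUnit (ofCoeffs fun α => z (0, α))
  · rw [isUnit_iff_forall_coeff_eq_zero hG₀] at hunit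
    refine zero_ne_one ((Finset.sum_eq_zero fun α _ => ?_).symm.trans hsum)
    split_ifs with hα
    · rfl
    · rw [← coeff_ofCoeffs (fun α => z (0, α)), hunit _ hα, mul_zero]
  · exact zero_ne_one ((eval_eq_zero_of_mul_eq_map hF hy hGH hunit).symm.trans hG)

theorem isUnit_of_mul_eq_map_of_eval_eq_one {R σ K : Type*} [CommRing R] [Field K] [DecidableEq σ]
    {F : MvPolynomial σ R} {y : σ → R} {s : Finset (σ →₀ ℕ)} {ρ : R →+* K}
    (hρ : ∀ z : Fin 3 × s → K, ∃ p ∈ factorSystem F y s, eval₂ ρ z p ≠ 0)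
    {G H : MvPolynomial σ K} (hGs : G.support ⊆ s) (hHs : H.support ⊆ s)
    (hGH : G * H = map ρ F) (hG : eval (ρ ∘ y) G = 1) : IsUnit G := by
  have hG₀ : G ≠ 0 := by
    rintro rfl
    simp at hG
  by_contra hunit
  rw [isUnit_iff_forall_coeff_eq_zero hG₀] at hunit
  push Not at hunit
  obtain ⟨α, hα, hαG⟩ := hunit
  let z : Fin 3 × s → K := fun p =>
    ![coeff p.2 G, coeff p.2 H, if p.2 = α then (coeff α G)⁻¹ else 0] p.1
  obtain ⟨p, hp, hpz⟩ := hρ z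
  refine hpz (forall_mem_factorSystem_eval₂_eq_zero_iff.2 ⟨?_, ?_, ?_⟩ p hp)
  · exact (congrArg₂ (· * ·) (ofCoeffs_coeff hGs) (ofCoeffs_coeff hHs)).trans hGH
  · exact (congrArg _ (ofCoeffs_coeff hGs)).trans hG
  · rw [Finset.sum_eq_single ⟨α, hGs (mem_support_iff.2 hαG)⟩]
    · simp [z, hα, hαG]
    · intro β _ hβ
      simp [z, Subtype.ext_iff.not.1 hβ]
    · simp

theorem exists_ne_zero_forall_isUnit_of_mul_eq_map (hF : Prime F) {y : σ → MvPolynomial ι K}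
    (hy : eval y F = 0) :
    ∃ g : MvPolynomial ι K, g ≠ 0 ∧ ∀ a, eval a g ≠ 0 → map (eval a) F ≠ 0 ∧
      ∀ G H : MvPolynomial σ K, G * H = map (eval a) F → eval (eval a ∘ y) G ≠ 0 → IsUnit G := by
  classical
  let s := (Finsupp.finite_of_degree_le (σ := σ) F.totalDegree).toFinset
  have hs {G : MvPolynomial σ K} (hG : G.totalDegree ≤ F.totalDegree) : G.support ⊆ s :=
    fun α hα => (Set.Finite.mem_toFinset _).2 ((le_totalDegree hα).trans hG)
  obtain ⟨g, hg, hspec⟩ := exists_ne_zero_forall_specialization (factorSystem F y s)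
    (exists_mem_factorSystem_eval₂_ne_zero hF hy s)
  obtain ⟨β, hβ⟩ := ne_zero_iff.1 hF.ne_zero
  refine ⟨coeff β F * g, mul_ne_zero hβ hg, fun a ha => ?_⟩
  rw [map_mul] at ha
  have hFa : map (eval a) F ≠ 0 :=
    ne_zero_iff.2 ⟨β, by rw [coeff_map]; exact left_ne_zero_of_mul ha⟩
  refine ⟨hFa, fun G H hGH hG => ?_⟩
  set c := eval (eval a ∘ y) G
  have hGH' : (C c⁻¹ * G) * (C c * H) = map (eval a) F := by
    rw [mul_mul_mul_comm, ← C_mul, inv_mul_cancel₀ hG, C_1, one_mul, hGH]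
  have hne := mul_ne_zero_iff.1 (hGH'.trans_ne hFa)
  have hdeg : (C c⁻¹ * G).totalDegree + (C c * H).totalDegree ≤ F.totalDegree := by
    rw [← totalDegree_mul_of_isDomain hne.1 hne.2, hGH']
    exact Finset.sup_mono (support_map_subset _ _)
  refine isUnit_of_mul_isUnit_right (x := C c⁻¹) ?_
  exact isUnit_of_mul_eq_map_of_eval_eq_one (hspec a (right_ne_zero_of_mul ha)) (hs (by lia))
    (hs (by lia)) hGH' (by rw [map_mul, eval_C, inv_mul_cancel₀ hG])

end Specialization

end FactorsThroughSection

section VanishingForms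

variable {K σ : Type*} [Field K] [Fintype σ]

/-- The coefficient vectors of the linear forms vanishing at `v`, that is, of the hyperplanes
through the point represented by `v`. -/
def vanishingForms (v : σ → K) : Submodule K (σ → K) :=
  LinearMap.ker (Fintype.linearCombination K v)

theorem mem_vanishingForms {v w : σ → K} : w ∈ vanishingForms v ↔ w ⬝ᵥ v = 0 := Iff.rfl

theorem exists_linearForm_sum_smul_eq {ι : Type*} [Fintype ι] {v : σ → K} {ξ : ι → σ → K}
    (hξ : Submodule.span K (Set.range ξ) = vanishingForms v)
    {h : MvPolynomial σ K} (hh : h.IsHomogeneous 1) (hv : eval v h = 0) :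
    ∃ a : ι → K, linearForm (∑ j, a j • ξ j) = h := by
  have hlin : linearForm (gradient v h) = h := linearForm_gradient_of_isHomogeneous hh v
  have hmem : gradient v h ∈ vanishingForms v := by
    rw [mem_vanishingForms, ← eval_linearForm, hlin, hv]
  rw [← hξ, Submodule.mem_span_range_iff_exists_fun] at hmem
  obtain ⟨a, ha⟩ := hmem
  exact ⟨a, by rw [ha, hlin]⟩

theorem card_le_finrank_vanishingForms_add_one (v : σ → K) :
    Fintype.card σ ≤ Module.finrank K (vanishingForms v) + 1 := by
  obtain rfl | hv := eq_or_ne v 0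
  · have : vanishingForms (0 : σ → K) = ⊤ := eq_top_iff.2 fun w _ => dotProduct_zero w
    rw [this, finrank_top, Module.finrank_fintype_fun_eq_card]
    exact Nat.le_succ _
  · classical
    obtain ⟨i, hi⟩ := Function.ne_iff.1 hv
    have hne : Fintype.linearCombination K v ≠ 0 := fun h => hi <| by
      simpa using LinearMap.congr_fun h (Pi.single i 1)
    rw [vanishingForms, Module.Dual.finrank_ker_add_one_of_ne_zero hne,
      Module.finrank_fintype_fun_eq_card]

theorem prime_linearForm {w : σ → K} (hw : w ≠ 0) : Prime (linearForm w) := by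
  have hne : linearForm w ≠ 0 := (map_ne_zero_iff _ linearForm_injective).2 hw
  obtain ⟨i, hi⟩ := Function.ne_iff.1 hw
  refine (irreducible_of_totalDegree_eq_one ((isHomogeneous_linearForm w).totalDegree hne)
    fun c hc => ?_).prime
  have hcoeff : (linearForm w).coeff (Finsupp.single i 1) = w i := by
    classical
    simp [linearForm_apply, coeff_sum, coeff_X, Finsupp.single_left_inj]
  exact isUnit_of_dvd_unit (hcoeff ▸ hc (Finsupp.single i 1)) (isUnit_iff_ne_zero.2 hi)

theorem linearForm_dvd_linearForm_iff {w w' : σ → K} :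
    linearForm w ∣ linearForm w' ↔ ∃ c : K, c • w = w' := by
  refine ⟨fun ⟨g, hg⟩ => ⟨eval 0 g, ?_⟩, ?_⟩
  · have := congrArg (gradient 0) hg
    rw [gradient_mul, eval_linearForm, gradient_linearForm, gradient_linearForm, dotProduct_zero,
      zero_smul, zero_add] at this
    exact this.symm
  · rintro ⟨c, rfl⟩
    rw [map_smul, smul_eq_C_mul]
    exact dvd_mul_left _ _

end VanishingForms

section ComponentsThroughPoint

theorem exists_linearForm_notMem_of_mem_minimalPrimes {K τ A : Type*} [Field K] [Fintype τ]
    [CommRing A] [IsDomain A] [IsNoetherianRing A] {φ : MvPolynomial τ K →+* A}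
    (hinj : Function.Injective φ) (hintegral : φ.IsIntegral) (hτ : 2 < Fintype.card τ) (y : τ → K)
    {b : A} {q : Ideal A} (hq : q ∈ (Ideal.span {b}).minimalPrimes) :
    ∃ w ∈ vanishingForms y, φ (linearForm w) ∉ q := by
  by_contra! h
  have hrank : 1 < Module.finrank K (vanishingForms y) := by
    have := card_le_finrank_vanishingForms_add_one y
    lia
  have := Module.nontrivial_of_finrank_pos (zero_lt_one.trans hrank)
  obtain ⟨w, hw⟩ := exists_ne (0 : vanishingForms y)
  obtain ⟨w', hw'⟩ := exists_linearIndependent_pair_of_one_lt_finrank hrank hw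
  have hprime : Prime (linearForm (w : τ → K)) := prime_linearForm (by simpa using hw)
  have : (Ideal.span {linearForm (w : τ → K)}).IsPrime :=
    (Ideal.span_singleton_prime hprime.ne_zero).2 hprime
  have heq := eq_comap_of_le_comap_of_mem_minimalPrimes_span_singleton hinj hintegral hq
    (Ideal.span_singleton_eq_bot.not.2 hprime.ne_zero)
    ((Ideal.span_singleton_le_iff_mem _).2 (h w w.2))
  have hmem : linearForm (w' : τ → K) ∈ Ideal.span {linearForm (w : τ → K)} := heq ▸ h w' w'.2
  obtain ⟨c, hc⟩ := linearForm_dvd_linearForm_iff.1 (Ideal.mem_span_singleton.1 hmem)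
  exact (LinearIndependent.pair_iff' hw).1 hw' c (Subtype.ext hc)

theorem map_eval_commAlgEquiv {K ι τ : Type*} [Field K] (a : ι → K)
    (F : MvPolynomial ι (MvPolynomial τ K)) :
    map (eval a) (commAlgEquiv K ι τ F) = eval (C ∘ a) F := by
  induction F using MvPolynomial.induction_on with
  | C c =>
    have hid : (eval a).comp C = RingHom.id K := RingHom.ext fun _ => eval_C _
    rw [commAlgEquiv_C, map_map, eval_C, hid, map_id]
  | add p q hp hq => rw [map_add, map_add, hp, hq, map_add]
  | mul_X p i hp => rw [map_mul, map_mul, hp, commAlgEquiv_X, map_C, eval_X, map_mul, eval_X]; rfl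

theorem eval_eval_C {K ι τ : Type*} [Field K] (a : ι → K) (y : τ → K)
    (F : MvPolynomial τ (MvPolynomial ι K)) :
    eval a (eval (C ∘ y) F) = eval y (map (eval a) F) := by
  rw [eval_map, eval₂_comp]
  congr 1
  ext i
  simp

universe u

variable {K ι τ : Type u} [Field K] [Fintype ι] [Fintype τ] {A : Type*} [CommRing A] [IsDomain A]
  [IsNoetherianRing A] [Algebra (MvPolynomial τ K) A] [FaithfulSMul (MvPolynomial τ K) A]
  [Algebra.IsIntegral (MvPolynomial τ K) A] {y : τ → K} {ξ : ι → A}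

theorem exists_prime_forall_eval_mem_minimalPrimes (hτ : 2 < Fintype.card τ)
    (hspan : ∀ w ∈ vanishingForms y,
      algebraMap (MvPolynomial τ K) A (linearForm w) ∈ Ideal.span (Set.range ξ)) :
    ∃ F : MvPolynomial ι (MvPolynomial τ K), Prime F ∧ ∀ a : ι → K,
      ∀ q ∈ (Ideal.span {∑ i, algebraMap (MvPolynomial τ K) A (C (a i)) * ξ i}).minimalPrimes,
        eval (C ∘ a) F ∈ q.comap (algebraMap (MvPolynomial τ K) A) := by
  have hbase {b : A} {q : Ideal A} (hq : q ∈ (Ideal.span {b}).minimalPrimes) : ∃ j, ξ j ∉ q := by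
    obtain ⟨w, hw, hwq⟩ := exists_linearForm_notMem_of_mem_minimalPrimes
      (FaithfulSMul.algebraMap_injective (MvPolynomial τ K) A) Algebra.IsIntegral.isIntegral hτ y hq
    by_contra! h
    exact hwq (Ideal.span_le.2 (Set.range_subset_iff.2 h) (hspan w hw))
  obtain ⟨j₀, hj₀⟩ : ∃ j, ξ j ≠ 0 := by
    obtain ⟨q, hq, -⟩ :=
      Ideal.exists_minimalPrimes_le (I := Ideal.span {(0 : A)}) (J := ⊥) (by simp)
    obtain ⟨j, hj⟩ := hbase hq
    exact ⟨j, fun h => hj (h ▸ zero_mem q)⟩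
  obtain ⟨F, hF, hFξ⟩ := exists_prime_elimination (S := MvPolynomial τ K) (ξ := ξ)
    (Function.ne_iff.2 ⟨j₀, hj₀⟩)
  refine ⟨F, hF, fun a q hq => ?_⟩
  have hprime : q.IsPrime := hq.1.1
  obtain ⟨j, hj⟩ := hbase hq
  obtain ⟨N, hN⟩ := hFξ (C ∘ a) j
  exact (hprime.mem_or_mem (hq.1.2 hN)).resolve_left fun h => hj (hprime.mem_of_pow_mem _ h)

theorem exists_ne_zero_forall_comap_le_ker_eval [Infinite K] (hτ : 2 < Fintype.card τ)
    (hspan : ∀ w ∈ vanishingForms y,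
      algebraMap (MvPolynomial τ K) A (linearForm w) ∈ Ideal.span (Set.range ξ))
    {ψ : A →+* K} (hψ : ψ.comp (algebraMap (MvPolynomial τ K) A) = eval y) (hξ : ∀ j, ψ (ξ j) = 0) :
    ∃ g : MvPolynomial ι K, g ≠ 0 ∧ ∀ a, eval a g ≠ 0 →
      ∀ q ∈ (Ideal.span {∑ i, algebraMap (MvPolynomial τ K) A (C (a i)) * ξ i}).minimalPrimes,
        q.comap (algebraMap (MvPolynomial τ K) A) ≤ RingHom.ker (eval y) := by
  obtain ⟨F, hF, hFmem⟩ := exists_prime_forall_eval_mem_minimalPrimes hτ hspan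
  have hFy : eval (C ∘ y) (commAlgEquiv K ι τ F) = 0 := by
    refine MvPolynomial.funext fun a => ?_
    have hle : Ideal.span {∑ i, algebraMap (MvPolynomial τ K) A (C (a i)) * ξ i} ≤
        RingHom.ker ψ := by
      rw [Ideal.span_singleton_le_iff_mem]
      exact sum_mem fun i _ => Ideal.mul_mem_left _ _ (hξ i)
    have := RingHom.ker_isPrime ψ
    obtain ⟨q, hq, hqψ⟩ := Ideal.exists_minimalPrimes_le hle
    rw [eval_eval_C, map_eval_commAlgEquiv, ← hψ, map_zero]
    exact hqψ (hFmem a q hq)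
  obtain ⟨g, hg, hgF⟩ := exists_ne_zero_forall_isUnit_of_mul_eq_map
    ((MulEquiv.prime_iff (commAlgEquiv K ι τ)).2 hF) hFy
  refine ⟨g, hg, fun a ha q hq => ?_⟩
  obtain ⟨hne, hunit⟩ := hgF a ha
  rw [map_eval_commAlgEquiv] at hne hunit
  have hsection : eval a ∘ C ∘ y = y := funext fun i => eval_C _
  have hprime : (q.comap (algebraMap (MvPolynomial τ K) A)).IsPrime := hq.1.1.comap _
  obtain ⟨G, hGq, hG⟩ := hprime.exists_mem_prime_of_ne_bot fun h =>
    hne (h ▸ hFmem a q hq : eval (C ∘ a) F ∈ (⊥ : Ideal (MvPolynomial τ K)))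
  have : (Ideal.span {G}).IsPrime := (Ideal.span_singleton_prime hG.ne_zero).2 hG
  have hcomap : Ideal.span {G} = q.comap (algebraMap (MvPolynomial τ K) A) :=
    eq_comap_of_le_comap_of_mem_minimalPrimes_span_singleton
      (FaithfulSMul.algebraMap_injective _ _) Algebra.IsIntegral.isIntegral hq
      (Ideal.span_singleton_eq_bot.not.2 hG.ne_zero) ((Ideal.span_singleton_le_iff_mem _).2 hGq)
  obtain ⟨H, hGH⟩ := Ideal.mem_span_singleton.1 (hcomap ▸ hFmem a q hq)
  rw [← hcomap, Ideal.span_singleton_le_iff_mem]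
  by_contra hGy
  exact hG.not_isUnit (hunit G H hGH.symm (by rwa [hsection]))

end ComponentsThroughPoint

section FibresOfNormalization

variable {K σ τ : Type*} [Field K]

/-- Evaluation at `v` on the coordinate ring of an ideal vanishing at `v`. -/
noncomputable def evalQuotient {I : Ideal (MvPolynomial σ K)} {v : σ → K}
    (hv : I ≤ RingHom.ker (eval v)) : (MvPolynomial σ K ⧸ I) →+* K :=
  Ideal.Quotient.lift I (eval v) fun _ hf => RingHom.mem_ker.1 (hv hf)

theorem evalQuotient_mk {I : Ideal (MvPolynomial σ K)} {v : σ → K}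
    (hv : I ≤ RingHom.ker (eval v)) (f : MvPolynomial σ K) :
    evalQuotient hv (Ideal.Quotient.mk I f) = eval v f :=
  Ideal.Quotient.lift_mk _ _ _

theorem evalQuotient_comp_normalizationMap {I : Ideal (MvPolynomial σ K)} {v : σ → K}
    (hv : I ≤ RingHom.ker (eval v)) (y : τ → MvPolynomial σ K) :
    (evalQuotient hv).comp (normalizationMap I y).toRingHom = eval fun i => eval v (y i) := by
  refine ringHom_ext (fun r => ?_) fun i => ?_
  · rw [RingHom.comp_apply, AlgHom.toRingHom_eq_coe, RingHom.coe_coe, ← algebraMap_eq,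
      AlgHom.commutes, algebraMap_eq, eval_C]
    exact (evalQuotient_mk hv (C r)).trans (eval_C r)
  · rw [RingHom.comp_apply, AlgHom.toRingHom_eq_coe, RingHom.coe_coe, normalizationMap_X,
      evalQuotient_mk, eval_X]

theorem IsLinearNormalization.finite_fibre [Finite σ] {I : Ideal (MvPolynomial σ K)}
    {y : τ → MvPolynomial σ K} (h : IsLinearNormalization I y) (w : τ → K) :
    {v : σ → K | I ≤ RingHom.ker (eval v) ∧ ∀ i, eval v (y i) = w i}.Finite := by
  have hcoord (l : σ) : ∃ p : Polynomial K, p ≠ 0 ∧ ∀ v : σ → K, I ≤ RingHom.ker (eval v) →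
      (∀ i, eval v (y i) = w i) → p.IsRoot (v l) := by
    obtain ⟨p, hp, hroot⟩ := h.isIntegral (Ideal.Quotient.mk I (X l))
    refine ⟨p.map (eval w), (hp.map _).ne_zero, fun v hv hvw => ?_⟩
    have := congrArg (evalQuotient hv) hroot
    rwa [Polynomial.hom_eval₂, evalQuotient_comp_normalizationMap, funext hvw, evalQuotient_mk,
      eval_X, map_zero, ← Polynomial.eval_map] at this
  choose p hp hroot using hcoord
  exact (Set.Finite.pi' fun l => Polynomial.finite_setOfPred_isRoot (hp l)).subset
    fun v hv l => hroot l v hv.1 hv.2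

theorem IsLinearNormalization.eval_ne_zero [Infinite K] [Finite σ] {I : Ideal (MvPolynomial σ K)}
    {y : τ → MvPolynomial σ K} (h : IsLinearNormalization I y) (hI : IsHomogeneousIdeal I)
    {v : σ → K} (hv₀ : v ≠ 0) (hv : I ≤ RingHom.ker (eval v)) : (fun i => eval v (y i)) ≠ 0 := by
  intro hy
  refine Set.infinite_of_injective_forall_mem (f := fun c : K => c • v) (smul_left_injective K hv₀)
    (fun c => ?_) (h.finite_fibre 0)
  refine ⟨le_ker_eval_smul hI hv c, fun i => ?_⟩
  have hyi : eval v (y i) = 0 := congrFun hy i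
  rw [eval_smul_of_isHomogeneous (h.isHomogeneous i), hyi, mul_zero]
  rfl

theorem exists_le_ker_eval [IsAlgClosed K] [Finite σ] {P : Ideal (MvPolynomial σ K)}
    (hP : P ≠ ⊤) : ∃ v : σ → K, P ≤ RingHom.ker (eval v) := by
  obtain ⟨M, hM, hPM⟩ := Ideal.exists_le_maximal P hP
  obtain ⟨v, rfl⟩ := (isMaximal_iff_eq_vanishingIdeal_singleton (K := K)).1 hM
  exact ⟨v, fun f hf => by simpa using hPM hf⟩

theorem IsLinearNormalization.exists_point_over [IsAlgClosed K] [Finite σ]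
    {I : Ideal (MvPolynomial σ K)} {y : τ → MvPolynomial σ K} (h : IsLinearNormalization I y)
    {p : Ideal (MvPolynomial σ K)} (hp : I ≤ p) {w : τ → K}
    (hpw : p.comap (aeval y : _ →ₐ[K] MvPolynomial σ K).toRingHom ≤ RingHom.ker (eval w)) :
    ∃ v, p ≤ RingHom.ker (eval v) ∧ ∀ i, eval v (y i) = w i := by
  have := RingHom.ker_isPrime (eval w)
  obtain ⟨P, hP, hpP, hPw⟩ := h.exists_prime_over hp _ hpw
  obtain ⟨v, hv⟩ := exists_le_ker_eval hP.ne_top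
  refine ⟨v, hpP.trans hv, fun i => ?_⟩
  have hmem : X i - C (w i) ∈ P.comap (aeval y : _ →ₐ[K] MvPolynomial σ K).toRingHom := by
    rw [hPw, RingHom.mem_ker]
    simp
  have := hv hmem
  simpa [sub_eq_zero] using this

end FibresOfNormalization

section HyperplanesThroughPoint

variable {K σ : Type*} [Field K]

section

attribute [local instance] MvPolynomial.gradedAlgebra

theorem isHomogeneousIdeal_radical {I : Ideal (MvPolynomial σ K)} (hI : IsHomogeneousIdeal I) :
    IsHomogeneousIdeal I.radical :=
  hI.radical

theorem isHomogeneousIdeal_sup_span_singleton {I : Ideal (MvPolynomial σ K)}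
    (hI : IsHomogeneousIdeal I) {h : MvPolynomial σ K} {N : ℕ} (hh : h.IsHomogeneous N) :
    IsHomogeneousIdeal (I ⊔ Ideal.span {h}) :=
  hI.sup (Ideal.homogeneous_span _ _ fun _ hx => ⟨N, Set.mem_singleton_iff.1 hx ▸ hh⟩)

end

theorem isHomogeneousIdeal_of_mem_minimalPrimes {J p : Ideal (MvPolynomial σ K)}
    (hJ : IsHomogeneousIdeal J) (hp : p ∈ J.minimalPrimes) : IsHomogeneousIdeal p := by
  have := hp.1.1
  obtain ⟨Q, hQ, hQhom, hQp, hQmax, -⟩ := exists_homogeneous_prime_le p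
  exact (hQp.antisymm (hp.2 ⟨hQ, hQmax J hJ hp.1.2⟩ hQp)) ▸ hQhom

variable [Fintype σ]

theorem exists_eq_smul_of_vanishingForms_le {v x : σ → K} (hv : v ≠ 0)
    (hx : vanishingForms v ≤ vanishingForms x) : ∃ c : K, x = c • v := by
  classical
  obtain ⟨l, hl⟩ := Function.ne_iff.1 hv
  refine ⟨x l / v l, funext fun j => ?_⟩
  have hmem : v l • Pi.single j 1 - v j • Pi.single l 1 ∈ vanishingForms v := by
    simp [mem_vanishingForms, sub_dotProduct, smul_dotProduct, mul_comm]
  have := mem_vanishingForms.1 (hx hmem)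
  simp only [sub_dotProduct, smul_dotProduct, single_dotProduct, one_mul, smul_eq_mul,
    Pi.smul_apply] at this ⊢
  rw [div_mul_eq_mul_div, eq_div_iff hl]
  linear_combination this

theorem exists_eq_smul_of_forall_dotProduct_eq_zero {ι : Type*} {ξ : ι → σ → K} {v x : σ → K}
    (hv : v ≠ 0) (hξ : Submodule.span K (Set.range ξ) = vanishingForms v)
    (hx : ∀ j, ξ j ⬝ᵥ x = 0) : ∃ c : K, x = c • v := by
  have hle : Submodule.span K (Set.range ξ) ≤ vanishingForms x :=
    Submodule.span_le.2 (Set.range_subset_iff.2 fun j => mem_vanishingForms.2 (hx j))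
  rw [hξ] at hle
  exact exists_eq_smul_of_vanishingForms_le hv hle

theorem linearForm_mem_span_range {ι : Type*} {ξ : ι → σ → K} {w : σ → K}
    (hw : w ∈ Submodule.span K (Set.range ξ)) :
    linearForm w ∈ Ideal.span (Set.range fun j => linearForm (ξ j)) := by
  let J := Ideal.span (Set.range fun j => linearForm (ξ j))
  have hJ : Set.range ξ ⊆ (J.restrictScalars K).comap linearForm :=
    Set.range_subset_iff.2 fun j => Ideal.subset_span ⟨j, rfl⟩
  exact Submodule.span_le.2 hJ hw

theorem exists_ne_zero_forall_eq_zero_of_dotProduct_eq_zero {ι : Type*} [Fintype ι]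
    {T : Set (ι → K)} (hT : T.Finite) :
    ∃ g : MvPolynomial ι K, g ≠ 0 ∧ ∀ a, eval a g ≠ 0 → ∀ u ∈ T, a ⬝ᵥ u = 0 → u = 0 := by
  classical
  refine ⟨∏ u ∈ hT.toFinset.erase 0, linearForm u,
    Finset.prod_ne_zero_iff.2 fun u hu => (prime_linearForm (Finset.ne_of_mem_erase hu)).ne_zero,
    fun a ha u hu hau => ?_⟩
  by_contra hne
  rw [map_prod, Finset.prod_ne_zero_iff] at ha
  refine ha u (Finset.mem_erase.2 ⟨hne, hT.mem_toFinset.2 hu⟩) ?_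
  rw [eval_linearForm, dotProduct_comm, hau]

end HyperplanesThroughPoint

section LinearSections

universe u

variable {K ι σ τ : Type u} [Field K] [Fintype σ] [Fintype τ]
  {I : Ideal (MvPolynomial σ K)} {y : τ → MvPolynomial σ K} {v : σ → K}
  {ξ : ι → σ → K}

theorem normalizationMap_linearForm_mem_span (hy : ∀ i, (y i).IsHomogeneous 1)
    (hξ : vanishingForms v ≤ Submodule.span K (Set.range ξ)) {w : τ → K}
    (hw : w ∈ vanishingForms fun i => eval v (y i)) :
    normalizationMap I y (linearForm w) ∈
      Ideal.span (Set.range fun j => Ideal.Quotient.mk I (linearForm (ξ j))) := by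
  have haeval : aeval y (linearForm w) = linearForm (∑ i, w i • gradient v (y i)) := by
    simp [linearForm_apply w, linearForm_gradient_of_isHomogeneous (hy _)]
  have hmem : ∑ i, w i • gradient v (y i) ∈ vanishingForms v := by
    rw [mem_vanishingForms, ← eval_linearForm, ← haeval]
    simpa [linearForm_apply, smul_eval, dotProduct] using mem_vanishingForms.1 hw
  have := Ideal.mem_map_of_mem (Ideal.Quotient.mk I) (linearForm_mem_span_range (hξ hmem))
  rwa [Ideal.map_span, ← Set.range_comp, ← haeval] at this

variable [Fintype ι] [I.IsPrime]

theorem IsLinearNormalization.exists_ne_zero_forall_comap_aeval_le [Infinite K]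
    (h : IsLinearNormalization I y) (hτ : 2 < Fintype.card τ) (hv : I ≤ RingHom.ker (eval v))
    (hξ : Submodule.span K (Set.range ξ) = vanishingForms v) :
    ∃ g : MvPolynomial ι K, g ≠ 0 ∧ ∀ a, eval a g ≠ 0 →
      ∀ p ∈ (I ⊔ Ideal.span {linearForm (∑ j, a j • ξ j)}).minimalPrimes,
        p.comap (aeval y : _ →ₐ[K] MvPolynomial σ K).toRingHom ≤
          RingHom.ker (eval fun i => eval v (y i)) := by
  let _ : Algebra (MvPolynomial τ K) (MvPolynomial σ K ⧸ I) :=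
    (normalizationMap I y).toRingHom.toAlgebra
  have : FaithfulSMul (MvPolynomial τ K) (MvPolynomial σ K ⧸ I) :=
    (faithfulSMul_iff_algebraMap_injective _ _).2 h.injective
  have : Algebra.IsIntegral (MvPolynomial τ K) (MvPolynomial σ K ⧸ I) := ⟨h.isIntegral⟩
  obtain ⟨g, hg, hgs⟩ := exists_ne_zero_forall_comap_le_ker_eval hτ
    (ξ := fun j => Ideal.Quotient.mk I (linearForm (ξ j)))
    (fun w hw => normalizationMap_linearForm_mem_span h.isHomogeneous hξ.ge hw)
    (evalQuotient_comp_normalizationMap hv y)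
    (fun j => by rw [evalQuotient_mk, eval_linearForm, ← mem_vanishingForms, ← hξ]
                 exact Submodule.subset_span ⟨j, rfl⟩)
  refine ⟨g, hg, fun a ha p hp => ?_⟩
  have hspan : I ⊔ Ideal.span {linearForm (∑ j, a j • ξ j)} =
      (Ideal.span {∑ j, algebraMap (MvPolynomial τ K) (MvPolynomial σ K ⧸ I) (C (a j)) *
        Ideal.Quotient.mk I (linearForm (ξ j))}).comap (Ideal.Quotient.mk I) := by
    rw [← Ideal.comap_map_quotientMk, Ideal.map_span, Set.image_singleton]
    congr 3
    rw [map_sum, map_sum]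
    refine Finset.sum_congr rfl fun j _ => ?_
    rw [map_smul, smul_eq_C_mul, map_mul]
    congr 1
    exact ((normalizationMap I y).commutes (a j)).symm
  rw [hspan, Ideal.comap_minimalPrimes_eq_of_surjective Ideal.Quotient.mk_surjective] at hp
  obtain ⟨q, hq, rfl⟩ := hp
  exact hgs a ha q hq

theorem IsLinearNormalization.exists_ne_zero_forall_minimalPrimes_le [IsAlgClosed K]
    (h : IsLinearNormalization I y) (hI : IsHomogeneousIdeal I) (hτ : 2 < Fintype.card τ)
    (hv₀ : v ≠ 0) (hv : I ≤ RingHom.ker (eval v))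
    (hξ : Submodule.span K (Set.range ξ) = vanishingForms v) :
    ∃ g : MvPolynomial ι K, g ≠ 0 ∧ ∀ a, eval a g ≠ 0 →
      ∀ p ∈ (I ⊔ Ideal.span {linearForm (∑ j, a j • ξ j)}).minimalPrimes,
        p ≤ RingHom.ker (eval v) := by
  have : Infinite K := IsAlgClosed.instInfinite
  obtain ⟨g₁, hg₁, hcomap⟩ := h.exists_ne_zero_forall_comap_aeval_le hτ hv hξ
  obtain ⟨g₂, hg₂, hfibre⟩ := exists_ne_zero_forall_eq_zero_of_dotProduct_eq_zero
    ((h.finite_fibre fun i => eval v (y i)).image fun x j => ξ j ⬝ᵥ x)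
  refine ⟨g₁ * g₂, mul_ne_zero hg₁ hg₂, fun a ha p hp => ?_⟩
  rw [map_mul] at ha
  have hIp : I ≤ p := le_sup_left.trans hp.1.2
  obtain ⟨x, hpx, hxy⟩ := h.exists_point_over hIp (hcomap a (left_ne_zero_of_mul ha) p hp)
  have hax : a ⬝ᵥ (fun j => ξ j ⬝ᵥ x) = 0 := by
    have := hpx (hp.1.2 (Ideal.mem_sup_right (Ideal.mem_span_singleton_self _)))
    rwa [RingHom.mem_ker, eval_linearForm, sum_dotProduct,
      Finset.sum_congr rfl fun j _ => smul_dotProduct (a j) (ξ j) x] at this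
  have hξx : (fun j => ξ j ⬝ᵥ x) = 0 :=
    hfibre a (right_ne_zero_of_mul ha) _ ⟨x, ⟨hIp.trans hpx, hxy⟩, rfl⟩ hax
  obtain ⟨c, rfl⟩ := exists_eq_smul_of_forall_dotProduct_eq_zero hv₀ hξ (congrFun hξx)
  have hc : c ≠ 0 := by
    rintro rfl
    refine h.eval_ne_zero hI hv₀ hv (funext fun i => ?_)
    rw [← hxy i, eval_smul_of_isHomogeneous (h.isHomogeneous i)]
    simp
  have hhom := isHomogeneousIdeal_of_mem_minimalPrimes
    (isHomogeneousIdeal_sup_span_singleton hI (isHomogeneous_linearForm _)) hp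
  have := le_ker_eval_smul hhom hpx c⁻¹
  rwa [smul_smul, inv_mul_cancel₀ hc, one_smul] at this

end LinearSections

section SmoothCones

/-- `Q` is the ideal of an affine cone of dimension `D` which is integral, and smooth away from the
vertex by the Jacobian criterion; the dimension is recorded through a linear normalization. -/
structure IsSmoothCone {K σ : Type*} [Field K] [Fintype σ] (Q : Ideal (MvPolynomial σ K))
    (D : ℕ) : Prop where
  isPrime : Q.IsPrime
  isHomogeneousIdeal : IsHomogeneousIdeal Q
  exists_normalization : ∃ y : Fin D → MvPolynomial σ K, IsLinearNormalization Q y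
  finrank_gradSpan_add : ∀ v ≠ 0, Q ≤ RingHom.ker (eval v) →
    Module.finrank K (gradSpan Q v) + D = Fintype.card σ

theorem radical_eq_of_isLeast {R : Type*} [CommRing R] {J M P : Ideal R}
    (hP : IsLeast {q : Ideal R | q.IsPrime ∧ J ≤ q ∧ q ≤ M} P)
    (hM : ∀ p ∈ J.minimalPrimes, p ≤ M) : J.radical = P := by
  refine le_antisymm (hP.1.1.radical_le_iff.2 hP.1.2.1) ?_
  rw [← Ideal.sInf_minimalPrimes]
  exact le_sInf fun p hp => hP.2 ⟨hp.1.1, hp.1.2, hM p hp⟩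

theorem finrank_gradSpan_lt_sup_span_linearForm {K σ : Type*} [Field K] [Fintype σ]
    {I : Ideal (MvPolynomial σ K)} {x w : σ → K} (hw : w ∉ gradSpan I x) :
    Module.finrank K (gradSpan I x) <
      Module.finrank K (gradSpan (I ⊔ Ideal.span {linearForm w}) x) := by
  have hmem := gradient_mem_gradSpan (Q := I ⊔ Ideal.span {linearForm w})
    (Ideal.mem_sup_right (Ideal.mem_span_singleton_self (linearForm w))) x
  rw [gradient_linearForm] at hmem
  exact Submodule.finrank_lt_finrank_of_lt
    (SetLike.lt_iff_le_and_exists.2 ⟨gradSpan_mono le_sup_left x, w, hmem, hw⟩)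

theorem isSmoothCone_of_card_le {K : Type*} [Field K] [CharZero K] {m : ℕ}
    {P : Ideal (MvPolynomial (Fin m) K)} [P.IsPrime] (hP : IsHomogeneousIdeal P) {d : ℕ}
    (hd : (d : WithBot ℕ∞) ≤ ringKrullDim (MvPolynomial (Fin m) K ⧸ P)) {v : Fin m → K}
    (hv₀ : v ≠ 0) (hv : P ≤ RingHom.ker (eval v))
    (hrank : ∀ x ≠ 0, P ≤ RingHom.ker (eval x) → m ≤ Module.finrank K (gradSpan P x) + d) :
    IsSmoothCone P d := by
  have : Infinite K := CharZero.infinite K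
  obtain ⟨D, y, hy⟩ := exists_isLinearNormalization hP Ideal.IsPrime.ne_top'
  have hupper (x : Fin m → K) (hx : P ≤ RingHom.ker (eval x)) :
      Module.finrank K (gradSpan P x) + D ≤ m := by
    simpa only [Fintype.card_fin] using hy.finrank_gradSpan_add_card_le hx
  obtain rfl : D = d := by
    have hdD : d ≤ D := by exact_mod_cast hd.trans hy.ringKrullDim_quotient_le
    have := hrank v hv₀ hv
    have := hupper v hv
    lia
  exact ⟨‹_›, hP, ⟨y, hy⟩, fun x hx₀ hx => by
    rw [Fintype.card_fin]
    exact (hupper x hx).antisymm (hrank x hx₀ hx)⟩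

theorem IsSmoothCone.radical_sup_span_linearForm {K : Type*} [Field K] [CharZero K] {m : ℕ}
    {I : Ideal (MvPolynomial (Fin m) K)} {d : ℕ} (hI : IsSmoothCone I (d + 1)) {v w : Fin m → K}
    (hv₀ : v ≠ 0) (hv : I ≤ RingHom.ker (eval v)) (hwv : w ⬝ᵥ v = 0)
    (htrans : ∀ x ≠ 0, I ≤ RingHom.ker (eval x) → w ∉ gradSpan I x)
    (hcomp : ∀ p ∈ (I ⊔ Ideal.span {linearForm w}).minimalPrimes, p ≤ RingHom.ker (eval v)) :
    IsSmoothCone (I ⊔ Ideal.span {linearForm w}).radical d := by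
  have := hI.isPrime
  obtain ⟨y, hy⟩ := hI.exists_normalization
  have hrank (x : Fin m → K) (hx₀ : x ≠ 0) (hx : I ≤ RingHom.ker (eval x)) : m ≤
      Module.finrank K (gradSpan (I ⊔ Ideal.span {linearForm w}) x) + d := by
    have := hI.finrank_gradSpan_add x hx₀ hx
    rw [Fintype.card_fin] at this
    have := finrank_gradSpan_lt_sup_span_linearForm (htrans x hx₀ hx)
    lia
  obtain ⟨P, hP, hdim⟩ := hy.exists_isLeast_prime hv
    ((eval_linearForm w v).trans hwv) (by rw [Fintype.card_fin]; exact hrank v hv₀ hv)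
  have hhom := isHomogeneousIdeal_sup_span_singleton hI.isHomogeneousIdeal
    (isHomogeneous_linearForm w)
  have hrad := radical_eq_of_isLeast hP hcomp
  obtain ⟨hPprime, hle, hPv⟩ := hP.1
  have hPhom : IsHomogeneousIdeal P := hrad ▸ isHomogeneousIdeal_radical hhom
  rw [hrad]
  exact isSmoothCone_of_card_le hPhom hdim hv₀ hPv fun x hx₀ hx =>
    (hrank x hx₀ (le_sup_left.trans (hle.trans hx))).trans
      (Nat.add_le_add_right (Submodule.finrank_mono (gradSpan_mono hle x)) d)

end SmoothCones

section GeneralSections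

variable {K ι : Type} [Field K] [CharZero K] [Fintype ι] {m : ℕ}
  {I : Ideal (MvPolynomial (Fin m) K)} {v : Fin m → K} {ξ : ι → Fin m → K}

theorem IsSmoothCone.exists_ne_zero_forall_notMem_gradSpan {D : ℕ} (hI : IsSmoothCone I D)
    (hD : 2 ≤ D) (hv₀ : v ≠ 0) (hv : I ≤ RingHom.ker (eval v))
    (hξ : Submodule.span K (Set.range ξ) = vanishingForms v) :
    ∃ g : MvPolynomial ι K, g ≠ 0 ∧ ∀ a, eval a g ≠ 0 → ∀ x ≠ 0, I ≤ RingHom.ker (eval x) →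
      ∑ j, a j • ξ j ∉ gradSpan I x := by
  have hnle : ¬ Submodule.span K (Set.range ξ) ≤ gradSpan I v := fun hle => by
    have := Submodule.finrank_mono (hξ ▸ hle)
    have := card_le_finrank_vanishingForms_add_one v
    have := hI.finrank_gradSpan_add v hv₀ hv
    lia
  obtain ⟨w, hw, hwv⟩ := SetLike.not_le_iff_exists.1 hnle
  obtain ⟨a₀, rfl⟩ := (Submodule.mem_span_range_iff_exists_fun K).1 hw
  obtain ⟨g₀, hg₀, hbase⟩ := exists_ne_zero_forall_sum_smul_notMem hwv
  choose g hg hgen using exists_ne_zero_forall_tangent_mem_baseLocus hI.isHomogeneousIdeal ξ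
  refine ⟨g₀ * ∏ i, g i, mul_ne_zero hg₀ (Finset.prod_ne_zero_iff.2 fun i _ => hg i),
    fun a ha x hx₀ hx hax => ?_⟩
  rw [map_mul, map_prod] at ha
  have hξx (i : ι) : ξ i ⬝ᵥ x = 0 :=
    hgen i a (Finset.prod_ne_zero_iff.1 (right_ne_zero_of_mul ha) i (Finset.mem_univ i)) x hx hax
  obtain ⟨c, rfl⟩ := exists_eq_smul_of_forall_dotProduct_eq_zero hv₀ hξ hξx
  exact hbase a (left_ne_zero_of_mul ha) (gradSpan_smul_le hI.isHomogeneousIdeal c v hax)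

theorem IsSmoothCone.exists_ne_zero_forall_isSmoothCone [IsAlgClosed K] {d : ℕ}
    (hI : IsSmoothCone I (d + 1)) (hd : 2 ≤ d) (hv₀ : v ≠ 0) (hv : I ≤ RingHom.ker (eval v))
    (hξ : Submodule.span K (Set.range ξ) = vanishingForms v) :
    ∃ g : MvPolynomial ι K, g ≠ 0 ∧ ∀ a, eval a g ≠ 0 →
      IsSmoothCone (I ⊔ Ideal.span {linearForm (∑ j, a j • ξ j)}).radical d := by
  have := hI.isPrime
  have : Infinite K := IsAlgClosed.instInfinite
  obtain ⟨y, hy⟩ := hI.exists_normalization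
  obtain ⟨g₁, hg₁, htrans⟩ := hI.exists_ne_zero_forall_notMem_gradSpan (by lia) hv₀ hv hξ
  obtain ⟨g₂, hg₂, hcomp⟩ := hy.exists_ne_zero_forall_minimalPrimes_le hI.isHomogeneousIdeal
    (by rw [Fintype.card_fin]; lia) hv₀ hv hξ
  refine ⟨g₁ * g₂, mul_ne_zero hg₁ hg₂, fun a ha => ?_⟩
  rw [map_mul] at ha
  have hmem : ∑ j, a j • ξ j ∈ vanishingForms v :=
    hξ ▸ (Submodule.mem_span_range_iff_exists_fun K).2 ⟨a, rfl⟩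
  exact hI.radical_sup_span_linearForm hv₀ hv (mem_vanishingForms.1 hmem)
    (htrans a (left_ne_zero_of_mul ha)) (hcomp a (right_ne_zero_of_mul ha))

end GeneralSections

section ConeOfParameters

variable {W : Type} [AddCommGroup W] [Module k W]

theorem exists_isZClosed_isCone [Infinite k] {r : ℕ} [NeZero r] {L : (Fin r → k) →ₗ[k] W}
    (hL : Function.Injective L) {g : MvPolynomial (Fin r) k} (hg : g ≠ 0) :
    ∃ Z : Set W, IsZClosed k Z ∧ IsCone k Z ∧ (∃ a, L a ≠ 0 ∧ L a ∉ Z) ∧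
      ∀ a, L a ∉ Z → ∃ c ≠ (0 : k), eval (c • a) g ≠ 0 := by
  obtain ⟨φ, hφ⟩ := L.exists_leftInverse_of_injective (LinearMap.ker_eq_bot.2 hL)
  have hφL (a : Fin r → k) : φ (L a) = a := LinearMap.congr_fun hφ a
  -- The factor `X 0` puts `0` into the cone, so that points outside it yield nonzero scalars.
  let p : MvPolynomial (Fin r) k := g * X 0
  have hzero : eval 0 p = 0 := by simp [p]
  refine ⟨{w | ∀ c : k, eval (c • φ w) p = 0}, ?_, ?_, ?_, fun a ha => ?_⟩
  · refine ⟨Set.range fun (c : k) w => eval (c • φ w) p, ?_, by simp⟩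
    rintro _ ⟨c, rfl⟩
    exact ⟨r, fun i => c • LinearMap.proj i ∘ₗ φ, p, rfl⟩
  · intro c w hw c'
    rw [map_smul, smul_smul]
    exact hw (c' * c)
  · obtain ⟨a, ha⟩ : ∃ a, eval a p ≠ 0 := by
      by_contra! h
      exact mul_ne_zero hg (X_ne_zero 0) (funext fun a => by rw [h a, map_zero])
    refine ⟨a, fun h0 => ha ?_, fun h => ha (by simpa [hφL] using h 1)⟩
    rw [← hφL a, h0, map_zero, hzero]
  · simp only [Set.mem_ofPred_eq, hφL, not_forall] at ha
    obtain ⟨c, hc⟩ := ha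
    refine ⟨c, ?_, fun h => hc (by rw [map_mul, h, zero_mul])⟩
    rintro rfl
    exact hc (by rw [zero_smul, hzero])

end ConeOfParameters

section SmoothVarieties

theorem le_ker_eval_iff_mk_mem [Infinite k] {S : Set (ProjPt k n)} (hS : IsClosedSub S)
    {v : Fin (n + 1) → k} (hv : v ≠ 0) :
    coneIdeal S ≤ RingHom.ker (eval v) ↔ Projectivization.mk k v hv ∈ S := by
  rw [← mk_mem_projZeroLocus_iff (isHomogeneousIdeal_coneIdeal S) v hv, projZeroLocus_coneIdeal hS]

theorem isSmoothCone_coneIdeal [IsAlgClosed k] [CharZero k] {S : Set (ProjPt k n)} {d : ℕ}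
    (hS : IsSmoothVariety S d) : IsSmoothCone (coneIdeal S) (d + 1) := by
  have : Infinite k := IsAlgClosed.instInfinite
  obtain ⟨hclosed, hirred, hdim, hsmooth⟩ := hS
  have hprime := isPrime_coneIdeal hirred
  have hhom := isHomogeneousIdeal_coneIdeal S
  obtain ⟨D, y, hy⟩ := exists_isLinearNormalization hhom hprime.ne_top
  obtain rfl := hy.eq_add_one_of_hasDim hhom (by rwa [projZeroLocus_coneIdeal hclosed])
  refine ⟨hprime, hhom, ⟨y, hy⟩, fun v hv₀ hv => ?_⟩
  have hle := hy.finrank_gradSpan_add_card_le hv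
  have hrank := hsmooth _ ((le_ker_eval_iff_mk_mem hclosed hv₀).1 hv) v hv₀ rfl
  rw [span_gradientAt_homVanishingPolys] at hrank
  simp only [Fintype.card_fin] at hle ⊢
  lia

theorem IsSmoothCone.exists_X_notMem {K σ : Type*} [Field K] [Fintype σ]
    {Q : Ideal (MvPolynomial σ K)} {e : ℕ} (hQ : IsSmoothCone Q (e + 1)) : ∃ i, X i ∉ Q := by
  obtain ⟨y, hy⟩ := hQ.exists_normalization
  refine exists_X_notMem_of_isHomogeneous_notMem (hy.isHomogeneous 0) one_ne_zero fun hmem => ?_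
  refine X_ne_zero (R := K) (0 : Fin (e + 1)) (hy.injective ?_)
  rw [map_zero, normalizationMap_X]
  exact Ideal.Quotient.eq_zero_iff_mem.2 hmem

theorem IsSmoothCone.isSmoothVariety_projZeroLocus [IsAlgClosed k] {e : ℕ}
    {Q : Ideal (MvPolynomial (Fin (n + 1)) k)} (hQ : IsSmoothCone Q (e + 1)) :
    IsSmoothVariety (projZeroLocus (Q : Set (MvPolynomial (Fin (n + 1)) k))) e := by
  have := hQ.isPrime
  have : Infinite k := IsAlgClosed.instInfinite
  have hhom := hQ.isHomogeneousIdeal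
  obtain ⟨y, hy⟩ := hQ.exists_normalization
  refine ⟨isClosedSub_projZeroLocus hhom, isIrredSub_projZeroLocus hhom hQ.exists_X_notMem,
    hy.hasDim hhom, ?_⟩
  rintro x hx v hv rfl
  have := hQ.finrank_gradSpan_add v hv ((mk_mem_projZeroLocus_iff hhom v hv).1 hx)
  rw [span_gradientAt_homVanishingPolys, coneIdeal_projZeroLocus hhom hQ.exists_X_notMem]
  rw [Fintype.card_fin] at this
  lia

end SmoothVarieties

section HyperplaneSections

theorem projZeroLocus_singleton_smul {c : k} (hc : c ≠ 0) (h : MvPolynomial (Fin (n + 1)) k) :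
    projZeroLocus {c • h} = projZeroLocus {h} := by
  ext x
  simp only [projZeroLocus, VanishesAt, Set.mem_singleton_iff, forall_eq, Set.mem_ofPred_eq,
    smul_eval, mul_eq_zero, hc, false_or]

theorem inter_projZeroLocus_singleton [Infinite k] {S : Set (ProjPt k n)} (hS : IsClosedSub S)
    {h : MvPolynomial (Fin (n + 1)) k} {N : ℕ} (hh : h.IsHomogeneous N) :
    S ∩ projZeroLocus {h} = projZeroLocus
      ((coneIdeal S ⊔ Ideal.span {h}).radical : Set (MvPolynomial (Fin (n + 1)) k)) := by
  ext x
  induction x using Projectivization.ind with | h v hv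
  have := RingHom.ker_isPrime (eval v)
  rw [mk_mem_projZeroLocus_iff (isHomogeneousIdeal_radical
    (isHomogeneousIdeal_sup_span_singleton (isHomogeneousIdeal_coneIdeal S) hh)) v hv,
    Ideal.IsPrime.radical_le_iff ‹_›, sup_le_iff, le_ker_eval_iff_mk_mem hS hv,
    Ideal.span_singleton_le_iff_mem, RingHom.mem_ker, ← vanishesAt_mk_iff hh v hv]
  simp only [Set.mem_inter_iff, projZeroLocus, Set.mem_ofPred_eq, Set.mem_singleton_iff, forall_eq]

theorem vanishesAt_linearForm_sum_smul {ι : Type*} [Fintype ι] {v : Fin (n + 1) → k}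
    {ξ : ι → Fin (n + 1) → k} (hξ : Submodule.span k (Set.range ξ) = vanishingForms v)
    (a : ι → k) (hv : v ≠ 0) :
    VanishesAt (linearForm (∑ j, a j • ξ j)) (Projectivization.mk k v hv) := by
  rw [vanishesAt_mk_iff (isHomogeneous_linearForm _), eval_linearForm, ← mem_vanishingForms, ← hξ]
  exact (Submodule.mem_span_range_iff_exists_fun k).2 ⟨a, rfl⟩

theorem exists_linearIndependent_span_range_eq {K M : Type*} [Field K] [AddCommGroup M]
    [Module K M] (V : Submodule K M) [FiniteDimensional K V] :
    ∃ ξ : Fin (Module.finrank K V) → M,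
      LinearIndependent K ξ ∧ Submodule.span K (Set.range ξ) = V := by
  let b := Module.finBasis K V
  refine ⟨V.subtype ∘ b, b.linearIndependent.map' _ V.ker_subtype, ?_⟩
  rw [Set.range_comp, Submodule.span_image, b.span_eq, Submodule.map_top, V.range_subtype]

theorem exists_ne_zero_forall_isSmoothVariety_inter [IsAlgClosed k] [CharZero k] {ι : Type}
    [Fintype ι] {S : Set (ProjPt k n)} {e : ℕ} (hS : IsSmoothVariety S (e + 1)) (he : 1 ≤ e)
    {v : Fin (n + 1) → k} (hv : v ≠ 0) (hvS : Projectivization.mk k v hv ∈ S)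
    {ξ : ι → Fin (n + 1) → k} (hξ : Submodule.span k (Set.range ξ) = vanishingForms v) :
    ∃ g : MvPolynomial ι k, g ≠ 0 ∧ ∀ a, eval a g ≠ 0 →
      IsSmoothVariety (S ∩ projZeroLocus {linearForm (∑ j, a j • ξ j)}) e := by
  have : Infinite k := IsAlgClosed.instInfinite
  obtain ⟨g, hg, hsmooth⟩ := (isSmoothCone_coneIdeal hS).exists_ne_zero_forall_isSmoothCone
    (by lia) hv ((le_ker_eval_iff_mk_mem hS.1 hv).2 hvS) hξ
  refine ⟨g, hg, fun a ha => ?_⟩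
  rw [inter_projZeroLocus_singleton hS.1 (isHomogeneous_linearForm _)]
  exact (hsmooth a ha).isSmoothVariety_projZeroLocus

theorem finrank_vanishingForms_ne_zero [IsAlgClosed k] [CharZero k] {S : Set (ProjPt k n)} {d : ℕ}
    (hS : IsSmoothVariety S d) (hd : d ≠ 0) {v : Fin (n + 1) → k} (hv : v ≠ 0)
    (hvS : Projectivization.mk k v hv ∈ S) : Module.finrank k (vanishingForms v) ≠ 0 := by
  have : Infinite k := IsAlgClosed.instInfinite
  have := (isSmoothCone_coneIdeal hS).finrank_gradSpan_add v hv
    ((le_ker_eval_iff_mk_mem hS.1 hv).2 hvS)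
  have := card_le_finrank_vanishingForms_add_one v
  lia

end HyperplaneSections

end Bertini

/-- **Bertini theorem for hyperplanes through a point of `X`.**
Let `X` be an irreducible smooth projective variety of dimension `d ≥ 2` in `ℙⁿ` over an
algebraically closed field of characteristic zero and let `P0` be a closed point on `X`.
Then a general hyperplane passing through `P0` (i.e. a general member of the linear system of
degree-one forms vanishing at `P0`) intersects `X` in an irreducible smooth subvariety of
codimension `1` on `X`. -/
theorem general_hyperplane_through_point_on_X_smooth_irreducible
    {k : Type} [Field k] [IsAlgClosed k] [CharZero k] {n : ℕ}
    (X : Set (ProjPt k n)) (d : ℕ) (hd : 2 ≤ d) (hX : IsSmoothVariety X d)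
    (P0 : ProjPt k n) (hP0 : P0 ∈ X) :
    ∃ Z : Set (MvPolynomial (Fin (n+1)) k), IsZClosed k Z ∧ IsCone k Z ∧
      (∃ h : MvPolynomial (Fin (n+1)) k,
        h.IsHomogeneous 1 ∧ h ≠ 0 ∧ VanishesAt h P0 ∧ h ∉ Z) ∧
      (∀ h : MvPolynomial (Fin (n+1)) k,
        h.IsHomogeneous 1 → h ≠ 0 → VanishesAt h P0 → h ∉ Z →
          IsSmoothVariety (X ∩ projZeroLocus {h}) (d - 1)) := by
  obtain ⟨e, rfl⟩ : ∃ e, d = e + 1 := ⟨d - 1, by lia⟩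
  induction P0 using Projectivization.ind with | h v hv
  obtain ⟨ξ, hind, hspan⟩ :=
    Bertini.exists_linearIndependent_span_range_eq (Bertini.vanishingForms v)
  have : NeZero (Module.finrank k (Bertini.vanishingForms v)) :=
    ⟨Bertini.finrank_vanishingForms_ne_zero hX e.succ_ne_zero hv hP0⟩
  obtain ⟨g, hg, hsmooth⟩ :=
    Bertini.exists_ne_zero_forall_isSmoothVariety_inter hX (by lia) hv hP0 hspan
  let L := Bertini.linearForm ∘ₗ Fintype.linearCombination k ξ
  have hL : Function.Injective L :=
    Bertini.linearForm_injective.comp hind.fintypeLinearCombination_injective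
  have : Infinite k := IsAlgClosed.instInfinite
  obtain ⟨Z, hclosed, hcone, ⟨a, ha₀, haZ⟩, hgood⟩ := Bertini.exists_isZClosed_isCone hL hg
  refine ⟨Z, hclosed, hcone, ⟨L a, Bertini.isHomogeneous_linearForm _, ha₀,
    Bertini.vanishesAt_linearForm_sum_smul hspan a hv, haZ⟩, fun h hh _ hP hhZ => ?_⟩
  obtain ⟨b, rfl⟩ := Bertini.exists_linearForm_sum_smul_eq hspan hh (hP v hv rfl)
  obtain ⟨c, hc, hcb⟩ := hgood b hhZ
  have hsection : projZeroLocus {L (c • b)} = projZeroLocus {L b} := by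
    rw [map_smul, Bertini.projZeroLocus_singleton_smul hc]
  exact hsection ▸ hsmooth (c • b) hcb
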